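/- Let n ≥ 3 and let M be a compact connected oriented n-manifold whose boundary is a disjoint union of (n−1)-tori N_1,…,N_m. For each i, equip N_i with a flat structure, choose a totally geodesic k_i-dimensional subtorus T_i ⊆ N_i with 1 ≤ k_i ≤ n−2, and let R = M(T_1,…,T_m) be the generalized Dehn filling obtained from M by collapsing each N_i onto the leaf space L_i of the foliation of N_i by parallel copies of T_i. Then R is a pseudomanifold with a fundamental class, and ‖R‖ ≤ ‖M,∂M‖. -/

import Mathlib

noncomputable section

namespace BddCoh

/-! ### Singular chains and homology -/

/-- The standard `n`-simplex. -/
abbrev Δ (n : ℕ) : Set (Fin (n + 1) → ℝ) := stdSimplex ℝ (Fin (n + 1))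

/-- Singular `n`-simplices in `X`. -/
abbrev SSimplex (X : Type) [TopologicalSpace X] (n : ℕ) := C(Δ n, X)

/-- Singular `n`-chains in `X` with coefficients in `R`. -/
def SChain (R : Type) [Ring R] (X : Type) [TopologicalSpace X] (n : ℕ) : Type :=
  SSimplex X n →₀ R

instance (R : Type) [Ring R] (X : Type) [TopologicalSpace X] (n : ℕ) :
    AddCommGroup (SChain R X n) := Finsupp.instAddCommGroup

instance (R : Type) [Ring R] (X : Type) [TopologicalSpace X] (n : ℕ) :
    Module R (SChain R X n) := Finsupp.module (SSimplex X n) R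

/-- Chains are finitely supported functions on simplices. -/
def chainEquiv (R : Type) [Ring R] (X : Type) [TopologicalSpace X] (n : ℕ) :
    (SSimplex X n →₀ R) ≃ₗ[R] SChain R X n := LinearEquiv.refl R (SChain R X n)

/-- The `i`-th face inclusion of standard simplices. -/
def face {n : ℕ} (i : Fin (n + 2)) : C(Δ n, Δ (n + 1)) where
  toFun x := ⟨i.insertNth 0 x.1, by
    refine ⟨fun j => ?_, ?_⟩
    · refine Fin.succAboveCases i ?_ (fun j => ?_) j
      · simp
      · simp [x.2.1 j]
    · rw [Fin.sum_univ_succAbove _ i]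
      simp [x.2.2]⟩
  continuous_toFun := by
    refine Continuous.subtype_mk ?_ _
    exact Continuous.finInsertNth i continuous_const continuous_subtype_val

variable {X : Type} [TopologicalSpace X] {R : Type} [Ring R]

/-- The `i`-th face of a singular `(n+1)`-simplex. -/
def faceOf {n : ℕ} (σ : SSimplex X (n + 1)) (i : Fin (n + 2)) : SSimplex X n :=
  σ.comp (face i)

/-- The boundary of a singular `(n+1)`-simplex, as a chain. -/
def bdryChain (R : Type) [Ring R] {n : ℕ} (σ : SSimplex X (n + 1)) : SChain R X n :=
  chainEquiv R X n (∑ i : Fin (n + 2), Finsupp.single (faceOf σ i) ((-1 : R) ^ (i : ℕ)))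

/-- The singular boundary operator. -/
def bdry (R : Type) [Ring R] (X : Type) [TopologicalSpace X] (n : ℕ) :
    SChain R X (n + 1) →ₗ[R] SChain R X n :=
  (Finsupp.linearCombination R (bdryChain R)).comp (chainEquiv R X (n + 1)).symm.toLinearMap

/-- The ℓ¹-norm of a real singular chain. -/
def l1 {n : ℕ} (c : SChain ℝ X n) : ℝ :=
  ((chainEquiv ℝ X n).symm c).sum fun _ r => |r|

/-- The submodule of chains supported on simplices with image contained in `Y`. -/
def chainsIn (R : Type) [Ring R] (X : Type) [TopologicalSpace X] (Y : Set X) (n : ℕ) :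
    Submodule R (SChain R X n) :=
  (Finsupp.supported R R {σ : SSimplex X n | Set.range σ ⊆ Y}).map (chainEquiv R X n).toLinearMap

/-- Relative `(n+1)`-cycles of the pair `(X, Y)`. -/
def relCycles (R : Type) [Ring R] (X : Type) [TopologicalSpace X] (Y : Set X) (n : ℕ) :
    Submodule R (SChain R X (n + 1)) :=
  (chainsIn R X Y n).comap (bdry R X n)

/-- Relative `(n+1)`-boundaries of the pair `(X, Y)`. -/
def relBdries (R : Type) [Ring R] (X : Type) [TopologicalSpace X] (Y : Set X) (n : ℕ) :
    Submodule R (SChain R X (n + 1)) :=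
  LinearMap.range (bdry R X (n + 1)) ⊔ chainsIn R X Y (n + 1)

/-- Relative singular homology `H_{n+1}(X, Y; R)`. -/
def relHomology (R : Type) [Ring R] (X : Type) [TopologicalSpace X] (Y : Set X) (n : ℕ) :=
  relCycles R X Y n ⧸ ((relBdries R X Y n).comap (relCycles R X Y n).subtype)

instance (Y : Set X) (n : ℕ) : AddCommGroup (relHomology R X Y n) :=
  Submodule.Quotient.addCommGroup _

instance (Y : Set X) (n : ℕ) : Module R (relHomology R X Y n) :=
  Submodule.Quotient.module _

/-- The class of a relative cycle in relative homology. -/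
def relHomClass {Y : Set X} {n : ℕ} (c : relCycles R X Y n) : relHomology R X Y n :=
  Submodule.Quotient.mk c

/-- The ℓ¹-seminorm on relative singular homology. -/
def l1HomNorm {Y : Set X} {n : ℕ} (α : relHomology ℝ X Y n) : ℝ :=
  sInf {r : ℝ | ∃ c : relCycles ℝ X Y n, relHomClass c = α ∧ r = l1 c.1}


/-! ### Amenability and countable CW pairs -/

/-- A group is amenable if it admits a left-invariant finitely additive
probability measure defined on all subsets. -/
def IsAmenable (G : Type*) [Group G] : Prop :=
  ∃ m : Set G → ℝ, (∀ A, 0 ≤ m A) ∧ m Set.univ = 1 ∧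
    (∀ A B, Disjoint A B → m (A ∪ B) = m A + m B) ∧
    (∀ (g : G) (A : Set G), m ((g * ·) '' A) = m A)

open CategoryTheory in
/-- A type witnessing that `X'` is obtained from `X` by attaching generalized cells `f : S ⟶ D`
(definition of the older Mathlib). -/
structure RelativeCWComplex.AttachGeneralizedCells.{u} {S D : TopCat.{u}} (f : S ⟶ D)
    (X X' : TopCat.{u}) where
  /-- The index type over the generalized cells -/
  cells : Type u
  /-- An attaching map for each generalized cell -/
  attachMaps : cells → (S ⟶ X)
  /-- `X'` is the pushout of `∐ S ⟶ X` and `∐ S ⟶ ∐ D`. -/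
  iso_pushout : X' ≅ Limits.pushout (Limits.Sigma.desc attachMaps)
    (Limits.Sigma.map fun (_ : cells) ↦ f)

/-- A relative CW-complex: an expanding sequence of spaces `sk i` (the `(i-1)`-skeleton), where
`sk 0` is arbitrary and each `sk (n + 1)` is obtained from `sk n` by attaching `n`-disks
(definition of the older Mathlib). -/
structure RelativeCWComplex.{u} where
  /-- The skeletons. -/
  sk : ℕ → TopCat.{u}
  /-- Each `sk (n + 1)` is obtained from `sk n` by attaching `n`-disks. -/
  attachCells (n : ℕ) : RelativeCWComplex.AttachGeneralizedCells
    (TopCat.diskBoundaryInclusion.{u} n) (sk n) (sk (n + 1))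

/-- A CW-complex is a relative CW-complex whose `sk 0` is empty
(definition of the older Mathlib). -/
structure CWComplex.{u} extends RelativeCWComplex.{u} where
  /-- `sk 0` is empty. -/
  isEmpty_sk_zero : IsEmpty (sk 0)

open CategoryTheory in
/-- The inclusion map from `sk n` to `sk (n + 1)` (definition of the older Mathlib). -/
def RelativeCWComplex.skInclusion.{u} (C : RelativeCWComplex.{u}) (n : ℕ) :
    C.sk n ⟶ C.sk (n + 1) :=
  Limits.pushout.inl _ _ ≫ (C.attachCells n).iso_pushout.inv

open CategoryTheory in
/-- The topological space of a relative CW-complex (definition of the older Mathlib). -/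
def RelativeCWComplex.toTopCat.{u} (C : RelativeCWComplex.{u}) : TopCat.{u} :=
  Limits.colimit (Functor.ofSequence C.skInclusion)

open CategoryTheory in
/-- `X` carries the structure of a countable CW-complex. -/
def IsCountableCW (X : Type) [TopologicalSpace X] : Prop :=
  ∃ C : CWComplex.{0}, (∀ n, Countable ((C.attachCells n).cells)) ∧
    Nonempty ((RelativeCWComplex.toTopCat C.toRelativeCWComplex : TopCat) ≅ TopCat.of X)

open CategoryTheory in
/-- `(X, Y)` is a pair of countable CW-complexes, i.e. `X` is a countable CW-complex and
`Y` is a subcomplex of `X` (realized as the `(-1)`-skeleton of a relative CW-structure on `X`),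
which is itself a countable CW-complex. -/
def IsCountableCWPair (X : Type) [TopologicalSpace X] (Y : Set X) : Prop :=
  IsCountableCW X ∧ IsCountableCW Y ∧
  ∃ (C : RelativeCWComplex.{0}) (φ : (RelativeCWComplex.toTopCat C : TopCat) ≅ TopCat.of X),
    (∀ n, Countable ((C.attachCells n).cells)) ∧
    Set.range (fun y => φ.hom ((Limits.colimit.ι (Functor.ofSequence C.skInclusion) 0) y)) = Y

open CategoryTheory in
/-- The fundamental group is the automorphism group of the basepoint in the fundamental groupoid
(definition of the older Mathlib). -/
def FundamentalGroup.{u} (X : Type u) [TopologicalSpace X] (x : X) : Type u :=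
  Aut (FundamentalGroupoid.mk x)

open CategoryTheory in
instance (X : Type*) [TopologicalSpace X] (x : X) : Group (FundamentalGroup X x) :=
  inferInstanceAs (Group (Aut (FundamentalGroupoid.mk x)))

/-- Every connected component of `Y` has amenable fundamental group. -/
def AmenableComponents (Y : Type) [TopologicalSpace Y] : Prop :=
  ∀ y : Y, IsAmenable (FundamentalGroup (connectedComponent y) ⟨y, mem_connectedComponent⟩)


/-- The inclusion of a subspace, as a continuous map. -/
def subIncl {X : Type} [TopologicalSpace X] (Y : Set X) : C(↥Y, X) :=
  ⟨Subtype.val, continuous_subtype_val⟩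

open CategoryTheory in
/-- The map induced by a continuous map on fundamental groups. -/
def pi1Map {X Y : Type} [TopologicalSpace X] [TopologicalSpace Y] (f : C(X, Y)) (x : X) :
    FundamentalGroup X x →* FundamentalGroup Y (f x) :=
  (FundamentalGroupoid.fundamentalGroupoidFunctor.map
    (show TopCat.of X ⟶ TopCat.of Y from TopCat.ofHom f)).mapAut ⟨x⟩

/-! ### Topological manifolds with boundary and fundamental classes -/

/-- The closed upper half space `ℍⁿ = {x : ℝⁿ | x₀ ≥ 0}`. -/
def halfSpace (n : ℕ) : Set (Fin n → ℝ) := {x | ∀ j : Fin n, (j : ℕ) = 0 → 0 ≤ x j}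

/-- `M` is a topological `n`-manifold with boundary `B`: every point has an open
neighbourhood homeomorphic to an open subset of the closed half space `ℍⁿ`, with points of
`B` (and only those) corresponding to points of the boundary hyperplane. -/
def IsTopMfdWithBdry (n : ℕ) (M : Type) [TopologicalSpace M] (B : Set M) : Prop :=
  T2Space M ∧
  ∀ x : M, ∃ (U : Set M) (V : Set ↥(halfSpace n)) (e : ↥U ≃ₜ ↥V),
    IsOpen U ∧ IsOpen V ∧ x ∈ U ∧
    ∀ y : ↥U, ((∀ j : Fin n, (j : ℕ) = 0 → ((e y : ↥(halfSpace n)) : Fin n → ℝ) j = 0) ↔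
      (y : M) ∈ B)

/-- Extension of coefficients from `ℤ` to `ℝ` on singular chains. -/
def intChain {M : Type} [TopologicalSpace M] {m : ℕ} (z : SChain ℤ M m) : SChain ℝ M m :=
  chainEquiv ℝ M m
    (Finsupp.mapRange (Int.cast : ℤ → ℝ) (by simp) ((chainEquiv ℤ M m).symm z))

/-- `μ ∈ H_{n+1}(M, B; ℝ)` is a fundamental class (with regular set `reg`): it is the
image of an integral relative homology class which induces a generator of the local
homology group `H_{n+1}(M, M ∖ {x}; ℤ)` at every point `x ∈ reg`. For a compact connected
oriented `(n+1)`-manifold `M` with boundary `B` one takes `reg = Bᶜ` (the interior), and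
for the pseudomanifolds arising from generalized Dehn fillings one takes `reg` to be the
image of the interior of the filled manifold. -/
def IsFundClassOn (M : Type) [TopologicalSpace M] (B : Set M) (reg : Set M) (n : ℕ)
    (μ : relHomology ℝ M B n) : Prop :=
  ∃ (z : SChain ℤ M (n + 1)) (hz : z ∈ relCycles ℤ M B n),
    (∃ hzr : intChain z ∈ relCycles ℝ M B n, relHomClass ⟨intChain z, hzr⟩ = μ) ∧
    ∀ x ∈ reg,
      ∃ hloc : z ∈ relCycles ℤ M ({x}ᶜ) n,
        ∀ β : relHomology ℤ M ({x}ᶜ) n, ∃ k : ℤ, β = k • relHomClass ⟨z, hloc⟩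

/-- The fundamental class of a compact connected oriented manifold with boundary:
its regular points are all the interior points. -/
def IsFundClass (M : Type) [TopologicalSpace M] (B : Set M) (n : ℕ)
    (μ : relHomology ℝ M B n) : Prop :=
  IsFundClassOn M B Bᶜ n μ

/-! ### Gluings of manifolds along boundary components -/

/-- The data of a gluing of the manifolds-with-boundary `(piece j, bdry j)`, `j < k`,
along (some of) their boundary components: a finite set `E` of gluings, each of which
identifies a boundary component `S₁ e` of the piece `j₁ e` with a boundary component
`S₂ e` of the piece `j₂ e` via a homeomorphism `glue e`; each boundary component is used
at most once. -/
structure GluingData (k : ℕ) where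
  piece : Fin k → Type
  top : ∀ j, TopologicalSpace (piece j)
  bdry : ∀ j, Set (piece j)
  E : Type
  finE : Finite E
  j₁ : E → Fin k
  j₂ : E → Fin k
  S₁ : (e : E) → Set (piece (j₁ e))
  S₂ : (e : E) → Set (piece (j₂ e))
  comp₁ : ∀ e, ∃ y ∈ bdry (j₁ e), S₁ e = connectedComponentIn (bdry (j₁ e)) y
  comp₂ : ∀ e, ∃ y ∈ bdry (j₂ e), S₂ e = connectedComponentIn (bdry (j₂ e)) y
  sub₁ : ∀ e, S₁ e ⊆ bdry (j₁ e)
  sub₂ : ∀ e, S₂ e ⊆ bdry (j₂ e)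
  glue : (e : E) → ↥(S₁ e) ≃ₜ ↥(S₂ e)
  used_inj : Function.Injective (fun x : E ⊕ E =>
    match x with
    | Sum.inl e => (⟨j₁ e, S₁ e⟩ : Σ j : Fin k, Set (piece j))
    | Sum.inr e => ⟨j₂ e, S₂ e⟩)

attribute [instance] GluingData.top

namespace GluingData

variable {k : ℕ} (D : GluingData k)

/-- The identifications performed by the gluing. -/
def rel : (Σ j, D.piece j) → (Σ j, D.piece j) → Prop := fun a b =>
  ∃ (e : D.E) (s : ↥(D.S₁ e)), a = ⟨D.j₁ e, (s : D.piece (D.j₁ e))⟩ ∧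
    b = ⟨D.j₂ e, (D.glue e s : D.piece (D.j₂ e))⟩

/-- The glued space: the quotient of the disjoint union of the pieces by the
identifications given by the gluing homeomorphisms. -/
def Glued : Type := Quot D.rel

instance : TopologicalSpace D.Glued := by unfold Glued; infer_instance

/-- The canonical map from a piece to the glued space. -/
def emb (j : Fin k) : C(D.piece j, D.Glued) :=
  ⟨fun x => Quot.mk D.rel ⟨j, x⟩, by exact continuous_quot_mk.comp continuous_sigmaMk⟩

/-- The union `𝒮` of the glued hypersurfaces inside the glued space. -/
def gluedSet : Set D.Glued := ⋃ e : D.E, (D.emb (D.j₁ e)) '' (D.S₁ e)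

/-- The boundary of the glued space: what remains of the boundaries of the pieces after
removing the glued hypersurfaces. -/
def gluedBdry : Set D.Glued := (⋃ j, (D.emb j) '' (D.bdry j)) \ D.gluedSet

lemma emb_mapsTo_bdry (j : Fin k) :
    Set.MapsTo (D.emb j) (D.bdry j) (D.gluedBdry ∪ D.gluedSet) := by
  intro y hy
  by_cases hx : D.emb j y ∈ D.gluedSet
  · exact Or.inr hx
  · exact Or.inl ⟨Set.mem_iUnion.2 ⟨j, ⟨y, hy, rfl⟩⟩, hx⟩

/-- A gluing is compatible if every gluing homeomorphism `f : S₁ → S₂` satisfies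
`f_*(K₁) = K₂`, where `K_i` is the kernel of the map induced on fundamental groups by the
inclusion `S_i → M_{j_i}`. -/
def Compatible : Prop :=
  ∀ (e : D.E) (s : ↥(D.S₁ e)),
    Subgroup.map (pi1Map ((D.glue e) : C(↥(D.S₁ e), ↥(D.S₂ e))) s)
      (MonoidHom.ker (pi1Map (subIncl (D.S₁ e)) s)) =
    MonoidHom.ker (pi1Map (subIncl (D.S₂ e)) ((D.glue e) s))

end GluingData

/-! ### Generalized Dehn fillings -/

/-- The projection of `ℝ^q` onto the standard flat torus `(ℝ/ℤ)^q`. -/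
def torusProj (q : ℕ) : (Fin q → ℝ) →+ (Fin q → AddCircle (1 : ℝ)) where
  toFun x := fun j => (x j : AddCircle (1 : ℝ))
  map_zero' := by funext j; simp
  map_add' a b := by funext j; simp [Pi.add_apply]

/-- The data of a generalized Dehn filling: a manifold `M` of dimension `n = d + 3` whose
boundary is the disjoint union of the `(n-1)`-tori `N i` (each `N i` carries a flat
structure, transported from the standard torus by the homeomorphism `flat i`), together
with, for each `i`, a rational linear subspace `V i ⊆ ℝ^{n-1}` (the tangent space of a
totally geodesic `k_i`-subtorus `T_i ⊆ N_i` with `1 ≤ k_i ≤ n - 2`); the filling is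
obtained by collapsing each `N i` along the parallel copies of `T_i`, i.e. along the
cosets of the subtorus determined by `V i`. -/
structure DehnData (d m : ℕ) where
  M : Type
  top : TopologicalSpace M
  B : Set M
  N : Fin m → Set M
  iscomp : ∀ i, ∃ y ∈ B, N i = connectedComponentIn B y
  cover : B = ⋃ i, N i
  inj : Function.Injective N
  flat : (i : Fin m) → (↥(N i) ≃ₜ (Fin (d + 2) → AddCircle (1 : ℝ)))
  V : Fin m → Submodule ℝ (Fin (d + 2) → ℝ)
  rat : ∀ i, ∃ s : Set (Fin (d + 2) → ℤ),
    V i = Submodule.span ℝ ((fun z : Fin (d + 2) → ℤ => fun j => ((z j : ℤ) : ℝ)) '' s)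
  dim_pos : ∀ i, 1 ≤ Module.finrank ℝ (V i)
  dim_le : ∀ i, Module.finrank ℝ (V i) ≤ d + 1

attribute [instance] DehnData.top

namespace DehnData

variable {d m : ℕ} (D : DehnData d m)

/-- The subtorus along whose cosets the `i`-th boundary torus is collapsed. -/
def W (i : Fin m) : AddSubgroup (Fin (d + 2) → AddCircle (1 : ℝ)) :=
  AddSubgroup.map (torusProj (d + 2)) (D.V i).toAddSubgroup

/-- The collapsing relation: two points of the `i`-th boundary torus are identified if
they lie on the same leaf of the foliation by parallel copies of the subtorus. -/
def rel : D.M → D.M → Prop := fun a b =>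
  ∃ (i : Fin m) (ha : a ∈ D.N i) (hb : b ∈ D.N i),
    D.flat i ⟨a, ha⟩ - D.flat i ⟨b, hb⟩ ∈ D.W i

/-- The generalized Dehn filling `R = M(T_1, …, T_m)`: the quotient of `M` obtained by
collapsing each boundary torus `N i` onto the leaf space `L i` of its foliation by the
parallel copies of the subtorus `T_i`. -/
def Rfill : Type := Quot D.rel

instance : TopologicalSpace D.Rfill := by unfold Rfill; infer_instance

/-- The collapsing map `M → R`. -/
def q : C(D.M, D.Rfill) := ⟨Quot.mk D.rel, continuous_quot_mk⟩

end DehnData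


end BddCoh

end

noncomputable section
namespace BddCoh

section core
variable {K : Type} [CommRing K] {X Y Z : Type} [TopologicalSpace X] [TopologicalSpace Y]
  [TopologicalSpace Z] {n m k : ℕ}

/-- A simplex as a chain. -/
def sg (K : Type) [CommRing K] (σ : SSimplex X n) : SChain K X n :=
  chainEquiv K X n (Finsupp.single σ 1)

/-- Linear extension. -/
def lin {W : Type} [AddCommGroup W] [Module K W] (φ : SSimplex X n → W) : SChain K X n →ₗ[K] W :=
  (Finsupp.linearCombination K φ).comp (chainEquiv K X n).symm.toLinearMap

@[simp] lemma lin_sg {W : Type} [AddCommGroup W] [Module K W] (φ : SSimplex X n → W)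
    (σ : SSimplex X n) : lin (K := K) φ (sg K σ) = φ σ := by
  simp [lin, sg]

lemma smul_sg (a : K) (σ : SSimplex X n) :
    a • sg K σ = chainEquiv K X n (Finsupp.single σ a) := by
  simp only [sg, ← map_smul, Finsupp.smul_single, smul_eq_mul, mul_one]

lemma chain_ind {p : SChain K X n → Prop} (c : SChain K X n) (h0 : p 0)
    (hadd : ∀ a b, p a → p b → p (a + b)) (hsm : ∀ (a : K) σ, p (a • sg K σ)) : p c := by
  have : ∀ c : SSimplex X n →₀ K, p (chainEquiv K X n c) := by
    intro c
    induction c using Finsupp.induction_linear with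
    | zero => simpa using h0
    | add f g hf hg => rw [map_add]; exact hadd _ _ hf hg
    | single σ a => rw [← smul_sg]; exact hsm a σ
  exact this ((chainEquiv K X n).symm c)

lemma chain_hom_ext {W : Type} [AddCommGroup W] [Module K W] {f g : SChain K X n →ₗ[K] W}
    (h : ∀ σ, f (sg K σ) = g (sg K σ)) : f = g := by
  ext c
  induction c using chain_ind with
  | h0 => simp
  | hadd a b ha hb => simp [ha, hb]
  | hsm a σ => simp [h]

lemma chain_hom_congr {W : Type} [AddCommGroup W] [Module K W] {f g : SChain K X n →ₗ[K] W}
    (h : ∀ σ, f (sg K σ) = g (sg K σ)) (c) : f c = g c := by rw [chain_hom_ext h]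

/-- Push-forward of chains. -/
def mp (f : C(X, Y)) : SChain K X n →ₗ[K] SChain K Y n := lin fun σ => sg K (f.comp σ)

@[simp] lemma mp_sg (f : C(X, Y)) (σ : SSimplex X n) : mp f (sg K σ) = sg K (f.comp σ) := by
  simp [mp]

lemma bdry_sg (σ : SSimplex X (n + 1)) :
    bdry K X n (sg K σ) = ∑ i : Fin (n + 2), (-1 : K) ^ (i : ℕ) • sg K (faceOf σ i) := by
  simp only [smul_sg, ← map_sum]
  simp [bdry, sg, bdryChain]

lemma mp_bdry (f : C(X, Y)) (c : SChain K X (n + 1)) :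
    bdry K Y n (mp f c) = mp f (bdry K X n c) := by
  refine chain_hom_congr (f := (bdry K Y n).comp (mp f)) (g := (mp f).comp (bdry K X n))
    (fun σ => ?_) c
  simp [bdry_sg, map_sum, faceOf, ContinuousMap.comp_assoc]

lemma mp_comp (g : C(Y, Z)) (f : C(X, Y)) (c : SChain K X n) :
    mp g (mp f c) = mp (g.comp f) c := by
  refine chain_hom_congr (f := (mp g).comp (mp f)) (g := mp (g.comp f)) (fun σ => ?_) c
  simp [ContinuousMap.comp_assoc]

@[simp] lemma mp_id (c : SChain K X n) : mp (ContinuousMap.id X) c = c := by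
  refine chain_hom_congr (f := mp (ContinuousMap.id X)) (g := LinearMap.id) (fun σ => ?_) c
  simp


/-- The affine map of simplices induced by a map of vertices. -/
def sm {m n : ℕ} (θ : Fin (m + 1) → Fin (n + 1)) : C(Δ m, Δ n) :=
  ⟨stdSimplex.map θ, stdSimplex.continuous_map θ⟩

lemma sm_apply {m n : ℕ} (θ : Fin (m + 1) → Fin (n + 1)) (x : Δ m) (j) :
    (sm θ x).1 j = ∑ i, if θ i = j then x.1 i else 0 := by
  change (FunOnFinite.linearMap ℝ ℝ θ x.1) j = _
  rw [FunOnFinite.linearMap_apply_apply, Finset.sum_filter]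

lemma sm_comp {l m n : ℕ} (θ : Fin (m + 1) → Fin (n + 1)) (η : Fin (l + 1) → Fin (m + 1)) :
    (sm θ).comp (sm η) = sm (θ ∘ η) := by
  ext1 x
  exact stdSimplex.map_comp_apply η θ x

lemma sm_id : sm (id : Fin (n + 1) → Fin (n + 1)) = ContinuousMap.id _ := by
  ext1 x
  exact stdSimplex.map_id_apply x

lemma face_same (i : Fin (n + 2)) (x : Δ n) : (face i x).1 i = 0 := by
  simp [face]

lemma face_succAbove (i : Fin (n + 2)) (x : Δ n) (j : Fin (n + 1)) :
    (face i x).1 (i.succAbove j) = x.1 j := by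
  simp [face]

lemma face_eq_sm (i : Fin (n + 2)) : face (n := n) i = sm i.succAbove := by
  ext1 x
  apply Subtype.ext
  funext j
  rw [sm_apply]
  refine Fin.succAboveCases i ?_ (fun j => ?_) j
  · rw [face_same, Finset.sum_eq_zero]
    intro l _
    simp [Fin.succAbove_ne]
  · rw [face_succAbove]
    simp

lemma face_comp_face (i : Fin (n + 3)) (j : Fin (n + 2)) :
    (face (i.succAbove j)).comp (face (n := n) (j.predAbove i)) = (face i).comp (face j) := by
  simp only [face_eq_sm, sm_comp]
  congr 1
  funext l
  simp [Fin.succAbove_succAbove_succAbove_predAbove]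

lemma faceOf_faceOf (σ : SSimplex X (n + 2)) (i : Fin (n + 3)) (j : Fin (n + 2)) :
    faceOf (faceOf σ (i.succAbove j)) (j.predAbove i) = faceOf (faceOf σ i) j := by
  simp only [faceOf, ContinuousMap.comp_assoc, face_comp_face]

lemma bdry_bdry (c : SChain K X (n + 2)) : bdry K X n (bdry K X (n + 1) c) = 0 := by
  refine chain_hom_congr (f := (bdry K X n).comp (bdry K X (n + 1))) (g := 0) (fun σ => ?_) c
  simp only [LinearMap.comp_apply, bdry_sg, map_sum, map_smul, LinearMap.zero_apply,
    Finset.smul_sum, smul_smul, ← pow_add]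
  rw [← Finset.sum_product']
  refine Finset.sum_involution (fun p _ => (p.1.succAbove p.2, p.2.predAbove p.1)) ?_ ?_ ?_ ?_
  · rintro ⟨i, j⟩ -
    simp only [faceOf_faceOf, Fin.neg_one_pow_succAbove_add_predAbove]
    simp
  · rintro ⟨i, j⟩ - - h
    exact Fin.succAbove_ne i j (congrArg Prod.fst h)
  · simp
  · rintro ⟨i, j⟩ -
    simp [Fin.succAbove_succAbove_predAbove, Fin.predAbove_predAbove_succAbove]

/-! chains in subsets -/

lemma chainsIn_eq_span (A : Set X) :
    chainsIn K X A n = Submodule.span K {c | ∃ σ : SSimplex X n, Set.range σ ⊆ A ∧ c = sg K σ} := by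
  rw [chainsIn, Finsupp.supported_eq_span_single, Submodule.map_span]
  congr 1
  ext c
  constructor
  · rintro ⟨_, ⟨σ, hσ, rfl⟩, rfl⟩
    exact ⟨σ, hσ, rfl⟩
  · rintro ⟨σ, hσ, rfl⟩
    exact ⟨_, ⟨σ, hσ, rfl⟩, rfl⟩

lemma sg_mem {A : Set X} {σ : SSimplex X n} (h : Set.range σ ⊆ A) :
    sg K σ ∈ chainsIn K X A n := by
  rw [chainsIn_eq_span]
  exact Submodule.subset_span ⟨σ, h, rfl⟩

lemma chainsIn_le {A : Set X} {S : Submodule K (SChain K X n)}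
    (h : ∀ σ : SSimplex X n, Set.range σ ⊆ A → sg K σ ∈ S) : chainsIn K X A n ≤ S := by
  rw [chainsIn_eq_span, Submodule.span_le]
  rintro _ ⟨σ, hσ, rfl⟩
  exact h σ hσ

lemma chainsIn_mono {A B : Set X} (h : A ⊆ B) : chainsIn K X A n ≤ chainsIn K X B n :=
  chainsIn_le fun _ hσ => sg_mem (hσ.trans h)

lemma chainsIn_inter {A B : Set X} {c : SChain K X n} (h1 : c ∈ chainsIn K X A n)
    (h2 : c ∈ chainsIn K X B n) : c ∈ chainsIn K X (A ∩ B) n := by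
  obtain ⟨a, ha, rfl⟩ := h1
  obtain ⟨b, hb, hab⟩ := h2
  have : b = a := (chainEquiv K X n).injective hab
  subst this
  refine ⟨b, ?_, rfl⟩
  simp only [SetLike.mem_coe, Finsupp.mem_supported] at ha hb ⊢
  exact fun σ hσ => Set.subset_inter (ha hσ) (hb hσ)

lemma chainsIn_univ (c : SChain K X n) : c ∈ chainsIn K X Set.univ n := by
  induction c using chain_ind with
  | h0 => exact zero_mem _
  | hadd a b ha hb => exact add_mem ha hb
  | hsm a σ => exact Submodule.smul_mem _ _ (sg_mem (Set.subset_univ _))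

instance : Nonempty (Δ n) := ⟨stdSimplex.vertex 0⟩

lemma chainsIn_empty {c : SChain K X n} (h : c ∈ chainsIn K X ∅ n) : c = 0 := by
  have : chainsIn K X ∅ n ≤ ⊥ := chainsIn_le fun σ hσ => by
    exact absurd (hσ ⟨Classical.arbitrary _, rfl⟩) (by simp)
  simpa using this h

lemma mp_mem {f : C(X, Y)} {A : Set X} {B : Set Y} (h : Set.MapsTo f A B) {c : SChain K X n}
    (hc : c ∈ chainsIn K X A n) : mp f c ∈ chainsIn K Y B n := by
  refine chainsIn_le (S := (chainsIn K Y B n).comap (mp f)) (fun σ hσ => ?_) hc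
  simp only [Submodule.mem_comap, mp_sg]
  refine sg_mem ?_
  rintro _ ⟨x, rfl⟩
  exact h (hσ ⟨x, rfl⟩)

lemma bdry_mem {A : Set X} {c : SChain K X (n + 1)}
    (hc : c ∈ chainsIn K X A (n + 1)) : bdry K X n c ∈ chainsIn K X A n := by
  refine chainsIn_le (S := (chainsIn K X A n).comap (bdry K X n)) (fun σ hσ => ?_) hc
  simp only [Submodule.mem_comap, bdry_sg]
  refine Submodule.sum_mem _ fun i _ => Submodule.smul_mem _ _ (sg_mem ?_)
  rintro _ ⟨x, rfl⟩
  exact hσ ⟨face i x, rfl⟩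

lemma chain_compact (c : SChain K X n) : ∃ A : Set X, IsCompact A ∧ c ∈ chainsIn K X A n := by
  induction c using chain_ind with
  | h0 => exact ⟨∅, isCompact_empty, zero_mem _⟩
  | hadd a b ha hb =>
    obtain ⟨A, hA, ha⟩ := ha
    obtain ⟨B, hB, hb⟩ := hb
    exact ⟨A ∪ B, hA.union hB, add_mem (chainsIn_mono Set.subset_union_left ha)
      (chainsIn_mono Set.subset_union_right hb)⟩
  | hsm a σ =>
    have : CompactSpace (Δ n) := isCompact_iff_compactSpace.1 (isCompact_stdSimplex ℝ _)
    exact ⟨Set.range σ, isCompact_range σ.continuous, Submodule.smul_mem _ _ (sg_mem subset_rfl)⟩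

lemma chain_compact' {A : Set X} {c : SChain K X n} (hc : c ∈ chainsIn K X A n) :
    ∃ B ⊆ A, IsCompact B ∧ c ∈ chainsIn K X B n := by
  rw [chainsIn_eq_span] at hc
  induction hc using Submodule.span_induction with
  | mem x h =>
    obtain ⟨σ, hσ, rfl⟩ := h
    have : CompactSpace (Δ n) := isCompact_iff_compactSpace.1 (isCompact_stdSimplex ℝ _)
    exact ⟨Set.range σ, hσ, isCompact_range σ.continuous, sg_mem subset_rfl⟩
  | zero => exact ⟨∅, Set.empty_subset _, isCompact_empty, zero_mem _⟩
  | add a b _ _ ha hb =>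
    obtain ⟨A, hA', hA, ha⟩ := ha
    obtain ⟨B, hB', hB, hb⟩ := hb
    exact ⟨A ∪ B, Set.union_subset hA' hB', hA.union hB,
      add_mem (chainsIn_mono Set.subset_union_left ha)
      (chainsIn_mono Set.subset_union_right hb)⟩
  | smul a x _ hx =>
    obtain ⟨B, h1, h2, h3⟩ := hx
    exact ⟨B, h1, h2, Submodule.smul_mem _ _ h3⟩

lemma chain_lift {f : C(X, Y)} (hf : Topology.IsEmbedding f) {A : Set X} {c : SChain K Y n}
    (hc : c ∈ chainsIn K Y (f '' A) n) : ∃ c' ∈ chainsIn K X A n, mp f c' = c := by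
  have : chainsIn K Y (f '' A) n ≤ (chainsIn K X A n).map (mp f) := by
    refine chainsIn_le fun σ hσ => ?_
    have h1 : ∀ x, σ x ∈ Set.range f := fun x => by
      obtain ⟨a, -, ha⟩ := hσ ⟨x, rfl⟩; exact ⟨a, ha⟩
    let τ : SSimplex X n := ⟨fun x => hf.toHomeomorph.symm ⟨σ x, h1 x⟩, by fun_prop⟩
    have h2 : ∀ x, f (τ x) = σ x := fun x =>
      congrArg Subtype.val (hf.toHomeomorph.apply_symm_apply ⟨σ x, h1 x⟩)
    refine ⟨sg K τ, sg_mem ?_, ?_⟩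
    · rintro _ ⟨x, rfl⟩
      obtain ⟨a, ha, hax⟩ := hσ ⟨x, rfl⟩
      rw [← h2] at hax
      exact hf.injective hax ▸ ha
    · rw [mp_sg]
      congr 1
      ext1 x
      exact h2 x
  exact this hc

lemma mp_injective {f : C(X, Y)} (hf : Function.Injective f) :
    Function.Injective (mp (K := K) (n := n) f) := by
  have h : Function.Injective (fun σ : SSimplex X n => f.comp σ) := fun σ τ h => by
    ext1 x
    exact hf (DFunLike.congr_fun h x)
  have e : ∀ c : SChain K X n, mp f c = chainEquiv K Y n (Finsupp.mapDomain (fun σ => f.comp σ)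
      ((chainEquiv K X n).symm c)) := by
    intro c
    induction c using chain_ind with
    | h0 => simp
    | hadd a b ha hb => simp [ha, hb, Finsupp.mapDomain_add]
    | hsm a σ =>
      rw [map_smul, mp_sg, smul_sg, smul_sg]
      simp
  intro a b hab
  rw [e, e] at hab
  exact (chainEquiv K X n).symm.injective
    (Finsupp.mapDomain_injective h ((chainEquiv K Y n).injective hab))

/-! natural operators -/

/-- The identity simplex. -/
def iot (K : Type) [CommRing K] (k : ℕ) : SChain K (Δ k) k := sg K (ContinuousMap.id _)

/-- Natural operator determined by a chain on the standard simplex. -/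
def nat (a : SChain K (Δ k) m) : SChain K X k →ₗ[K] SChain K X m := lin fun σ => mp σ a

@[simp] lemma nat_sg (a : SChain K (Δ k) m) (σ : SSimplex X k) : nat a (sg K σ) = mp σ a := by
  simp [nat]

lemma mp_nat (f : C(X, Y)) (a : SChain K (Δ k) m) (c : SChain K X k) :
    mp f (nat a c) = nat a (mp f c) := by
  refine chain_hom_congr (f := (mp f).comp (nat a)) (g := (nat a).comp (mp f)) (fun σ => ?_) c
  simp [mp_comp]

lemma nat_mem {a : SChain K (Δ k) m} {A : Set X} {c : SChain K X k}
    (hc : c ∈ chainsIn K X A k) : nat a c ∈ chainsIn K X A m := by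
  refine chainsIn_le (S := (chainsIn K X A m).comap (nat a)) (fun σ hσ => ?_) hc
  simp only [Submodule.mem_comap, nat_sg]
  exact mp_mem (A := Set.univ) (fun x _ => hσ ⟨x, rfl⟩) (chainsIn_univ a)

lemma bdry_nat (a : SChain K (Δ k) (m + 1)) (c : SChain K X k) :
    bdry K X m (nat a c) = nat (bdry K _ m a) c := by
  refine chain_hom_congr (f := (bdry K X m).comp (nat a)) (g := nat (bdry K _ m a))
    (fun σ => ?_) c
  simp [mp_bdry]

lemma nat_iot (c : SChain K X k) : nat (iot K k) c = c := by
  refine chain_hom_congr (f := nat (iot K k)) (g := LinearMap.id) (fun σ => ?_) c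
  simp [iot]

lemma nat_bdry (a : SChain K (Δ k) m) (c : SChain K X (k + 1)) :
    nat a (bdry K X k c) = nat (nat a (bdry K _ k (iot K (k + 1)))) c := by
  refine chain_hom_congr (f := (nat a).comp (bdry K X k))
    (g := nat (nat a (bdry K _ k (iot K (k + 1))))) (fun σ => ?_) c
  simp only [LinearMap.comp_apply, nat_sg]
  rw [mp_nat, ← mp_bdry, iot, mp_sg]
  simp

lemma nat_nat (b : SChain K (Δ m) n) (a : SChain K (Δ k) m) (c : SChain K X k) :
    nat b (nat a c) = nat (nat b a) c := by
  refine chain_hom_congr (f := (nat b).comp (nat a)) (g := nat (nat b a)) (fun σ => ?_) c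
  simp [mp_nat]

lemma nat_add (a b : SChain K (Δ k) m) (c : SChain K X k) :
    nat (a + b) c = nat a c + nat b c := by
  refine chain_hom_congr (f := nat (a + b)) (g := nat a + nat b) (fun σ => ?_) c
  simp

lemma nat_sub (a b : SChain K (Δ k) m) (c : SChain K X k) :
    nat (a - b) c = nat a c - nat b c := by
  refine chain_hom_congr (f := nat (a - b)) (g := nat a - nat b) (fun σ => ?_) c
  simp

end core
end BddCoh

end


noncomputable section
namespace BddCoh

/-- unit interval -/
abbrev I : Set ℝ := unitInterval

section cone
variable {K : Type} [CommRing K] {X Y Z : Type} [TopologicalSpace X] [TopologicalSpace Y]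
  [TopologicalSpace Z] {n m k : ℕ}

instance : CompactSpace (Δ n) := isCompact_iff_compactSpace.1 (isCompact_stdSimplex ℝ _)

/-- The collapse map onto the join. -/
def psi (k : ℕ) : C(Δ k × I, Δ (k + 1)) where
  toFun p := ⟨Fin.cons (1 - (p.2 : ℝ)) (fun j => (p.2 : ℝ) * p.1.1 j), by
    refine ⟨fun j => ?_, ?_⟩
    · refine Fin.cases ?_ (fun j => ?_) j
      · simpa using p.2.2.2
      · simpa using mul_nonneg p.2.2.1 (p.1.2.1 j)
    · rw [Fin.sum_univ_succ]
      simp [← Finset.mul_sum, p.1.2.2]⟩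
  continuous_toFun := by
    refine Continuous.subtype_mk (continuous_pi fun j => ?_) _
    refine Fin.cases ?_ (fun j => ?_) j
    · simp only [Fin.cons_zero]; fun_prop
    · simp only [Fin.cons_succ]
      exact (continuous_subtype_val.comp continuous_snd).mul
        ((continuous_apply j).comp (continuous_subtype_val.comp continuous_fst))

lemma psi_zero (p : Δ k × I) : (psi k p).1 0 = 1 - p.2 := by simp [psi]
lemma psi_succ (p : Δ k × I) (j) : (psi k p).1 (Fin.succ j) = p.2 * p.1.1 j := by simp [psi]

lemma psi_surj : Function.Surjective (psi k) := by
  intro y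
  have hy := y.2.2
  rw [Fin.sum_univ_succ] at hy
  have hs : 0 ≤ ∑ j : Fin (k + 1), y.1 j.succ := Finset.sum_nonneg fun j _ => y.2.1 _
  by_cases h : ∑ j : Fin (k + 1), y.1 j.succ = 0
  · refine ⟨(Classical.arbitrary _, 0), ?_⟩
    apply Subtype.ext; funext j
    refine Fin.cases ?_ (fun j => ?_) j
    · rw [psi_zero]; simp; linarith
    · rw [psi_succ]
      have := (Finset.sum_eq_zero_iff_of_nonneg (fun j _ => y.2.1 _)).1 h j (Finset.mem_univ _)
      simp [this]
  · refine ⟨(⟨fun j => y.1 j.succ / ∑ j : Fin (k + 1), y.1 j.succ,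
      fun j => div_nonneg (y.2.1 _) hs, ?_⟩, ⟨∑ j : Fin (k + 1), y.1 j.succ, hs, ?_⟩), ?_⟩
    · rw [← Finset.sum_div, div_self h]
    · have := y.2.1 0; linarith
    · apply Subtype.ext; funext j
      refine Fin.cases ?_ (fun j => ?_) j
      · rw [psi_zero]; simp only; linarith
      · rw [psi_succ]; field_simp

lemma psi_fib {a b : Δ k × I} (h : psi k a = psi k b) : a.2 = b.2 ∧ (a.2 = 0 ∨ a.1 = b.1) := by
  have h0 : a.2 = b.2 := by
    have := congrArg (fun z => z.1 0) h
    simp only [psi_zero] at this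
    exact Subtype.ext (by linarith)
  refine ⟨h0, ?_⟩
  by_cases h1 : a.2 = 0
  · exact Or.inl h1
  · right
    apply Subtype.ext; funext j
    have := congrArg (fun z => z.1 j.succ) h
    simp only [psi_succ, ← h0] at this
    exact mul_left_cancel₀ (fun h => h1 (Subtype.ext h)) this

lemma psi_quot : Topology.IsQuotientMap (psi k) :=
  (psi k).continuous.isClosedMap.isQuotientMap (psi k).continuous psi_surj

/-- A contraction of a space. -/
structure Ctr (X : Type) [TopologicalSpace X] where
  p : X
  F : C(X × I, X)
  h0 : ∀ x, F (x, 0) = p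
  h1 : ∀ x, F (x, 1) = x

variable (T : Ctr X)

lemma coneS_aux (σ : SSimplex X k) :
    Function.FactorsThrough (T.F.comp (σ.prodMap (ContinuousMap.id I))) (psi k) := fun a b h => by
  change T.F (σ a.1, a.2) = T.F (σ b.1, b.2)
  obtain ⟨h1, h2 | h2⟩ := psi_fib h
  · rw [← h1, h2, T.h0, T.h0]
  · rw [← h1, h2]

/-- cone on a simplex -/
def coneS (σ : SSimplex X k) : SSimplex X (k + 1) :=
  psi_quot.lift (T.F.comp (σ.prodMap (ContinuousMap.id I))) (coneS_aux T σ)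

lemma coneS_psi (σ : SSimplex X k) (a : Δ k × I) : coneS T σ (psi k a) = T.F (σ a.1, a.2) :=
  DFunLike.congr_fun (psi_quot.lift_comp (T.F.comp (σ.prodMap (ContinuousMap.id I))) (coneS_aux T σ)) a

lemma faceOf_coneS_zero (σ : SSimplex X k) : faceOf (coneS T σ) 0 = σ := by
  ext1 x
  have : face 0 x = psi k (x, 1) := by
    apply Subtype.ext; funext j
    refine Fin.cases ?_ (fun j => ?_) j
    · rw [face_same, psi_zero]; simp
    · rw [psi_succ, ← Fin.succAbove_zero, face_succAbove]; simp
  rw [faceOf, ContinuousMap.comp_apply, this, coneS_psi, T.h1]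

lemma faceOf_coneS_succ (σ : SSimplex X (k + 1)) (i : Fin (k + 2)) :
    faceOf (coneS T σ) i.succ = coneS T (faceOf σ i) := by
  ext1 y
  obtain ⟨⟨x, s⟩, rfl⟩ := psi_surj y
  have : face i.succ (psi k (x, s)) = psi (k + 1) (face i x, s) := by
    apply Subtype.ext; funext j
    refine Fin.succAboveCases i.succ ?_ (fun j => ?_) j
    · rw [face_same, psi_succ, face_same, mul_zero]
    · rw [face_succAbove]
      refine Fin.cases ?_ (fun j => ?_) j
      · simp [psi_zero]
      · rw [psi_succ, Fin.succ_succAbove_succ, psi_succ, face_succAbove]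
  rw [faceOf, ContinuousMap.comp_apply, this, coneS_psi, coneS_psi]; rfl

lemma faceOf_coneS_one (σ : SSimplex X 0) :
    faceOf (coneS T σ) 1 = ContinuousMap.const _ T.p := by
  ext1 x
  have : face 1 x = psi 0 (x, 0) := by
    apply Subtype.ext; funext j
    fin_cases j
    · have := x.2.2
      simp at this
      simp [psi, face, Fin.insertNth, Fin.succAboveCases]; exact this
    · simp [psi, face]
  rw [faceOf, ContinuousMap.comp_apply, this, coneS_psi, T.h0]; rfl

/-- The cone operator. -/
def cone (k : ℕ) : SChain K X k →ₗ[K] SChain K X (k + 1) := lin fun σ => sg K (coneS T σ)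

/-- augmentation -/
def eps (K : Type) [CommRing K] (X : Type) [TopologicalSpace X] (k : ℕ) : SChain K X k →ₗ[K] K :=
  lin fun _ => 1

@[simp] lemma eps_sg (σ : SSimplex X k) : eps K X k (sg K σ) = 1 := by simp [eps]

@[simp] lemma eps_mp (f : C(X, Y)) (c : SChain K X k) : eps K Y k (mp f c) = eps K X k c :=
  chain_hom_congr (f := (eps K Y k).comp (mp f)) (g := eps K X k) (fun σ => by simp) c

lemma eps_bdry (c : SChain K X 1) : eps K X 0 (bdry K X 0 c) = 0 :=
  chain_hom_congr (f := (eps K X 0).comp (bdry K X 0)) (g := 0)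
    (fun σ => by simp [bdry_sg, Fin.sum_univ_two]) c

lemma bdry_cone (c : SChain K X (k + 1)) :
    bdry K X (k + 1) (cone T (k + 1) c) = c - cone T k (bdry K X k c) := by
  refine chain_hom_congr (f := (bdry K X (k + 1)).comp (cone T (k + 1)))
    (g := LinearMap.id - (cone T k).comp (bdry K X k)) (fun σ => ?_) c
  simp only [LinearMap.comp_apply, cone, lin_sg, bdry_sg, LinearMap.sub_apply, map_sum, map_smul]
  rw [Fin.sum_univ_succ]
  simp only [faceOf_coneS_zero, faceOf_coneS_succ, Fin.val_succ, pow_succ]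
  simp [sub_eq_add_neg]

lemma bdry_cone_zero (c : SChain K X 0) :
    bdry K X 0 (cone T 0 c) = c - eps K X 0 c • sg K (ContinuousMap.const _ T.p) := by
  refine chain_hom_congr (f := (bdry K X 0).comp (cone T 0))
    (g := LinearMap.id - (eps K X 0).smulRight (sg K (ContinuousMap.const _ T.p))) (fun σ => ?_) c
  simp [cone, bdry_sg, Fin.sum_univ_two, faceOf_coneS_zero, faceOf_coneS_one, sub_eq_add_neg]

lemma bdry_cone_eq {c : SChain K X (k + 1)} (h : bdry K X k c = 0) :
    bdry K X (k + 1) (cone T (k + 1) c) = c := by rw [bdry_cone, h]; simp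

lemma bdry_cone_eq_zero {c : SChain K X 0} (h : eps K X 0 c = 0) :
    bdry K X 0 (cone T 0 c) = c := by rw [bdry_cone_zero, h]; simp

lemma cone_mem {A : Set X} (hA : ∀ x ∈ A, ∀ s, T.F (x, s) ∈ A) {c : SChain K X k}
    (hc : c ∈ chainsIn K X A k) : cone T k c ∈ chainsIn K X A (k + 1) := by
  refine chainsIn_le (S := (chainsIn K X A (k + 1)).comap (cone T k)) (fun σ hσ => ?_) hc
  simp only [Submodule.mem_comap, cone, lin_sg]
  refine sg_mem ?_
  rintro _ ⟨y, rfl⟩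
  obtain ⟨⟨x, s⟩, rfl⟩ := psi_surj y
  rw [coneS_psi]
  exact hA _ (hσ ⟨x, rfl⟩) _

/-- straight contraction -/
def Ctr.lin {E : Type} [AddCommGroup E] [Module ℝ E] [TopologicalSpace E]
    [IsTopologicalAddGroup E] [ContinuousSMul ℝ E] (p : E) : Ctr E where
  p := p
  F := ⟨fun a => p + (a.2 : ℝ) • (a.1 - p), by fun_prop⟩
  h0 := by simp
  h1 := by simp

lemma Ctr.lin_mem {E : Type} [AddCommGroup E] [Module ℝ E] [TopologicalSpace E]
    [IsTopologicalAddGroup E] [ContinuousSMul ℝ E] {p : E} {C : Set E} (hC : Convex ℝ C)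
    (hp : p ∈ C) : ∀ x ∈ C, ∀ s, (Ctr.lin p).F (x, s) ∈ C := by
  intro x hx s
  exact hC.add_smul_sub_mem hp hx s.2

/-- straight contraction of a convex set -/
def Ctr.conv {E : Type} [AddCommGroup E] [Module ℝ E] [TopologicalSpace E]
    [IsTopologicalAddGroup E] [ContinuousSMul ℝ E] {C : Set E} (hC : Convex ℝ C) (p : C) :
    Ctr C where
  p := p
  F := ⟨fun a => ⟨(p : E) + (a.2 : ℝ) • ((a.1 : E) - p),
    hC.add_smul_sub_mem p.2 a.1.2 a.2.2⟩, by fun_prop⟩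
  h0 := by simp
  h1 := by simp

/-- product contraction -/
def Ctr.prod (T : Ctr X) (S : Ctr Y) : Ctr (X × Y) where
  p := (T.p, S.p)
  F := ⟨fun a => (T.F (a.1.1, a.2), S.F (a.1.2, a.2)), by fun_prop⟩
  h0 := by simp [T.h0, S.h0]
  h1 := by simp [T.h1, S.h1]

/-- contraction of the simplex -/
def ctrΔ (k : ℕ) : Ctr (Δ k) := Ctr.conv (convex_stdSimplex ℝ _) (Classical.arbitrary _)

/-- contraction of the prism -/
def ctrP (k : ℕ) : Ctr (Δ k × I) := (ctrΔ k).prod (Ctr.conv (convex_Icc 0 1) 0)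

/-! acyclic models -/

/-- the homotopy -/
def amT (f : ∀ k, SChain K (Δ k) k) : ∀ k, SChain K (Δ k) (k + 1)
  | 0 => 0
  | k + 1 => cone (ctrΔ (k + 1)) (k + 1)
      (f (k + 1) - iot K (k + 1) - nat (amT f k) (bdry K _ k (iot K (k + 1))))

lemma amT_succ (f : ∀ k, SChain K (Δ k) k) (k : ℕ) : amT f (k + 1) =
    cone (ctrΔ (k + 1)) (k + 1)
      (f (k + 1) - iot K (k + 1) - nat (amT f k) (bdry K _ k (iot K (k + 1)))) := rfl

lemma nat_zero (c : SChain K X k) : nat (0 : SChain K (Δ k) m) c = 0 :=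
  chain_hom_congr (f := nat 0) (g := 0) (fun σ => by simp) c

lemma bdry_iot_zero (a : SChain K (Δ k) m) :
    nat (nat a (bdry K _ k (iot K (k + 1)))) (bdry K _ (k + 1) (iot K (k + 2))) = 0 := by
  rw [← nat_bdry, bdry_bdry, map_zero]

lemma bdry_amT {f : ∀ k, SChain K (Δ k) k} (h0 : f 0 = iot K 0)
    (h : ∀ k, bdry K _ k (f (k + 1)) = nat (f k) (bdry K _ k (iot K (k + 1)))) (k : ℕ) :
    bdry K _ (k + 1) (amT f (k + 1)) =
      f (k + 1) - iot K (k + 1) - nat (amT f k) (bdry K _ k (iot K (k + 1))) := by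
  induction k with
  | zero =>
    rw [amT_succ, bdry_cone_eq]
    rw [amT, map_sub, map_sub, h, h0, nat_iot, bdry_nat, map_zero, nat_zero]
    simp
  | succ k ih =>
    rw [amT_succ, bdry_cone_eq]
    rw [map_sub, map_sub, h, bdry_nat, ih, nat_sub, nat_sub, bdry_iot_zero, nat_iot]
    simp

lemma amT_spec {f : ∀ k, SChain K (Δ k) k} (h0 : f 0 = iot K 0)
    (h : ∀ k, bdry K _ k (f (k + 1)) = nat (f k) (bdry K _ k (iot K (k + 1)))) (k : ℕ)
    (c : SChain K X (k + 1)) :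
    nat (f (k + 1)) c - c =
      bdry K X (k + 1) (nat (amT f (k + 1)) c) + nat (amT f k) (bdry K X k c) := by
  rw [bdry_nat, bdry_amT h0 h, nat_bdry (amT f k) c, nat_sub, nat_sub, nat_iot c]; abel

/-! prism -/

/-- ends of the prism -/
def endP (k : ℕ) (t : I) : C(Δ k, Δ k × I) := ⟨fun x => (x, t), by fun_prop⟩

/-- faces of the prism -/
def faceP (i : Fin (k + 2)) : C(Δ k × I, Δ (k + 1) × I) :=
  (face i).prodMap (ContinuousMap.id I)

/-- prism chains -/
def prism (K : Type) [CommRing K] : ∀ k, SChain K (Δ k × I) (k + 1)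
  | 0 => cone (ctrP 0) 0 (sg K (endP 0 1) - sg K (endP 0 0))
  | k + 1 => cone (ctrP (k + 1)) (k + 1) (sg K (endP (k + 1) 1) - sg K (endP (k + 1) 0) -
      ∑ i : Fin (k + 2), (-1 : K) ^ (i : ℕ) • mp (faceP i) (prism K k))

lemma prism_succ (k : ℕ) : prism K (k + 1) =
    cone (ctrP (k + 1)) (k + 1) (sg K (endP (k + 1) 1) - sg K (endP (k + 1) 0) -
      ∑ i : Fin (k + 2), (-1 : K) ^ (i : ℕ) • mp (faceP i) (prism K k)) := rfl

lemma bdry_prism_zero : bdry K _ 0 (prism K 0) = sg K (endP 0 1) - sg K (endP 0 0) := by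
  rw [prism, bdry_cone_eq_zero]; simp

lemma faceOf_endP (i : Fin (k + 2)) (t : I) :
    faceOf (endP (k + 1) t) i = (faceP i).comp (endP k t) := by
  ext1 x; rfl

lemma faceP_comp (i : Fin (k + 3)) (j : Fin (k + 2)) :
    (faceP (i.succAbove j)).comp (faceP (k := k) (j.predAbove i)) = (faceP i).comp (faceP j) := by
  ext1 x
  exact Prod.ext (DFunLike.congr_fun (face_comp_face i j) x.1) rfl

lemma bdry_prism (k : ℕ) : bdry K _ (k + 1) (prism K (k + 1)) =
    sg K (endP (k + 1) 1) - sg K (endP (k + 1) 0) -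
      ∑ i : Fin (k + 2), (-1 : K) ^ (i : ℕ) • mp (faceP i) (prism K k) := by
  induction k with
  | zero =>
    rw [prism_succ, bdry_cone_eq]
    simp only [map_sub, map_sum, map_smul, bdry_sg, mp_bdry, bdry_prism_zero, mp_sg, faceOf_endP,
      smul_sub, Finset.sum_sub_distrib, sub_self]
  | succ k ih =>
    rw [prism_succ, bdry_cone_eq]
    simp only [map_sub, map_sum, map_smul, bdry_sg, mp_bdry, ih, mp_sg, faceOf_endP,
      smul_sub, Finset.sum_sub_distrib]
    have : ∑ i : Fin (k + 3), (-1 : K) ^ (i : ℕ) • ∑ j : Fin (k + 2), (-1 : K) ^ (j : ℕ) •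
        mp (faceP i) (mp (faceP j) (prism K k)) = 0 := by
      simp only [Finset.smul_sum, smul_smul, ← pow_add, mp_comp]
      rw [← Finset.sum_product']
      refine Finset.sum_involution (fun p _ => (p.1.succAbove p.2, p.2.predAbove p.1)) ?_ ?_ ?_ ?_
      · rintro ⟨i, j⟩ -
        simp only [faceP_comp, Fin.neg_one_pow_succAbove_add_predAbove]
        simp
      · rintro ⟨i, j⟩ - - h
        exact Fin.succAbove_ne i j (congrArg Prod.fst h)
      · simp
      · rintro ⟨i, j⟩ -
        simp [Fin.succAbove_succAbove_predAbove, Fin.predAbove_predAbove_succAbove]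
    rw [this]; simp

/-- homotopy operator -/
def hop (H : C(X × I, Y)) (k : ℕ) : SChain K X k →ₗ[K] SChain K Y (k + 1) :=
  lin fun σ => mp (H.comp (σ.prodMap (ContinuousMap.id I))) (prism K k)

lemma hop_spec (H : C(X × I, Y)) {f g : C(X, Y)} (h0 : ∀ x, H (x, 0) = f x)
    (h1 : ∀ x, H (x, 1) = g x) (c : SChain K X (k + 1)) :
    mp g c - mp f c = bdry K Y (k + 1) (hop H (k + 1) c) + hop H k (bdry K X k c) := by
  refine chain_hom_congr (f := mp g - mp f)
    (g := (bdry K Y (k + 1)).comp (hop H (k + 1)) + (hop H k).comp (bdry K X k)) (fun σ => ?_) c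
  simp only [LinearMap.sub_apply, LinearMap.add_apply, LinearMap.comp_apply, hop, lin_sg, bdry_sg,
    map_sum, map_smul, mp_bdry, bdry_prism, map_sub, mp_comp, mp_sg]
  have e0 : (H.comp (σ.prodMap (ContinuousMap.id I))).comp (endP (k + 1) 0) = f.comp σ := by
    ext1 x; simp [endP, h0]
  have e1 : (H.comp (σ.prodMap (ContinuousMap.id I))).comp (endP (k + 1) 1) = g.comp σ := by
    ext1 x; simp [endP, h1]
  rw [e0, e1]
  have e2 : ∀ i, (H.comp (σ.prodMap (ContinuousMap.id I))).comp (faceP i) =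
    H.comp ((faceOf σ i).prodMap (ContinuousMap.id I)) := fun i => by ext1 x; rfl
  simp only [e2]; abel

lemma hop_mem {H : C(X × I, Y)} {A : Set X} {B : Set Y} (h : ∀ x ∈ A, ∀ t, H (x, t) ∈ B)
    {c : SChain K X k} (hc : c ∈ chainsIn K X A k) : hop H k c ∈ chainsIn K Y B (k + 1) := by
  refine chainsIn_le (S := (chainsIn K Y B (k + 1)).comap (hop H k)) (fun σ hσ => ?_) hc
  simp only [Submodule.mem_comap, hop, lin_sg]
  exact mp_mem (A := Set.univ) (fun x _ => h _ (hσ ⟨x.1, rfl⟩) _) (chainsIn_univ _)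

end cone
end BddCoh

end


noncomputable section
namespace BddCoh

section sub
variable {K : Type} [CommRing K] {X Y : Type} [TopologicalSpace X] [TopologicalSpace Y]
  {n m k : ℕ}

lemma span_map {V W : Type} [AddCommGroup V] [AddCommGroup W] [Module K V] [Module K W]
    {S : Set V} {p : Submodule K W} (f : V →ₗ[K] W) (h : ∀ x ∈ S, f x ∈ p) {x : V}
    (hx : x ∈ Submodule.span K S) : f x ∈ p :=
  (Submodule.span_le (p := p.comap f)).2 h hx

/-- barycentric subdivision of the standard simplex -/
def Sd (K : Type) [CommRing K] : ∀ k, SChain K (Δ k) k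
  | 0 => iot K 0
  | k + 1 => cone (Ctr.conv (convex_stdSimplex ℝ _) stdSimplex.barycenter) k
      (nat (Sd K k) (bdry K _ k (iot K (k + 1))))

lemma Sd_succ (k : ℕ) : Sd K (k + 1) =
    cone (Ctr.conv (convex_stdSimplex ℝ _) stdSimplex.barycenter) k
      (nat (Sd K k) (bdry K _ k (iot K (k + 1)))) := rfl

lemma bdry_Sd (k : ℕ) :
    bdry K _ k (Sd K (k + 1)) = nat (Sd K k) (bdry K _ k (iot K (k + 1))) := by
  induction k with
  | zero =>
    rw [Sd_succ, bdry_cone_eq_zero]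
    rw [Sd, nat_iot, eps_bdry]
  | succ k ih =>
    rw [Sd_succ, bdry_cone_eq]
    rw [bdry_nat, ih, bdry_iot_zero]

section affine
variable {E : Type} [NormedAddCommGroup E] [NormedSpace ℝ E] {C : Set E}

/-- affine simplices in a convex set -/
def aff (hC : Convex ℝ C) (v : Fin (m + 1) → C) : SSimplex C m :=
  ⟨fun x => ⟨∑ i, x.1 i • (v i : E), hC.sum_mem (fun i _ => x.2.1 i) x.2.2 (fun i _ => (v i).2)⟩,
    by
      refine Continuous.subtype_mk (continuous_finsetSum _ fun i _ => ?_) _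
      exact ((continuous_apply i).comp continuous_subtype_val).smul continuous_const⟩

lemma aff_val (hC : Convex ℝ C) (v : Fin (m + 1) → C) (x : Δ m) :
    (aff hC v x : E) = ∑ i, x.1 i • (v i : E) := rfl

lemma aff_face (hC : Convex ℝ C) (v : Fin (m + 2) → C) (i : Fin (m + 2)) :
    (aff hC v).comp (face i) = aff hC (v ∘ i.succAbove) := by
  ext1 x
  apply Subtype.ext
  rw [ContinuousMap.comp_apply, aff_val, aff_val, Fin.sum_univ_succAbove _ i]
  simp [face_same, face_succAbove]

lemma coneS_aff (hC : Convex ℝ C) (v : Fin (m + 1) → C) (p : C) :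
    coneS (Ctr.conv hC p) (aff hC v) = aff hC (Fin.cons p v) := by
  ext1 y
  obtain ⟨⟨x, s⟩, rfl⟩ := psi_surj y
  rw [coneS_psi]
  apply Subtype.ext
  rw [aff_val, Fin.sum_univ_succ]
  simp only [Fin.cons_zero, Fin.cons_succ, psi_zero, psi_succ, mul_smul, ← Finset.smul_sum]
  change (p : E) + (s : ℝ) • ((aff hC v x : E) - p) = _
  rw [aff_val]
  module

lemma aff_coneS (hC : Convex ℝ C) (v : Fin (m + 1) → C) (b : Δ m) (τ : SSimplex (Δ m) k) :
    (aff hC v).comp (coneS (Ctr.conv (convex_stdSimplex ℝ _) b) τ) =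
      coneS (Ctr.conv hC (aff hC v b)) ((aff hC v).comp τ) := by
  ext1 y
  obtain ⟨⟨x, s⟩, rfl⟩ := psi_surj y
  rw [ContinuousMap.comp_apply, coneS_psi, coneS_psi]
  apply Subtype.ext
  change (aff hC v _ : E) = (aff hC v b : E) + (s : ℝ) • ((aff hC v (τ x) : E) - aff hC v b)
  simp only [aff_val]
  change ∑ i, (b.1 i + (s : ℝ) * ((τ x).1 i - b.1 i)) • (v i : E) = _
  simp only [add_smul, mul_smul, sub_smul, Finset.sum_add_distrib, ← Finset.smul_sum,
    Finset.sum_sub_distrib]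

lemma mp_aff_cone (hC : Convex ℝ C) (v : Fin (m + 1) → C) (b : Δ m) (c : SChain K (Δ m) k) :
    mp (aff hC v) (cone (Ctr.conv (convex_stdSimplex ℝ _) b) k c) =
      cone (Ctr.conv hC (aff hC v b)) k (mp (aff hC v) c) := by
  refine chain_hom_congr (f := (mp (aff hC v)).comp (cone (Ctr.conv (convex_stdSimplex ℝ _) b) k))
    (g := (cone (Ctr.conv hC (aff hC v b)) k).comp (mp (aff hC v))) (fun σ => ?_) c
  simp [cone, aff_coneS]

/-- span of small affine simplices near a hull -/
def smallAff (K : Type) [CommRing K] (hC : Convex ℝ C) (S : Set E) (m : ℕ) (δ : ℝ) :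
    Submodule K (SChain K C m) :=
  Submodule.span K {c | ∃ w : Fin (m + 1) → C, (∀ i, (w i : E) ∈ convexHull ℝ S) ∧
    (∀ i j, dist (w i) (w j) ≤ δ) ∧ c = sg K (aff hC w)}

lemma dist_bary (v : Fin (m + 2) → E) {δ : ℝ} (h : ∀ i j, dist (v i) (v j) ≤ δ)
    (j : Fin (m + 2)) :
    dist (v j) (∑ i, (stdSimplex.barycenter : Δ (m + 1)).1 i • v i) ≤ (m + 1 : ℝ) / (m + 2) * δ := by
  have hm : (0 : ℝ) < m + 2 := by positivity
  have e : v j - ∑ i, (stdSimplex.barycenter : Δ (m + 1)).1 i • v i =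
      ((m + 2 : ℝ)⁻¹) • ∑ i, (v j - v i) := by
    have hb : ∀ i, (stdSimplex.barycenter : Δ (m + 1)).1 i = (m + 2 : ℝ)⁻¹ := by
      intro i
      have := stdSimplex.barycenter_apply (𝕜 := ℝ) (X := Fin (m + 1 + 1)) i
      refine this.trans ?_
      simp [Fintype.card_fin]; ring
    simp only [hb, Finset.sum_sub_distrib, Finset.sum_const, Finset.card_univ, Fintype.card_fin,
      ← Finset.smul_sum, smul_sub]
    congr 1
    rw [← Nat.cast_smul_eq_nsmul ℝ, smul_smul]
    push_cast
    rw [inv_mul_cancel₀ hm.ne', one_smul]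
  rw [dist_eq_norm, e, norm_smul, Fin.sum_univ_succAbove _ j, sub_self, zero_add]
  have : ‖∑ i : Fin (m + 1), (v j - v (j.succAbove i))‖ ≤ (m + 1) * δ := by
    refine (norm_sum_le_of_le (f := fun i : Fin (m + 1) => v j - v (j.succAbove i))
      (n := fun _ => δ) Finset.univ fun i _ => ?_).trans ?_
    · rw [← dist_eq_norm]; exact h _ _
    · simp
  rw [Real.norm_of_nonneg (by positivity)]
  calc _ ≤ (m + 2 : ℝ)⁻¹ * ((m + 1) * δ) := by gcongr
    _ = _ := by field_simp

lemma smallAff_Sd (hC : Convex ℝ C) (m : ℕ) (v : Fin (m + 1) → C) (δ : ℝ) (hδ : 0 ≤ δ)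
    (h : ∀ i j, dist (v i) (v j) ≤ δ) :
    mp (aff hC v) (Sd K m) ∈
      smallAff K hC (Set.range fun i => (v i : E)) m ((m : ℝ) / (m + 1) * δ) := by
  induction m with
  | zero =>
    refine Submodule.subset_span ⟨v, fun i => subset_convexHull _ _ ⟨i, rfl⟩, fun i j => ?_, ?_⟩
    · rw [show i = j from Fin.ext (by omega)]; simp
    · simp [Sd, iot]
  | succ m ih =>
    rw [Sd_succ, mp_aff_cone, mp_nat, ← mp_bdry, iot, mp_sg, ContinuousMap.comp_id, bdry_sg]
    simp only [map_sum, map_smul, nat_sg, faceOf, aff_face]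
    refine Submodule.sum_mem _ fun i _ => Submodule.smul_mem _ _ ?_
    have := ih (v ∘ i.succAbove) (fun a b => h _ _)
    refine span_map _ ?_ this
    rintro _ ⟨w, hw1, hw2, rfl⟩
    simp only [cone, lin_sg, coneS_aff]
    have hw1' : ∀ i, (w i : E) ∈ convexHull ℝ (Set.range fun i => (v i : E)) := fun a =>
      convexHull_mono (by rintro _ ⟨b, rfl⟩; exact ⟨_, rfl⟩) (hw1 a)
    have hb : (aff hC v stdSimplex.barycenter : E) ∈ convexHull ℝ (Set.range fun i => (v i : E)) := by
      rw [aff_val]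
      exact (convex_convexHull ℝ _).sum_mem (fun i _ => (stdSimplex.barycenter : Δ (m + 1)).2.1 i)
        (stdSimplex.barycenter : Δ (m + 1)).2.2 (fun i _ => subset_convexHull _ _ ⟨i, rfl⟩)
    have hd : ∀ a, dist (w a : E) (aff hC v stdSimplex.barycenter : E) ≤
        ((m + 1 : ℕ) : ℝ) / ((m + 1 : ℕ) + 1) * δ := by
      intro a
      have : convexHull ℝ (Set.range fun i => (v i : E)) ⊆
          Metric.closedBall (aff hC v stdSimplex.barycenter : E)
            (((m + 1 : ℕ) : ℝ) / ((m + 1 : ℕ) + 1) * δ) := by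
        refine convexHull_min ?_ (convex_closedBall _ _)
        rintro _ ⟨j, rfl⟩
        rw [Metric.mem_closedBall, aff_val]
        have := dist_bary (fun i => (v i : E)) (δ := δ) (fun a b => h a b) j
        refine this.trans (le_of_eq ?_)
        push_cast; congr 2; ring
      exact this (hw1' a)
    refine Submodule.subset_span ⟨_, ?_, ?_, rfl⟩
    · intro a
      refine Fin.cases ?_ (fun a => ?_) a
      · exact hb
      · exact hw1' a
    · intro a b
      refine Fin.cases ?_ (fun a => ?_) a <;> refine Fin.cases ?_ (fun b => ?_) b
      · simp only [Fin.cons_zero, dist_self]; positivity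
      · rw [Fin.cons_zero, Fin.cons_succ, dist_comm]; exact hd b
      · rw [Fin.cons_zero, Fin.cons_succ]; exact hd a
      · rw [Fin.cons_succ, Fin.cons_succ]
        refine (hw2 a b).trans ?_
        gcongr ?_ * _
        rw [div_le_div_iff₀ (by positivity) (by positivity)]
        push_cast; nlinarith

end affine

/-- iterated subdivision -/
def SdI (K : Type) [CommRing K] (s k : ℕ) : SChain K (Δ k) k := (nat (Sd K k))^[s] (iot K k)

lemma nat_SdI (s k : ℕ) (c : SChain K X k) : nat (SdI K s k) c = (nat (Sd K k))^[s] c := by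
  induction s with
  | zero => simp [SdI, nat_iot]
  | succ s ih =>
    rw [SdI, Function.iterate_succ_apply', ← nat_nat, Function.iterate_succ_apply', ← ih]; rfl

lemma SdI_succ (s k : ℕ) : SdI K (s + 1) k = nat (Sd K k) (SdI K s k) := by
  simp [SdI, Function.iterate_succ_apply']

lemma SdI_zero (s : ℕ) : SdI K s 0 = iot K 0 := by
  induction s with
  | zero => rfl
  | succ s ih => rw [SdI_succ, ih, Sd, nat_iot]

lemma bdry_SdI (s k : ℕ) :
    bdry K _ k (SdI K s (k + 1)) = nat (SdI K s k) (bdry K _ k (iot K (k + 1))) := by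
  induction s with
  | zero => simp [SdI, nat_iot]
  | succ s ih =>
    rw [SdI_succ, bdry_nat, bdry_Sd, ← nat_bdry, ih, nat_nat, SdI_succ]

lemma SdI_spec (s : ℕ) (c : SChain K X (k + 1)) :
    nat (SdI K s (k + 1)) c - c = bdry K X (k + 1) (nat (amT (SdI K s) (k + 1)) c) +
      nat (amT (SdI K s) k) (bdry K X k c) :=
  amT_spec (SdI_zero s) (bdry_SdI s) k c

lemma SdI_small (s k : ℕ) : SdI K s k ∈ smallAff K (convex_stdSimplex ℝ (Fin (k + 1)))
    Set.univ k (((k : ℝ) / (k + 1)) ^ s) := by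
  induction s with
  | zero =>
    refine Submodule.subset_span ⟨stdSimplex.vertex, by simp, fun i j => ?_, ?_⟩
    · rw [Subtype.dist_eq, dist_pi_le_iff (by simp)]
      intro l
      rw [pow_zero]
      have h : ∀ i : Fin (k + 1), (stdSimplex.vertex (S := ℝ) i).1 l ∈ Set.Icc (0 : ℝ) 1 := fun i =>
        ⟨(stdSimplex.vertex i).2.1 l, by
          rw [← (stdSimplex.vertex (S := ℝ) i).2.2]
          exact Finset.single_le_sum (fun a _ => (stdSimplex.vertex i).2.1 a) (Finset.mem_univ l)⟩
      have := Real.dist_le_of_mem_Icc_01 (h i) (h j)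
      exact this
    · rw [SdI, Function.iterate_zero, id, iot]
      congr 1
      ext1 x
      apply Subtype.ext
      funext j
      rw [aff_val]
      simp [Finset.sum_apply, Pi.single_apply]
  | succ s ih =>
    rw [SdI_succ]
    refine span_map _ ?_ ih
    rintro _ ⟨w, -, hw, rfl⟩
    simp only [nat_sg]
    have := smallAff_Sd (K := K) (convex_stdSimplex ℝ (Fin (k + 1))) k w _ (by positivity) hw
    rw [pow_succ']
    refine Submodule.span_mono ?_ this
    rintro _ ⟨w, -, h2, rfl⟩
    exact ⟨w, by simp, h2, rfl⟩

lemma small_sg {U V : Set X} (hU : IsOpen U) (hV : IsOpen V) (σ : SSimplex X k)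
    (hσ : Set.range σ ⊆ U ∪ V) :
    ∃ s, nat (SdI K s k) (sg K σ) ∈ chainsIn K X U k ⊔ chainsIn K X V k := by
  obtain ⟨δ, hδ, h⟩ := lebesgue_number_lemma_of_metric (s := (Set.univ : Set (Δ k)))
    (c := fun b : Bool => σ ⁻¹' (bif b then U else V)) isCompact_univ
    (fun b => by cases b <;> simp [hU.preimage σ.continuous, hV.preimage σ.continuous])
    (fun x _ => by
      rcases hσ ⟨x, rfl⟩ with h | h
      · exact Set.mem_iUnion.2 ⟨true, h⟩
      · exact Set.mem_iUnion.2 ⟨false, h⟩)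
  have hk : (k : ℝ) / (k + 1) < 1 := by rw [div_lt_one (by positivity)]; linarith
  obtain ⟨s, hs⟩ := exists_pow_lt_of_lt_one hδ hk
  refine ⟨s, ?_⟩
  rw [nat_sg]
  refine span_map _ ?_ (SdI_small (K := K) s k)
  rintro _ ⟨w, -, hw, rfl⟩
  simp only [mp_sg]
  obtain ⟨b, hb⟩ := h (w 0) trivial
  have hr : ∀ x, aff (convex_stdSimplex ℝ (Fin (k + 1))) w x ∈ Metric.ball (w 0) δ := by
    intro x
    have : (aff (convex_stdSimplex ℝ (Fin (k + 1))) w x).1 ∈ Metric.ball (w 0).1 δ := by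
      rw [aff_val]
      exact (convex_ball _ _).sum_mem (fun i _ => x.2.1 i) x.2.2
        (fun i _ => (hw i 0).trans_lt hs)
    exact this
  cases b
  · refine Submodule.mem_sup_right (sg_mem ?_)
    rintro _ ⟨x, rfl⟩
    exact hb (hr x)
  · refine Submodule.mem_sup_left (sg_mem ?_)
    rintro _ ⟨x, rfl⟩
    exact hb (hr x)

lemma nat_mem_sup {a : SChain K (Δ k) m} {U V : Set X} {c : SChain K X k}
    (h : c ∈ chainsIn K X U k ⊔ chainsIn K X V k) :
    nat a c ∈ chainsIn K X U m ⊔ chainsIn K X V m := by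
  obtain ⟨x, hx, y, hy, rfl⟩ := Submodule.mem_sup.1 h
  rw [map_add]
  exact Submodule.add_mem_sup (nat_mem hx) (nat_mem hy)

lemma small {U V : Set X} (hU : IsOpen U) (hV : IsOpen V) {c : SChain K X k}
    (hc : c ∈ chainsIn K X (U ∪ V) k) :
    ∃ r, ∀ s ≥ r, nat (SdI K s k) c ∈ chainsIn K X U k ⊔ chainsIn K X V k := by
  have step : ∀ (c : SChain K X k) s t, s ≤ t →
      nat (SdI K s k) c ∈ chainsIn K X U k ⊔ chainsIn K X V k →
      nat (SdI K t k) c ∈ chainsIn K X U k ⊔ chainsIn K X V k := by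
    intro c s t hst h
    obtain ⟨u, rfl⟩ := Nat.exists_eq_add_of_le' hst
    rw [nat_SdI, Function.iterate_add_apply, ← nat_SdI, ← nat_SdI]
    exact nat_mem_sup h
  rw [chainsIn_eq_span] at hc
  induction hc using Submodule.span_induction with
  | mem x h =>
    obtain ⟨σ, hσ, rfl⟩ := h
    obtain ⟨s, hs⟩ := small_sg (K := K) hU hV σ hσ
    exact ⟨s, fun t ht => step _ s t ht hs⟩
  | zero => exact ⟨0, fun s _ => by simp⟩
  | add a b _ _ ha hb =>
    obtain ⟨r, hr⟩ := ha
    obtain ⟨t, ht⟩ := hb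
    refine ⟨max r t, fun s hs => ?_⟩
    rw [map_add]
    exact add_mem (hr s (le_of_max_le_left hs)) (ht s (le_of_max_le_right hs))
  | smul a x _ hx =>
    obtain ⟨r, hr⟩ := hx
    exact ⟨r, fun s hs => by rw [map_smul]; exact Submodule.smul_mem _ _ (hr s hs)⟩

end sub
end BddCoh

end


noncomputable section
namespace BddCoh

section mv
variable {K : Type} [CommRing K] {X Y : Type} [TopologicalSpace X] [TopologicalSpace Y]
  {n m k : ℕ}

lemma mem_relB {A : Set X} {v : SChain K X (k + 1)} : v ∈ relBdries K X A k ↔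
    ∃ a, ∃ u ∈ chainsIn K X A (k + 1), bdry K X (k + 1) a + u = v := by
  rw [relBdries, Submodule.mem_sup]
  constructor
  · rintro ⟨_, ⟨a, rfl⟩, u, hu, rfl⟩; exact ⟨a, u, hu, rfl⟩
  · rintro ⟨a, u, hu, rfl⟩; exact ⟨_, ⟨a, rfl⟩, u, hu, rfl⟩

lemma mem_relC {A : Set X} {v : SChain K X (k + 1)} : v ∈ relCycles K X A k ↔
    bdry K X k v ∈ chainsIn K X A k := Iff.rfl

lemma relB_mono {A B : Set X} (h : A ⊆ B) : relBdries K X A k ≤ relBdries K X B k :=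
  sup_le_sup_left (chainsIn_mono h) _

lemma relC_mono {A B : Set X} (h : A ⊆ B) : relCycles K X A k ≤ relCycles K X B k :=
  Submodule.comap_mono (chainsIn_mono h)

lemma bdry_mem_relB {A : Set X} (a : SChain K X (k + 2)) :
    bdry K X (k + 1) a ∈ relBdries K X A k := Submodule.mem_sup_left ⟨a, rfl⟩

lemma mem_relB_of_mem {A : Set X} {v : SChain K X (k + 1)} (h : v ∈ chainsIn K X A (k + 1)) :
    v ∈ relBdries K X A k := Submodule.mem_sup_right h

lemma relB_le_relC {A : Set X} : relBdries K X A k ≤ relCycles K X A k := by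
  intro v hv
  obtain ⟨a, u, hu, rfl⟩ := mem_relB.1 hv
  rw [mem_relC, map_add, bdry_bdry, zero_add]
  exact bdry_mem hu

lemma SdI_relB {A : Set X} {v : SChain K X (k + 1)} (hv : v ∈ relCycles K X A k) (s : ℕ)
    (h : nat (SdI K s (k + 1)) v ∈ relBdries K X A k) : v ∈ relBdries K X A k := by
  have e : v = nat (SdI K s (k + 1)) v - (bdry K X (k + 1) (nat (amT (SdI K s) (k + 1)) v) +
      nat (amT (SdI K s) k) (bdry K X k v)) := by rw [← SdI_spec]; abel
  rw [e]
  exact sub_mem h (add_mem (bdry_mem_relB _) (mem_relB_of_mem (nat_mem hv)))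

lemma SdI_bdry (s : ℕ) (c : SChain K X (k + 1)) :
    bdry K X k (nat (SdI K s (k + 1)) c) = nat (SdI K s k) (bdry K X k c) := by
  rw [bdry_nat, bdry_SdI, ← nat_bdry]

lemma mv_rel {U V : Set X} (hU : IsOpen U) (hV : IsOpen V) {v : SChain K X (k + 1)}
    (h1 : v ∈ relBdries K X U k) (h2 : v ∈ relBdries K X V k)
    (hZ : relCycles K X (U ∪ V) (k + 1) ≤ relBdries K X (U ∪ V) (k + 1)) :
    v ∈ relBdries K X (U ∩ V) k := by
  have hc : v ∈ relCycles K X (U ∩ V) k := chainsIn_inter (relB_le_relC h1) (relB_le_relC h2)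
  obtain ⟨a, u, hu, hau⟩ := mem_relB.1 h1
  obtain ⟨b, w, hw, hbw⟩ := mem_relB.1 h2
  have hab : a - b ∈ relCycles K X (U ∪ V) (k + 1) := by
    rw [mem_relC, map_sub, show bdry K X (k + 1) a - bdry K X (k + 1) b = w - u by
      rw [eq_sub_of_add_eq hau, eq_sub_of_add_eq hbw]; abel]
    exact sub_mem (chainsIn_mono Set.subset_union_right hw) (chainsIn_mono Set.subset_union_left hu)
  obtain ⟨e, x, hx, hex⟩ := mem_relB.1 (hZ hab)
  obtain ⟨s, hs⟩ := small hU hV hx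
  obtain ⟨x1, hx1, x2, hx2, hxx⟩ := Submodule.mem_sup.1 (hs s le_rfl)
  refine SdI_relB hc s ?_
  have key : nat (SdI K s (k + 1)) u + bdry K X (k + 1) x1 =
      nat (SdI K s (k + 1)) w - bdry K X (k + 1) x2 := by
    have : bdry K X (k + 1) x1 + bdry K X (k + 1) x2 = nat (SdI K s (k + 1)) (w - u) := by
      rw [← map_add, hxx, SdI_bdry, eq_sub_of_add_eq' hex, map_sub, bdry_bdry, sub_zero, map_sub,
        eq_sub_of_add_eq hau, eq_sub_of_add_eq hbw]
      congr 1; abel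
    rw [map_sub] at this
    rw [eq_sub_iff_add_eq, add_assoc, this]; abel
  refine mem_relB.2 ⟨nat (SdI K s (k + 2)) a - x1, nat (SdI K s (k + 1)) u + bdry K X (k + 1) x1,
    chainsIn_inter (add_mem (nat_mem hu) (bdry_mem hx1)) ?_, ?_⟩
  · rw [key]; exact sub_mem (nat_mem hw) (bdry_mem hx2)
  · rw [map_sub, SdI_bdry, ← hau, map_add]; abel

/-- vanishing of relative homology above degree `N` -/
def van (K : Type) [CommRing K] {X : Type} [TopologicalSpace X] (N : ℕ) (A : Set X) : Prop :=
  ∀ j ≥ N, relCycles K X Aᶜ j ≤ relBdries K X Aᶜ j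

lemma van_union2 {N : ℕ} {A B : Set X} (hA : IsClosed A) (hB : IsClosed B) (h1 : van K N A)
    (h2 : van K N B) (h3 : van K N (A ∩ B)) : van K N (A ∪ B) := by
  intro j hj v hv
  rw [Set.compl_union] at hv ⊢
  refine mv_rel hA.isOpen_compl hB.isOpen_compl
    (h1 j hj (relC_mono Set.inter_subset_left hv)) (h2 j hj (relC_mono Set.inter_subset_right hv)) ?_
  rw [← Set.compl_inter]
  exact h3 (j + 1) (by omega)

lemma van_empty {N : ℕ} : van K N (∅ : Set X) := fun j _ v _ => by
  rw [Set.compl_empty]; exact mem_relB_of_mem (chainsIn_univ v)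

lemma van_biUnion {N : ℕ} {P : Set X → Prop} (hcl : ∀ A, P A → IsClosed A)
    (hv : ∀ A, P A → van K N A) (hi : ∀ A B, P A → P B → P (A ∩ B)) {ι : Type} (S : Finset ι) :
    ∀ A : ι → Set X, (∀ i ∈ S, P (A i)) → van K N (⋃ i ∈ S, A i) := by
  classical
  induction S using Finset.induction_on with
  | empty => intro A _; simpa using van_empty
  | insert i S _ ih =>
    intro A hA
    rw [Finset.set_biUnion_insert]
    have hS : ∀ j ∈ S, P (A j) := fun j hj => hA j (Finset.mem_insert_of_mem hj)
    have hi' := hA i (Finset.mem_insert_self _ _)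
    refine van_union2 (hcl _ hi') ?_ (hv _ hi') (ih A hS) ?_
    · exact isClosed_biUnion_finset fun j hj => hcl _ (hS j hj)
    · rw [Set.inter_iUnion₂]
      exact ih (fun j => A i ∩ A j) fun j hj => hi _ _ hi' (hS j hj)

lemma van_limit [T2Space X] {N : ℕ} {A : Set X}
    (h : ∀ O, IsOpen O → A ⊆ O → ∃ F, A ⊆ F ∧ F ⊆ O ∧ van K N F) : van K N A := by
  intro j hj v hv
  obtain ⟨B, hB1, hB2, hB3⟩ := chain_compact' hv
  obtain ⟨F, hF1, hF2, hF3⟩ := h Bᶜ hB2.isClosed.isOpen_compl (Set.subset_compl_comm.1 hB1)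
  exact relB_mono (Set.compl_subset_compl.2 hF1)
    (hF3 j hj (chainsIn_mono (Set.subset_compl_comm.1 hF2) hB3))

lemma lift_bdry {e : C(X, Y)} (he : Topology.IsEmbedding e) {A : Set X} {y : SChain K X (k + 1)}
    (h : bdry K Y k (mp e y) ∈ chainsIn K Y (e '' A) k) : bdry K X k y ∈ chainsIn K X A k := by
  obtain ⟨c, hc, hcy⟩ := chain_lift he h
  rw [mp_bdry] at hcy
  rwa [← mp_injective he.injective hcy]

/-- excision: relative cycles come from open neighbourhoods -/
lemma excise {e : C(X, Y)} (he : Topology.IsOpenEmbedding e) {A : Set X} (hA : IsClosed (e '' A))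
    {v : SChain K Y (k + 1)} (hv : v ∈ relCycles K Y (e '' A)ᶜ k) :
    ∃ y ∈ relCycles K X Aᶜ k, v - mp e y ∈ relBdries K Y (e '' A)ᶜ k := by
  have hcov : Set.range e ∪ (e '' A)ᶜ = Set.univ := by
    rw [Set.eq_univ_iff_forall]
    intro x
    by_cases hx : x ∈ e '' A
    · exact Or.inl (Set.image_subset_range _ _ hx)
    · exact Or.inr hx
  obtain ⟨s, hs⟩ := small (U := Set.range e) (V := (e '' A)ᶜ) he.isOpen_range hA.isOpen_compl
    (c := v) (by rw [hcov]; exact chainsIn_univ v)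
  obtain ⟨x1, hx1, x2, hx2, hxx⟩ := Submodule.mem_sup.1 (hs s le_rfl)
  rw [← Set.image_univ] at hx1
  obtain ⟨y, -, rfl⟩ := chain_lift he.isEmbedding hx1
  have hy : bdry K Y k (mp e y) ∈ chainsIn K Y (e '' A)ᶜ k := by
    have : bdry K Y k (mp e y) = nat (SdI K s k) (bdry K Y k v) - bdry K Y k x2 := by
      rw [← SdI_bdry, ← hxx, map_add]; abel
    rw [this]
    exact sub_mem (nat_mem hv) (bdry_mem hx2)
  refine ⟨y, ?_, ?_⟩
  · refine lift_bdry (A := Aᶜ) he.isEmbedding ?_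
    have h2 : bdry K Y k (mp e y) ∈ chainsIn K Y (Set.range e) k := by
      rw [mp_bdry]
      exact mp_mem (A := Set.univ) (fun x _ => Set.mem_range_self x) (chainsIn_univ _)
    refine chainsIn_mono ?_ (chainsIn_inter hy h2)
    rintro _ ⟨h1, ⟨x, rfl⟩⟩
    have hxA : x ∈ Aᶜ := fun hx => h1 (Set.mem_image_of_mem _ hx)
    exact Set.mem_image_of_mem _ hxA
  · refine SdI_relB (sub_mem hv hy) s ?_
    rw [map_sub, ← hxx]
    have := SdI_spec s (mp e y)
    rw [show mp e y + x2 - nat (SdI K s (k + 1)) (mp e y) =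
      x2 - (nat (SdI K s (k + 1)) (mp e y) - mp e y) by abel, this]
    exact sub_mem (mem_relB_of_mem hx2) (add_mem (bdry_mem_relB _) (mem_relB_of_mem (nat_mem hy)))

lemma mp_relB {e : C(X, Y)} {A : Set X} {B : Set Y} (h : Set.MapsTo e A B)
    {v : SChain K X (k + 1)} (hv : v ∈ relBdries K X A k) : mp e v ∈ relBdries K Y B k := by
  obtain ⟨a, u, hu, rfl⟩ := mem_relB.1 hv
  rw [map_add, ← mp_bdry]
  exact add_mem (bdry_mem_relB _) (mem_relB_of_mem (mp_mem h hu))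

lemma mp_relC {e : C(X, Y)} {A : Set X} {B : Set Y} (h : Set.MapsTo e A B)
    {v : SChain K X (k + 1)} (hv : v ∈ relCycles K X A k) : mp e v ∈ relCycles K Y B k := by
  rw [mem_relC, mp_bdry]
  exact mp_mem h hv

lemma van_image [T2Space Y] {N : ℕ} {e : C(X, Y)} (he : Topology.IsOpenEmbedding e) {A : Set X}
    (hA : IsCompact A) (h : van K N A) : van K N (e '' A) := by
  intro j hj v hv
  obtain ⟨y, hy, hvy⟩ := excise he (hA.image e.continuous).isClosed hv
  have := mp_relB (e := e) (B := (e '' A)ᶜ) (fun x hx => by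
    rintro ⟨z, hz, hzx⟩
    exact hx (he.injective hzx ▸ hz)) (h j hj hy)
  simpa using add_mem hvy this

/-! absolute acyclicity -/

/-- absolute vanishing in one degree -/
def acyc (K : Type) [CommRing K] {X : Type} [TopologicalSpace X] (A : Set X) : ℕ → Prop
  | 0 => ∀ c ∈ chainsIn K X A 0, ∃ b ∈ chainsIn K X A 1, bdry K X 0 b = c
  | j + 1 => ∀ c ∈ chainsIn K X A (j + 1), bdry K X j c = 0 →
      ∃ b ∈ chainsIn K X A (j + 2), bdry K X (j + 1) b = c

lemma acyc_empty (j : ℕ) : acyc K (∅ : Set X) j := by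
  cases j with
  | zero => intro c hc; exact ⟨0, zero_mem _, by rw [chainsIn_empty hc, map_zero]⟩
  | succ j => intro c hc _; exact ⟨0, zero_mem _, by rw [chainsIn_empty hc, map_zero]⟩

lemma acyc_bdry {A : Set X} {j : ℕ} (h : acyc K A j) {x : SChain K X (j + 1)}
    (hx : bdry K X j x ∈ chainsIn K X A j) :
    ∃ y ∈ chainsIn K X A (j + 1), bdry K X j y = bdry K X j x := by
  cases j with
  | zero => exact h _ hx
  | succ j => exact h _ hx (bdry_bdry _)

lemma mv_abs {U V : Set X} (hU : IsOpen U) (hV : IsOpen V) {j : ℕ} (h1 : acyc K U (j + 1))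
    (h2 : acyc K V (j + 1)) (h3 : acyc K (U ∩ V) j) : acyc K (U ∪ V) (j + 1) := by
  intro c hc hcyc
  obtain ⟨s, hs⟩ := small hU hV hc
  obtain ⟨x1, hx1, x2, hx2, hxx⟩ := Submodule.mem_sup.1 (hs s le_rfl)
  have e : bdry K X j x1 = - bdry K X j x2 := by
    rw [eq_neg_iff_add_eq_zero, ← map_add, hxx, SdI_bdry, hcyc, map_zero]
  obtain ⟨y, hy, hyx⟩ := acyc_bdry h3 (x := x1)
    (chainsIn_inter (bdry_mem hx1) (by rw [e]; exact neg_mem (bdry_mem hx2)))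
  obtain ⟨b1, hb1, hb1'⟩ := h1 (x1 - y) (sub_mem hx1 (chainsIn_mono Set.inter_subset_left hy))
    (by rw [map_sub, hyx, sub_self])
  obtain ⟨b2, hb2, hb2'⟩ := h2 (x2 + y) (add_mem hx2 (chainsIn_mono Set.inter_subset_right hy))
    (by rw [map_add, hyx, e]; abel)
  refine ⟨b1 + b2 - nat (amT (SdI K s) (j + 1)) c, sub_mem (add_mem
    (chainsIn_mono Set.subset_union_left hb1) (chainsIn_mono Set.subset_union_right hb2))
    (nat_mem hc), ?_⟩
  have := SdI_spec s c
  rw [hcyc, map_zero, add_zero] at this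
  rw [map_sub, map_add, hb1', hb2', ← this, ← hxx]; abel

lemma acyc_convex {E : Type} [AddCommGroup E] [Module ℝ E] [TopologicalSpace E]
    [IsTopologicalAddGroup E] [ContinuousSMul ℝ E] {C : Set E} (hC : Convex ℝ C) (j : ℕ) :
    acyc K C (j + 1) := by
  rcases C.eq_empty_or_nonempty with rfl | ⟨p, hp⟩
  · exact acyc_empty _
  intro c hc h
  exact ⟨cone (Ctr.lin p) (j + 1) c, cone_mem _ (Ctr.lin_mem hC hp) hc, bdry_cone_eq _ h⟩

lemma acyc_box {q : ℕ} {a b : Fin q → ℝ} (hab : a ≤ b) (r : ℕ) :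
    ∀ C : Set (Fin q → ℝ), Convex ℝ C → IsOpen C → ∀ j ≥ r,
      acyc K (C ∩ {x | ∃ s : Fin q, (s : ℕ) < r ∧ (x s < a s ∨ b s < x s)}) j := by
  induction r with
  | zero => intro C _ _ j _; simpa using acyc_empty j
  | succ r ih =>
    intro C hC hCo j hj
    obtain ⟨j, rfl⟩ : ∃ i, j = i + 1 := ⟨j - 1, by omega⟩
    have opn : ∀ t, IsOpen {x : Fin q → ℝ | ∃ s : Fin q, (s : ℕ) < t ∧ (x s < a s ∨ b s < x s)} := by
      intro t
      simp only [Set.ofPred_exists]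
      refine isOpen_iUnion fun s => ?_
      refine IsOpen.inter isOpen_const (IsOpen.union ?_ ?_)
      · exact isOpen_lt (continuous_apply s) continuous_const
      · exact isOpen_lt continuous_const (continuous_apply s)
    by_cases hr : r < q
    · let s : Fin q := ⟨r, hr⟩
      have c1 : Convex ℝ {x : Fin q → ℝ | x s < a s} :=
        convex_halfSpace_lt (IsLinearMap.mk (fun _ _ => rfl) fun _ _ => rfl) _
      have c2 : Convex ℝ {x : Fin q → ℝ | b s < x s} :=
        convex_halfSpace_gt (IsLinearMap.mk (fun _ _ => rfl) fun _ _ => rfl) _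
      have o1 : IsOpen {x : Fin q → ℝ | x s < a s} := isOpen_lt (continuous_apply s) continuous_const
      have o2 : IsOpen {x : Fin q → ℝ | b s < x s} := isOpen_lt continuous_const (continuous_apply s)
      have step1 := mv_abs (K := K) (j := j) (hCo.inter (opn r)) (hCo.inter o1)
        (ih C hC hCo _ (by omega)) (acyc_convex (hC.inter c1) j) (by
          have := ih _ (hC.inter c1) (hCo.inter o1) j (by omega)
          convert this using 1
          ext x
          exact ⟨fun ⟨⟨h1, h2⟩, _, h3⟩ => ⟨⟨h1, h3⟩, h2⟩, fun ⟨⟨h1, h3⟩, h2⟩ => ⟨⟨h1, h2⟩, h1, h3⟩⟩)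
      have step2 := mv_abs (K := K) (j := j) ((hCo.inter (opn r)).union (hCo.inter o1))
        (hCo.inter o2) step1 (acyc_convex (hC.inter c2) j) (by
          have := ih _ (hC.inter c2) (hCo.inter o2) j (by omega)
          convert this using 1
          ext x
          have := hab s
          simp only [Set.mem_inter_iff, Set.mem_union, Set.mem_ofPred_eq]
          constructor
          · rintro ⟨⟨h1, h2⟩ | ⟨h1, h2⟩, h3, h4⟩
            · exact ⟨⟨h1, h4⟩, h2⟩
            · linarith
          · rintro ⟨⟨h1, h4⟩, h2⟩; exact ⟨Or.inl ⟨h1, h2⟩, h1, h4⟩)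
      convert step2 using 1
      ext x
      simp only [Set.mem_inter_iff, Set.mem_union, Set.mem_ofPred_eq, ← and_or_left]
      refine and_congr_right fun _ => ?_
      constructor
      · rintro ⟨t, ht, h⟩
        rcases Nat.lt_succ_iff_lt_or_eq.1 ht with h' | h'
        · exact Or.inl (Or.inl ⟨t, h', h⟩)
        · obtain rfl : t = s := Fin.ext h'
          rw [or_assoc]; exact Or.inr h
      · rintro ((⟨t, ht, h⟩ | h) | h)
        · exact ⟨t, by omega, h⟩
        · exact ⟨s, Nat.lt_succ_self r, Or.inl h⟩
        · exact ⟨s, Nat.lt_succ_self r, Or.inr h⟩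
    · have := ih C hC hCo (j + 1) (by omega)
      convert this using 3
      ext x
      refine exists_congr fun t => and_congr_left fun _ => ?_
      have := t.2; omega

lemma van_box {q : ℕ} (a b : Fin q → ℝ) : van K q (Set.Icc a b) := by
  by_cases hab : a ≤ b
  · intro j hj v hv
    have h := acyc_box (K := K) hab q Set.univ convex_univ isOpen_univ j hj
    have e : Set.univ ∩ {x | ∃ s : Fin q, (s : ℕ) < q ∧ (x s < a s ∨ b s < x s)} =
        (Set.Icc a b)ᶜ := by
      ext x
      simp only [Set.univ_inter, Set.mem_ofPred_eq, Set.mem_compl_iff, Set.mem_Icc, Pi.le_def,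
        ← forall_and, not_forall, not_and_or, not_le, Fin.is_lt, true_and]
    rw [e] at h
    obtain ⟨y, hy, hyv⟩ := acyc_bdry h hv
    have := bdry_cone_eq (Ctr.lin (0 : Fin q → ℝ)) (c := v - y) (by rw [map_sub, hyv, sub_self])
    exact mem_relB.2 ⟨_, y, hy, by rw [this]; abel⟩
  · rw [Set.Icc_eq_empty hab]; exact van_empty

lemma van_euclid {q : ℕ} {A : Set (Fin q → ℝ)} (hA : IsCompact A) : van K q A := by
  refine van_limit fun O hO hAO => ?_
  have : ∀ x ∈ A, ∃ ε > 0, Metric.closedBall x ε ⊆ O := fun x hx =>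
    Metric.nhds_basis_closedBall.mem_iff.1 (hO.mem_nhds (hAO hx))
  choose! ε hε hO' using this
  obtain ⟨t, ht, htA⟩ := hA.elim_nhds_subcover (fun x => Metric.closedBall x (ε x))
    (fun x hx => Metric.closedBall_mem_nhds x (hε x hx))
  refine ⟨_, htA, Set.iUnion₂_subset fun x hx => hO' x (ht x hx), ?_⟩
  refine van_biUnion (P := fun A => ∃ a b, A = Set.Icc a b) ?_ ?_ ?_ t _ ?_
  · rintro _ ⟨a, b, rfl⟩; exact isClosed_Icc
  · rintro _ ⟨a, b, rfl⟩; exact van_box a b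
  · rintro _ _ ⟨a, b, rfl⟩ ⟨c, d, rfl⟩; exact ⟨_, _, Set.Icc_inter_Icc⟩
  · intro x hx
    have := (hε x (ht x hx)).le
    refine ⟨fun i => x i - ε x, fun i => x i + ε x, ?_⟩
    rw [closedBall_pi _ this, ← Set.pi_univ_Icc]
    simp only [Real.closedBall_eq_Icc]

lemma van_mono {N N' : ℕ} (h : N ≤ N') {A : Set X} (hA : van K N A) : van K N' A :=
  fun j hj => hA j (h.trans hj)

lemma van_compact [T2Space X] {N : ℕ} {A : Set X} (hA : IsCompact A)
    (h : ∀ x ∈ A, ∃ q ≤ N, ∃ e : C(Fin q → ℝ, X), Topology.IsOpenEmbedding e ∧ x ∈ Set.range e) :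
    van K N A := by
  replace h : ∀ x : A, ∃ q ≤ N, ∃ e : C(Fin q → ℝ, X), Topology.IsOpenEmbedding e ∧
    x.1 ∈ Set.range e := fun x => h x x.2
  choose q hq e he hx using h
  obtain ⟨t, ht⟩ := hA.elim_finite_subcover (fun x : A => Set.range (e x))
    (fun x => (he x).isOpen_range) (fun x hxA => Set.mem_iUnion.2 ⟨⟨x, hxA⟩, hx ⟨x, hxA⟩⟩)
  obtain ⟨B, hB1, hB2, hAB⟩ := hA.finite_compact_cover t (fun x : A => Set.range (e x))
    (fun x _ => (he x).isOpen_range) ht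
  rw [hAB]
  refine van_biUnion (P := fun A => IsCompact A ∧ ∃ q ≤ N, ∃ e : C(Fin q → ℝ, X),
    Topology.IsOpenEmbedding e ∧ A ⊆ Set.range e) ?_ ?_ ?_ t _ ?_
  · intro A hA; exact hA.1.isClosed
  · rintro A ⟨hA, q, hq, e, he, hAe⟩
    have hc : IsCompact (e ⁻¹' A) := he.isInducing.isCompact_preimage' hA hAe
    have := van_image he hc (van_mono (K := K) hq (van_euclid hc))
    rwa [Set.image_preimage_eq_of_subset hAe] at this
  · rintro A B ⟨hA, q, hq, e, he, hAe⟩ ⟨hB, -⟩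
    exact ⟨hA.inter hB, q, hq, e, he, Set.inter_subset_left.trans hAe⟩
  · intro x _
    exact ⟨hB1 x, q x, hq x, e x, he x, hB2 x⟩

end mv
end BddCoh

end


noncomputable section
namespace BddCoh
open Topology

section inj
variable {K : Type} [CommRing K] {X Y : Type} [TopologicalSpace X] [TopologicalSpace Y] {k : ℕ}

lemma inj_union [T2Space X] {ι : Type} {O : Set X}
    (hO : ∀ x ∈ O, ∃ e : C(Fin (k + 1) → ℝ, X), IsOpenEmbedding e ∧ x ∈ Set.range e)
    {v : SChain K X (k + 1)} (S : Finset ι) (A : ι → Set X)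
    (hc : ∀ i, IsCompact (A i)) (hAO : ∀ i ∈ S, A i ⊆ O)
    (h : ∀ i ∈ S, v ∈ relBdries K X (A i)ᶜ k) :
    v ∈ relBdries K X (⋃ i ∈ S, A i)ᶜ k := by
  classical
  induction S using Finset.induction_on with
  | empty => simpa using mem_relB_of_mem (chainsIn_univ v)
  | insert i S _ ih =>
    rw [Finset.set_biUnion_insert, Set.compl_union]
    have hS := ih (fun j hj => hAO j (Finset.mem_insert_of_mem hj))
      (fun j hj => h j (Finset.mem_insert_of_mem hj))
    have hcS : IsCompact (⋃ j ∈ S, A j) := S.isCompact_biUnion fun j _ => hc j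
    refine mv_rel (hc i).isClosed.isOpen_compl hcS.isClosed.isOpen_compl
      (h i (Finset.mem_insert_self _ _)) hS ?_
    rw [← Set.compl_inter]
    refine van_compact (N := k + 1) ((hc i).inter hcS) (fun x hx => ?_) (k + 1) le_rfl
    obtain ⟨e, he, hxe⟩ := hO x (hAO i (Finset.mem_insert_self _ _) hx.1)
    exact ⟨k + 1, le_rfl, e, he, hxe⟩

lemma inj_compact [T2Space X] {O : Set X}
    (hO : ∀ x ∈ O, ∃ e : C(Fin (k + 1) → ℝ, X), IsOpenEmbedding e ∧ x ∈ Set.range e)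
    {A : Set X} (hA : IsCompact A) (hAO : A ⊆ O) {v : SChain K X (k + 1)}
    (h : ∀ x ∈ A, v ∈ relBdries K X {x}ᶜ k) : v ∈ relBdries K X Aᶜ k := by
  have : ∀ x : A, ∃ C : Set X, x.1 ∉ C ∧ IsClosed C ∧ v ∈ relBdries K X C k := by
    intro x
    obtain ⟨a, u, hu, rfl⟩ := mem_relB.1 (h x x.2)
    obtain ⟨C, hC1, hC2, hC3⟩ := chain_compact' hu
    exact ⟨C, fun hx => hC1 hx rfl, hC2.isClosed, mem_relB.2 ⟨a, u, hC3, rfl⟩⟩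
  choose C hx hC hv using this
  obtain ⟨t, ht⟩ := hA.elim_finite_subcover (fun x : A => (C x)ᶜ)
    (fun x => (hC x).isOpen_compl) (fun x hxA => Set.mem_iUnion.2 ⟨⟨x, hxA⟩, hx ⟨x, hxA⟩⟩)
  obtain ⟨B, hB1, hB2, hAB⟩ := hA.finite_compact_cover t (fun x : A => (C x)ᶜ)
    (fun x _ => (hC x).isOpen_compl) ht
  rw [hAB]
  refine inj_union hO t B hB1 (fun i hi => ?_) fun i _ => ?_
  · refine subset_trans ?_ hAO
    rw [hAB]
    exact Set.subset_biUnion_of_mem (u := B) hi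
  · exact relB_mono (Set.subset_compl_comm.1 (hB2 i)) (hv i)

lemma extH [T2Space X] {e : C(Y, X)} (he : IsOpenEmbedding e) {A : Set Y} (hA : IsCompact A)
    (F : C(Y × I, Y)) (hF : ∀ p ∉ A, ∀ t, F (p, t) = p) :
    ∃ G : C(X × I, X), (∀ p t, G (e p, t) = e (F (p, t))) ∧ ∀ x ∉ Set.range e, ∀ t, G (x, t) = x := by
  classical
  let g : X × I → X := fun z => if h : z.1 ∈ Set.range e then e (F (h.choose, z.2)) else z.1
  have g1 : ∀ p t, g (e p, t) = e (F (p, t)) := by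
    intro p t
    have h : e p ∈ Set.range e := ⟨p, rfl⟩
    simp only [g, dif_pos h]
    rw [he.injective h.choose_spec]
  have g2 : ∀ x ∉ Set.range e, ∀ t, g (x, t) = x := by
    intro x hx t
    simp only [g, dif_neg hx]
  have gc : Continuous g := by
    rw [continuous_iff_continuousAt]
    rintro ⟨x, t⟩
    by_cases hx : x ∈ Set.range e
    · obtain ⟨p, rfl⟩ := hx
      have ho : IsOpenEmbedding (Prod.map e (id : I → I)) := he.prodMap IsOpenEmbedding.id
      have : ContinuousAt (g ∘ Prod.map e id) (p, t) := by
        have : g ∘ Prod.map e id = e ∘ F := by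
          funext ⟨p, t⟩
          exact g1 p t
        rw [this]
        exact (e.continuous.comp F.continuous).continuousAt
      exact ho.continuousAt_iff.1 this
    · have hop : IsOpen (Prod.fst ⁻¹' (e '' A)ᶜ : Set (X × I)) :=
        (hA.image e.continuous).isClosed.isOpen_compl.preimage continuous_fst
      have hm : (x, t) ∈ (Prod.fst ⁻¹' (e '' A)ᶜ : Set (X × I)) := fun h =>
        hx (Set.image_subset_range _ _ h)
      refine ContinuousAt.congr (f := Prod.fst) continuous_fst.continuousAt ?_
      filter_upwards [hop.mem_nhds hm] with ⟨y, s⟩ hy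
      by_cases hy' : y ∈ Set.range e
      · obtain ⟨p, rfl⟩ := hy'
        rw [g1, hF p (fun hp => hy ⟨p, hp, rfl⟩)]
      · rw [g2 y hy']
  exact ⟨⟨g, gc⟩, g1, g2⟩

lemma move [T2Space X] {N : ℕ} {e : C(Fin N → ℝ, X)} (he : IsOpenEmbedding e) (a b : Fin N → ℝ)
    {v : SChain K X (k + 1)} (hv : bdry K X k v = 0)
    (h : v ∈ relBdries K X {e a}ᶜ k) : v ∈ relBdries K X {e b}ᶜ k := by
  by_cases hab : a = b
  · rwa [← hab]
  have hd : 0 < ‖b - a‖ := norm_pos_iff.2 (sub_ne_zero.2 (Ne.symm hab))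
  let l : (Fin N → ℝ) → ℝ := fun p => max 0 (1 - ‖p - a‖ / (2 * ‖b - a‖))
  have lc : Continuous l := by fun_prop
  let F : C((Fin N → ℝ) × I, Fin N → ℝ) := ⟨fun z => z.1 + (z.2.1 * l z.1) • (b - a), by fun_prop⟩
  obtain ⟨G, G1, G2⟩ := extH he (isCompact_closedBall a (2 * ‖b - a‖)) F (by
    intro p hp t
    have : l p = 0 := by
      refine max_eq_left ?_
      rw [Metric.mem_closedBall, dist_eq_norm, not_le] at hp
      rw [sub_nonpos, one_le_div (by positivity)]
      exact hp.le
    simp [F, this])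
  have key : ∀ p, F (p, 1) = b → p = a := by
    intro p hp
    have hp : p + l p • (b - a) = b := by simpa [F] using hp
    have hl1 : l p ≤ 1 := max_le zero_le_one (by
      have : 0 ≤ ‖p - a‖ / (2 * ‖b - a‖) := by positivity
      linarith)
    have e1 : p - a = (1 - l p) • (b - a) := by
      rw [sub_smul, one_smul, ← sub_eq_of_eq_add' hp.symm]; abel_nf
    have e2 : ‖p - a‖ = (1 - l p) * ‖b - a‖ := by
      rw [e1, norm_smul, Real.norm_of_nonneg (by linarith)]
    have e3 : l p = max 0 (1 - (1 - l p) / 2) := by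
      conv_lhs => simp only [l]
      rw [e2]
      congr 2
      field_simp
    rw [max_eq_right (by have : 0 ≤ l p := le_max_left _ _; linarith)] at e3
    have : l p = 1 := by linarith
    rw [this, sub_self, zero_smul, sub_eq_zero] at e1
    exact e1
  let f : C(X, X) := ⟨fun x => G (x, 1), by fun_prop⟩
  have hs := hop_spec (K := K) (f := ContinuousMap.id X) (g := f) G (fun x => by
    by_cases hx : x ∈ Set.range e
    · obtain ⟨p, rfl⟩ := hx
      rw [G1]; simp [F]
    · rw [G2 x hx]; rfl) (fun x => rfl) v
  rw [hv, map_zero, add_zero, mp_id] at hs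
  have h2 := mp_relB (e := f) (B := {e b}ᶜ) (by
    intro x hx hfx
    by_cases hxe : x ∈ Set.range e
    · obtain ⟨p, rfl⟩ := hxe
      have : e (F (p, 1)) = e b := by rw [← G1]; exact hfx
      exact hx (by rw [key p (he.injective this)]; rfl)
    · have : x = e b := by rw [← G2 x hxe 1]; exact hfx
      exact hxe ⟨b, this.symm⟩) h
  rw [show v = mp f v - bdry K X (k + 1) (hop G (k + 1) v) by rw [← hs]; abel]
  exact sub_mem h2 (bdry_mem_relB _)
end inj
end BddCoh

end


noncomputable section
namespace BddCoh
open Topology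

section mfd
variable {M : Type} [TopologicalSpace M] {B : Set M} {n : ℕ}

/-- half balls -/
def hb (c : Fin (n + 1) → ℝ) (r : ℝ) : Set (Fin (n + 1) → ℝ) := {y | y ∈ Metric.ball c r ∧ 0 ≤ y 0}

lemma mfd_chart (h : IsTopMfdWithBdry (n + 1) M B) (x : M) :
    ∃ (c : Fin (n + 1) → ℝ) (r : ℝ) (hc : c ∈ hb c r) (f : C(hb c r, M)), 0 < r ∧
      IsOpenEmbedding f ∧ f ⟨c, hc⟩ = x ∧ ∀ y, f y ∈ B ↔ y.1 0 = 0 := by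
  obtain ⟨U, V, e, hU, hV, hx, hB⟩ := h.2 x
  obtain ⟨O, hO, rfl⟩ := hV
  have hy : ∀ y : halfSpace (n + 1), 0 ≤ y.1 0 := fun y => y.2 0 rfl
  let c := (e ⟨x, hx⟩).1.1
  obtain ⟨r, hr, hrO⟩ := Metric.isOpen_iff.1 hO c (e ⟨x, hx⟩).2
  have hc : c ∈ hb c r := ⟨Metric.mem_ball_self hr, hy _⟩
  let j : hb c r → (Subtype.val ⁻¹' O : Set (halfSpace (n + 1))) := fun y =>
    ⟨⟨y.1, fun i hi => by rw [show i = 0 from Fin.ext hi]; exact y.2.2⟩, hrO y.2.1⟩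
  have jc : Continuous j := by
    refine Continuous.subtype_mk (Continuous.subtype_mk continuous_subtype_val _) _
  have je : IsOpenEmbedding j := by
    refine ⟨IsEmbedding.of_comp jc (continuous_subtype_val.comp continuous_subtype_val) ?_, ?_⟩
    · exact IsEmbedding.subtypeVal
    · have : Set.range j = (fun y => y.1.1) ⁻¹' (Metric.ball c r) := by
        ext y
        constructor
        · rintro ⟨z, rfl⟩; exact z.2.1
        · intro hy'; exact ⟨⟨y.1.1, hy', hy _⟩, rfl⟩
      rw [this]
      exact Metric.isOpen_ball.preimage (continuous_subtype_val.comp continuous_subtype_val)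
  have fe := hU.isOpenEmbedding_subtypeVal.comp (e.symm.isOpenEmbedding.comp je)
  refine ⟨c, r, hc, ⟨_, fe.continuous⟩, hr, fe, ?_, ?_⟩
  · change (e.symm (j ⟨c, hc⟩)).1 = x
    have : j ⟨c, hc⟩ = e ⟨x, hx⟩ := rfl
    rw [this, e.symm_apply_apply]
  · intro y
    change (e.symm (j y)).1 ∈ B ↔ _
    rw [← hB (e.symm (j y)), e.apply_symm_apply]
    constructor
    · intro h; exact h 0 rfl
    · intro h i hi; rw [show i = 0 from Fin.ext hi]; exact h

lemma ball_chart {c : Fin (n + 1) → ℝ} {r : ℝ} {f : C(hb c r, M)} (hf : IsOpenEmbedding f)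
    {c' : Fin (n + 1) → ℝ} {r' : ℝ} (hr' : 0 < r') (hs : Metric.ball c' r' ⊆ hb c r) :
    ∃ g : C(Fin (n + 1) → ℝ, M), IsOpenEmbedding g ∧
      (∀ y (hy : y ∈ Metric.ball c' r'), f ⟨y, hs hy⟩ ∈ Set.range g) ∧
      ∀ p, ∃ y, ∃ hy : y ∈ Metric.ball c' r', g p = f ⟨y, hs hy⟩ := by
  let u := OpenPartialHomeomorph.univBall (E := Fin (n + 1) → ℝ) c' r'
  have hu : ∀ p, u p ∈ Metric.ball c' r' := fun p => by
    rw [← OpenPartialHomeomorph.univBall_target c' hr']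
    exact u.map_source (by simp [u])
  have hur : Set.range u = Metric.ball c' r' := by
    rw [← OpenPartialHomeomorph.univBall_target c' hr', ← u.image_source_eq_target]
    simp [u]
  have ue : IsOpenEmbedding u := u.isOpenEmbedding (by simp [u])
  let j : (Fin (n + 1) → ℝ) → hb c r := fun p => ⟨u p, hs (hu p)⟩
  have jc : Continuous j := ue.continuous.subtype_mk _
  have je : IsOpenEmbedding j := by
    refine ⟨IsEmbedding.of_comp jc continuous_subtype_val ue.isEmbedding, ?_⟩
    have : Set.range j = Subtype.val ⁻¹' (Metric.ball c' r') := by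
      ext y
      constructor
      · rintro ⟨z, rfl⟩; exact hu z
      · intro hy
        rw [← hur] at hy
        obtain ⟨p, hp⟩ := hy
        exact ⟨p, Subtype.ext hp⟩
    rw [this]
    exact Metric.isOpen_ball.preimage continuous_subtype_val
  refine ⟨⟨_, (hf.comp je).continuous⟩, hf.comp je, fun y hy => ?_, fun p => ⟨u p, hu p, rfl⟩⟩
  rw [← hur] at hy
  obtain ⟨p, rfl⟩ := hy
  exact ⟨p, rfl⟩

lemma sub_ball {c y : Fin (n + 1) → ℝ} {r : ℝ} (hy : y ∈ Metric.ball c r) (h0 : 0 < y 0) :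
    ∃ r' > 0, Metric.ball y r' ⊆ hb c r ∧ ∀ z ∈ Metric.ball y r', 0 < z 0 := by
  have ho : IsOpen (Metric.ball c r ∩ {z | 0 < z 0}) :=
    Metric.isOpen_ball.inter (isOpen_lt continuous_const (continuous_apply 0))
  obtain ⟨r', hr', h⟩ := Metric.isOpen_iff.1 ho y ⟨hy, h0⟩
  exact ⟨r', hr', fun z hz => ⟨(h hz).1, (h hz).2.le⟩, fun z hz => (h hz).2⟩

lemma int_chart (h : IsTopMfdWithBdry (n + 1) M B) {x : M} (hx : x ∈ Bᶜ) :
    ∃ g : C(Fin (n + 1) → ℝ, M), IsOpenEmbedding g ∧ x ∈ Set.range g ∧ Set.range g ⊆ Bᶜ := by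
  obtain ⟨c, r, hc, f, hr, hf, rfl, hB⟩ := mfd_chart h x
  have h0 : 0 < c 0 := lt_of_le_of_ne hc.2 fun h => hx ((hB _).2 h.symm)
  obtain ⟨r', hr', hs, hpos⟩ := sub_ball hc.1 h0
  obtain ⟨g, hg, hg1, hg2⟩ := ball_chart hf hr' hs
  refine ⟨g, hg, hg1 c (Metric.mem_ball_self hr'), ?_⟩
  rintro _ ⟨p, rfl⟩ hp
  obtain ⟨y, hy, hgp⟩ := hg2 p
  rw [hgp, hB] at hp
  exact (hpos y hy).ne' hp

lemma hb_uniform {c : Fin (n + 1) → ℝ} {r : ℝ} {f : C(hb c r, M)} (hf : IsOpenEmbedding f)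
    (hB : ∀ y, f y ∈ B ↔ y.1 0 = 0) {P : M → Prop}
    (hP : ∀ g : C(Fin (n + 1) → ℝ, M), IsOpenEmbedding g → Set.range g ⊆ Bᶜ →
      ∀ a b, P (g a) → P (g b)) {y z : hb c r} (hy : f y ∉ B) (hz : f z ∉ B) :
    P (f y) → P (f z) := by
  have hcv : IsPreconnected (Metric.ball c r ∩ {z | 0 < z 0}) := by
    refine Convex.isPreconnected ?_
    exact (convex_ball c r).inter
      (convex_halfSpace_gt (IsLinearMap.mk (fun _ _ => rfl) fun _ _ => rfl) _)
  have h0 : ∀ y : hb c r, f y ∉ B → y.1 ∈ Metric.ball c r ∩ {z | 0 < z 0} := fun y hy =>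
    ⟨y.2.1, lt_of_le_of_ne y.2.2 fun h => hy ((hB _).2 h.symm)⟩
  have := hcv.induction₂' (fun a b => ∀ ha hb, P (f ⟨a, ha⟩) → P (f ⟨b, hb⟩)) ?_ ?_ (h0 y hy)
    (h0 z hz)
  · exact this y.2 z.2
  · rintro a ⟨ha, ha0⟩
    obtain ⟨r', hr', hs, hpos⟩ := sub_ball ha ha0
    obtain ⟨g, hg, hg1, hg2⟩ := ball_chart hf hr' hs
    have hgB : Set.range g ⊆ Bᶜ := by
      rintro _ ⟨p, rfl⟩ hp
      obtain ⟨y, hy, hgp⟩ := hg2 p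
      rw [hgp, hB] at hp
      exact (hpos y hy).ne' hp
    filter_upwards [mem_nhdsWithin_of_mem_nhds (Metric.ball_mem_nhds a hr')] with b hb
    obtain ⟨p, hp⟩ := hg1 a (Metric.mem_ball_self hr')
    obtain ⟨q, hq⟩ := hg1 b hb
    constructor
    · intro h1 h2; rw [← hp, ← hq]; exact hP g hg hgB _ _
    · intro h1 h2; rw [← hp, ← hq]; exact hP g hg hgB _ _
  · intro a b d ha hb hd h1 h2 h3 h4 h5
    exact h2 ⟨hb.1, hb.2.le⟩ h4 (h1 h3 ⟨hb.1, hb.2.le⟩ h5)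

lemma int_dense (h : IsTopMfdWithBdry (n + 1) M B) (x : M) : ∃ᶠ y in 𝓝 x, y ∉ B := by
  obtain ⟨c, r, hc, f, hr, hf, rfl, hB⟩ := mfd_chart h x
  let s : ℕ → Fin (n + 1) → ℝ := fun k => c + fun _ => r / 2 * (1 / ((k : ℝ) + 1))
  have hk : ∀ k : ℕ, 0 < 1 / ((k : ℝ) + 1) := fun k => by positivity
  have hk' : ∀ k : ℕ, 1 / ((k : ℝ) + 1) ≤ 1 := fun k => by
    rw [div_le_one (by positivity)]; linarith [(k.cast_nonneg : (0 : ℝ) ≤ k)]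
  have hs : ∀ k, s k ∈ hb c r := by
    intro k
    refine ⟨?_, add_nonneg hc.2 (by have := hk k; positivity)⟩
    rw [mem_ball_iff_norm]
    simp only [s, add_sub_cancel_left]
    rw [pi_norm_const, Real.norm_of_nonneg (by have := hk k; positivity)]
    nlinarith [hk k, hk' k]
  have ht : Filter.Tendsto (fun k => f ⟨s k, hs k⟩) Filter.atTop (𝓝 (f ⟨c, hc⟩)) := by
    refine (f.continuous.tendsto _).comp (tendsto_subtype_rng.2 ?_)
    have : Filter.Tendsto s Filter.atTop (𝓝 (c + fun _ => r / 2 * 0)) := by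
      refine tendsto_const_nhds.add (tendsto_pi_nhds.2 fun i => ?_)
      exact tendsto_const_nhds.mul tendsto_one_div_add_atTop_nhds_zero_nat
    convert this using 2
    ext i; simp
  refine ht.frequently (Filter.Frequently.of_forall fun k => ?_)
  rw [hB]
  have h1 := hk k
  have h2 := hc.2
  have : 0 < r / 2 * (1 / ((k : ℝ) + 1)) := by positivity
  change c 0 + r / 2 * (1 / ((k : ℝ) + 1)) ≠ 0
  linarith

lemma int_conn [PreconnectedSpace M] (h : IsTopMfdWithBdry (n + 1) M B) {P : M → Prop}
    (hP : ∀ g : C(Fin (n + 1) → ℝ, M), IsOpenEmbedding g → Set.range g ⊆ Bᶜ →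
      ∀ a b, P (g a) → P (g b)) {x y : M} (hx : x ∉ B) (hy : y ∉ B) (hPx : P x) : P y := by
  have loc : ∀ x : M, ∃ U ∈ 𝓝 x, IsOpen U ∧ ∀ a ∈ U, ∀ b ∈ U, a ∉ B → b ∉ B → P a → P b := by
    intro x
    obtain ⟨c, r, hc, f, hr, hf, rfl, hB⟩ := mfd_chart h x
    refine ⟨Set.range f, hf.isOpen_range.mem_nhds ⟨_, rfl⟩, hf.isOpen_range, ?_⟩
    rintro _ ⟨a, rfl⟩ _ ⟨b, rfl⟩ ha hb
    exact hb_uniform hf hB hP ha hb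
  have T : ∀ {x U}, U ∈ 𝓝 x → (∀ a ∈ U, ∀ b ∈ U, a ∉ B → b ∉ B → P a → P b) →
      ((∃ᶠ y in 𝓝 x, y ∉ B ∧ P y) ↔ ∃ y ∈ U, y ∉ B ∧ P y) := by
    intro x U hU hu
    constructor
    · intro hf
      obtain ⟨y, hy, hyU⟩ := (hf.and_eventually hU).exists
      exact ⟨y, hyU, hy⟩
    · rintro ⟨y, hyU, hyB, hyP⟩
      refine ((int_dense h x).and_eventually hU).mono ?_
      rintro z ⟨hz, hzU⟩
      exact ⟨hz, hu y hyU z hzU hyB hz hyP⟩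
  have key := isPreconnected_univ.induction₂ (α := M)
    (fun x x' => (∃ᶠ y in 𝓝 x, y ∉ B ∧ P y) ↔ ∃ᶠ y in 𝓝 x', y ∉ B ∧ P y) (by
      intro x _
      obtain ⟨U, hU, hUo, hu⟩ := loc x
      refine mem_nhdsWithin_of_mem_nhds (Filter.mem_of_superset hU fun x' hx' => ?_)
      exact (T hU hu).trans (T (hUo.mem_nhds hx') hu).symm)
    (fun _ _ _ _ _ _ h1 h2 => h1.trans h2) (fun _ _ _ _ h1 => h1.symm)
    (Set.mem_univ x) (Set.mem_univ y)
  obtain ⟨U, hU, -, hu⟩ := loc x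
  obtain ⟨U', hU', -, hu'⟩ := loc y
  rw [T hU hu, T hU' hu'] at key
  obtain ⟨z, hz, hzB, hzP⟩ := key.1 ⟨x, mem_of_mem_nhds hU, hx, hPx⟩
  exact hu' z hz y (mem_of_mem_nhds hU') hzB hy hzP

/-- deformations of `M` fixing `B` -/
def Defm (B : Set M) (F : C(M × I, M)) : Prop :=
  (∀ x, F (x, 0) = x) ∧ ∀ x ∈ B, ∀ t, F (x, t) = x

lemma push_local (h : IsTopMfdWithBdry (n + 1) M B) {x : M} (hx : x ∈ B) :
    ∃ F : C(M × I, M), Defm B F ∧ ∃ U, IsOpen U ∧ x ∈ U ∧ ∀ y ∈ U, F (y, 1) ∈ B := by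
  have := h.1
  obtain ⟨c, r, hc, f, hr, hf, rfl, hB⟩ := mfd_chart h x
  have hc0 : c 0 = 0 := (hB _).1 hx
  let φ : (Fin (n + 1) → ℝ) → ℝ := fun y => max 0 (r / 2 - ‖y - c‖)
  have φc : Continuous φ := by fun_prop
  have φ0 : ∀ y, 0 ≤ φ y := fun y => le_max_left _ _
  let g : (Fin (n + 1) → ℝ) × I → Fin (n + 1) → ℝ := fun z =>
    Function.update z.1 0 (max 0 (z.1 0 - z.2.1 * φ z.1))
  have gc : Continuous g := by
    refine Continuous.update continuous_fst 0 ?_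
    fun_prop
  have gm : ∀ (y : hb c r) (t : I), g (y.1, t) ∈ hb c r := by
    intro y t
    have hy := y.2.1
    have hy2 := y.2.2
    rw [mem_ball_iff_norm, pi_norm_lt_iff hr] at hy
    refine ⟨?_, ?_⟩
    · rw [mem_ball_iff_norm, pi_norm_lt_iff hr]
      intro i
      by_cases hi : i = 0
      · subst hi
        refine lt_of_le_of_lt ?_ (hy 0)
        simp only [g, Pi.sub_apply, Function.update_self, hc0, sub_zero, Real.norm_eq_abs]
        rw [abs_of_nonneg (le_max_left _ _), abs_of_nonneg hy2]
        exact max_le hy2 (by have := mul_nonneg t.2.1 (φ0 y.1); linarith)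
      · simp only [g, Pi.sub_apply, Function.update_of_ne hi]
        exact hy i
    · simp [g]
  let F : C(hb c r × I, hb c r) := ⟨fun z => ⟨g (z.1.1, z.2), gm z.1 z.2⟩, by
    refine Continuous.subtype_mk ?_ _
    exact gc.comp ((continuous_subtype_val.comp continuous_fst).prodMk continuous_snd)⟩
  have hK : IsCompact (Subtype.val ⁻¹' Metric.closedBall c (r / 2) : Set (hb c r)) := by
    rw [Subtype.isCompact_iff, Subtype.image_preimage_coe]
    have : hb c r ∩ Metric.closedBall c (r / 2) = {y | 0 ≤ y 0} ∩ Metric.closedBall c (r / 2) := by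
      ext y
      constructor
      · rintro ⟨h1, h2⟩; exact ⟨h1.2, h2⟩
      · rintro ⟨h1, h2⟩
        exact ⟨⟨Metric.closedBall_subset_ball (by linarith) h2, h1⟩, h2⟩
    rw [this]
    exact (isCompact_closedBall c _).inter_left
      (isClosed_le continuous_const (continuous_apply 0))
  have upd : ∀ (y : hb c r) (t : I), y.1 0 - t.1 * φ y.1 = y.1 0 ∨ y.1 0 = 0 → F (y, t) = y := by
    intro y t hyt
    apply Subtype.ext
    change g (y.1, t) = y.1
    simp only [g]
    rw [Function.update_eq_iff]
    refine ⟨?_, fun _ _ => rfl⟩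
    rcases hyt with h1 | h1
    · rw [h1]; exact max_eq_right y.2.2
    · rw [h1]; exact max_eq_left (by have := mul_nonneg t.2.1 (φ0 y.1); linarith)
  obtain ⟨G, G1, G2⟩ := extH hf hK F (by
    intro y hy t
    refine upd y t (Or.inl ?_)
    have : φ y.1 = 0 := by
      rw [Set.mem_preimage, Metric.mem_closedBall, dist_eq_norm, not_le] at hy
      exact max_eq_left (by linarith)
    rw [this]; ring)
  refine ⟨G, ⟨fun y => ?_, fun y hy t => ?_⟩, f '' {y | y.1 0 < φ y.1}, ?_, ?_, ?_⟩
  · by_cases hy : y ∈ Set.range f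
    · obtain ⟨p, rfl⟩ := hy
      rw [G1, upd p 0 (Or.inl (by simp))]
    · exact G2 y hy 0
  · by_cases hy' : y ∈ Set.range f
    · obtain ⟨p, rfl⟩ := hy'
      rw [G1, upd p t (Or.inr ((hB _).1 hy))]
    · exact G2 y hy' t
  · refine hf.isOpenMap _ (isOpen_lt ?_ ?_)
    · exact (continuous_apply 0).comp continuous_subtype_val
    · exact φc.comp continuous_subtype_val
  · refine ⟨_, ?_, rfl⟩
    change c 0 < max 0 (r / 2 - ‖c - c‖)
    rw [hc0, sub_self, norm_zero, sub_zero]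
    exact lt_max_of_lt_right (by linarith)
  · rintro _ ⟨y, hy, rfl⟩
    rw [G1, hB]
    change g (y.1, 1) 0 = 0
    simp only [g, Function.update_self, Set.Icc.coe_one, one_mul]
    have hy : y.1 0 < φ y.1 := hy
    exact max_eq_left (by linarith)

lemma push (h : IsTopMfdWithBdry (n + 1) M B) (hBc : IsCompact B) :
    ∃ F : C(M × I, M), Defm B F ∧ ∃ U, IsOpen U ∧ B ⊆ U ∧ ∀ y ∈ U, F (y, 1) ∈ B := by
  have := hBc.induction_on (p := fun s => ∃ F : C(M × I, M), Defm B F ∧ ∃ U, IsOpen U ∧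
    B ∩ s ⊆ U ∧ ∀ y ∈ U, F (y, 1) ∈ B) ?_ ?_ ?_ ?_
  · simpa using this
  · exact ⟨⟨Prod.fst, continuous_fst⟩, ⟨fun _ => rfl, fun _ _ _ => rfl⟩, ∅, isOpen_empty, by simp,
      by simp⟩
  · rintro s t hst ⟨F, hF, U, hU, hs, hUB⟩
    exact ⟨F, hF, U, hU, (Set.inter_subset_inter_right _ hst).trans hs, hUB⟩
  · rintro s t ⟨F, hF, U, hU, hs, hUB⟩ ⟨F', hF', U', hU', hs', hUB'⟩
    refine ⟨⟨fun z => F' (F z, z.2), by fun_prop⟩, ⟨fun x => ?_, fun x hx t => ?_⟩,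
      U ∪ (fun y => F (y, 1)) ⁻¹' U', hU.union (hU'.preimage (by fun_prop)), ?_, ?_⟩
    · change F' (F (x, 0), 0) = x
      rw [hF.1, hF'.1]
    · change F' (F (x, t), t) = x
      rw [hF.2 x hx, hF'.2 x hx]
    · rintro x ⟨hx, hx' | hx'⟩
      · exact Or.inl (hs ⟨hx, hx'⟩)
      · refine Or.inr ?_
        change F (x, 1) ∈ U'
        rw [hF.2 x hx]
        exact hs' ⟨hx, hx'⟩
    · rintro y (hy | hy)
      · change F' (F (y, 1), 1) ∈ B
        rw [hF'.2 _ (hUB y hy)]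
        exact hUB y hy
      · exact hUB' _ hy
  · intro x hx
    obtain ⟨F, hF, U, hU, hxU, hUB⟩ := push_local h hx
    exact ⟨U, mem_nhdsWithin_of_mem_nhds (hU.mem_nhds hxU), F, hF, U, hU, Set.inter_subset_right, hUB⟩
end mfd
end BddCoh

end


noncomputable section
namespace BddCoh
open Topology

section lattice

/-- integral vectors -/
def cst {k : ℕ} (z : Fin k → ℤ) : Fin k → ℝ := fun j => ((z j : ℤ) : ℝ)

lemma cst_add {k : ℕ} (z w : Fin k → ℤ) : cst (z + w) = cst z + cst w := by
  funext j; simp [cst]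

lemma cst_sub {k : ℕ} (z w : Fin k → ℤ) : cst (z - w) = cst z - cst w := by
  funext j; simp [cst]

lemma cst_smul {k : ℕ} (a : ℤ) (z : Fin k → ℤ) : cst (a • z) = (a : ℝ) • cst z := by
  funext j; simp [cst]

/-- real extension of an integral map -/
def rext {k l : ℕ} (f : (Fin k → ℤ) →ₗ[ℤ] (Fin l → ℤ)) : (Fin k → ℝ) →ₗ[ℝ] (Fin l → ℝ) :=
  Matrix.toLin' ((LinearMap.toMatrix' f).map (Int.castRingHom ℝ))

lemma rext_cst {k l : ℕ} (f : (Fin k → ℤ) →ₗ[ℤ] (Fin l → ℤ)) (z : Fin k → ℤ) :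
    rext f (cst z) = cst (f z) := by
  conv_rhs => rw [← Matrix.toLin'_toMatrix' f]
  funext j
  exact (RingHom.map_mulVec (Int.castRingHom ℝ) (LinearMap.toMatrix' f) z j).symm

lemma cst_mem_ext {k l : ℕ} {f : (Fin k → ℝ) →ₗ[ℝ] (Fin l → ℝ)} {V : Submodule ℝ (Fin l → ℝ)}
    (h : ∀ z, f (cst z) ∈ V) (x) : f x ∈ V := by
  rw [LinearMap.pi_apply_eq_sum_univ]
  refine Submodule.sum_mem _ fun i _ => Submodule.smul_mem _ _ ?_
  convert h (fun j => if i = j then 1 else 0) using 2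
  funext j; simp [cst]

lemma lattice {e : ℕ} {V : Submodule ℝ (Fin e → ℝ)} {s : Set (Fin e → ℤ)}
    (hV : V = Submodule.span ℝ (cst '' s)) (hpos : 1 ≤ Module.finrank ℝ V) :
    ∃ q < e, ∃ (A : (Fin e → ℝ) →ₗ[ℝ] (Fin q → ℝ)) (S : (Fin q → ℝ) →ₗ[ℝ] (Fin e → ℝ)),
      (∀ y, A (S y) = y) ∧ (∀ x, A x = 0 ↔ x ∈ V) ∧ (∀ z, ∃ w, A (cst z) = cst w) ∧
      ∀ w, ∃ z, S (cst w) = cst z := by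
  let Λ : Submodule ℤ (Fin e → ℤ) :=
    { carrier := {z | cst z ∈ V}
      add_mem' := fun {a b} ha hb => by
        change cst (a + b) ∈ V; rw [cst_add]; exact add_mem ha hb
      zero_mem' := by
        change cst 0 ∈ V
        convert V.zero_mem; funext j; simp [cst]
      smul_mem' := fun a z hz => by
        change cst (a • z) ∈ V; rw [cst_smul]; exact V.smul_mem _ hz }
  have hΛ : ∀ z, z ∈ Λ ↔ cst z ∈ V := fun z => Iff.rfl
  have tf : Module.IsTorsionFree ℤ ((Fin e → ℤ) ⧸ Λ) := by
    refine Module.isTorsionFree_iff_smul_eq_zero.2 ?_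
    intro a x
    obtain ⟨z, rfl⟩ := Λ.mkQ_surjective x
    intro h
    by_cases ha : a = 0
    · exact Or.inl ha
    right
    rw [← map_smul, Submodule.mkQ_apply, Submodule.Quotient.mk_eq_zero, hΛ, cst_smul] at h
    rw [Submodule.mkQ_apply, Submodule.Quotient.mk_eq_zero, hΛ]
    exact (V.smul_mem_iff (by exact_mod_cast ha)).1 h
  let b := Module.finBasis ℤ ((Fin e → ℤ) ⧸ Λ)
  let A0 : (Fin e → ℤ) →ₗ[ℤ] (Fin _ → ℤ) := b.equivFun.toLinearMap.comp Λ.mkQ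
  have A0s : Function.Surjective A0 := b.equivFun.surjective.comp Λ.mkQ_surjective
  have A0k : ∀ z, A0 z = 0 ↔ cst z ∈ V := fun z => by
    simp [A0, hΛ]
  obtain ⟨S0, hS0⟩ := Module.projective_lifting_property A0 LinearMap.id A0s
  have hS0 : ∀ w, A0 (S0 w) = w := fun w => LinearMap.congr_fun hS0 w
  have AS : ∀ y, rext A0 (rext S0 y) = y := by
    intro y
    have := cst_mem_ext (f := (rext A0).comp (rext S0) - LinearMap.id) (V := ⊥)
      (fun z => by simp [rext_cst, hS0]) y
    simpa [sub_eq_zero] using this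
  have kerA : ∀ x, rext A0 x = 0 ↔ x ∈ V := by
    intro x
    constructor
    · intro hx
      have := cst_mem_ext (f := LinearMap.id - (rext S0).comp (rext A0)) (V := V) (fun z => by
        simp only [LinearMap.sub_apply, LinearMap.id_apply, LinearMap.comp_apply, rext_cst]
        rw [← cst_sub, ← A0k, map_sub, hS0, sub_self]) x
      simpa [hx] using this
    · intro hx
      have : V ≤ LinearMap.ker (rext A0) := by
        rw [hV, Submodule.span_le]
        rintro _ ⟨z, hz, rfl⟩
        have : A0 z = 0 := (A0k z).2 (by rw [hV]; exact Submodule.subset_span ⟨z, hz, rfl⟩)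
        simp only [SetLike.mem_coe, LinearMap.mem_ker]
        rw [rext_cst, this]; funext j; simp [cst]
      exact this hx
  refine ⟨_, ?_, rext A0, rext S0, AS, kerA, fun z => ⟨_, rext_cst _ z⟩, fun w => ⟨_, rext_cst _ w⟩⟩
  have h1 := LinearMap.finrank_range_add_finrank_ker (rext A0)
  have h2 : LinearMap.ker (rext A0) = V := by ext x; exact kerA x
  rw [LinearMap.range_eq_top.2 fun y => ⟨_, AS y⟩, h2, finrank_top] at h1
  simp only [Module.finrank_fin_fun] at h1
  omega

end lattice
end BddCoh

end


noncomputable section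
namespace BddCoh
open Topology

abbrev Tor (e : ℕ) : Type := Fin e → AddCircle (1 : ℝ)

lemma tp_apply {e : ℕ} (x : Fin e → ℝ) (j : Fin e) : torusProj e x j = (x j : AddCircle (1:ℝ)) := rfl

lemma tp_surj (e : ℕ) : Function.Surjective (torusProj e) := by
  intro θ
  choose f hf using fun j => QuotientAddGroup.mk_surjective (θ j)
  exact ⟨f, funext hf⟩

lemma tp_zero {e : ℕ} (x : Fin e → ℝ) : torusProj e x = 0 ↔ ∃ z : Fin e → ℤ, x = cst z := by
  constructor
  · intro h
    have : ∀ j, ∃ n : ℤ, n • (1:ℝ) = x j := fun j =>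
      (AddCircle.coe_eq_zero_iff (1:ℝ)).1 (congrFun h j)
    choose z hz using this
    exact ⟨z, funext fun j => by rw [← hz j]; simp [cst]⟩
  · rintro ⟨z, rfl⟩
    funext j
    exact (AddCircle.coe_eq_zero_iff (1:ℝ)).2 ⟨z j, by simp [cst]⟩

lemma tp_eq {e : ℕ} (x y : Fin e → ℝ) :
    torusProj e x = torusProj e y ↔ ∃ z : Fin e → ℤ, x - y = cst z := by
  rw [← tp_zero, map_sub, sub_eq_zero]

lemma tp_cont (e : ℕ) : Continuous (torusProj e) :=
  continuous_pi fun j => (AddCircle.continuous_mk' (1:ℝ)).comp (continuous_apply j)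

lemma tor_map {a b : ℕ} (A : (Fin a → ℝ) →ₗ[ℝ] (Fin b → ℝ))
    (h : ∀ z : Fin a → ℤ, ∃ w : Fin b → ℤ, A (cst z) = cst w) :
    ∃ F : C(Tor a, Tor b), ∀ x, F (torusProj a x) = torusProj b (A x) := by
  choose w hw using fun k : Fin a => h (Pi.single k 1)
  refine ⟨⟨fun θ j => ∑ k, w k j • θ k, by fun_prop⟩, fun x => ?_⟩
  funext j
  have h1 : x = ∑ k, x k • (cst (Pi.single k 1) : Fin a → ℝ) := by
    funext i
    simp [cst, Finset.sum_apply, Pi.single_apply]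
  conv_rhs => rw [h1, map_sum]
  simp only [map_smul, hw, tp_apply, Finset.sum_apply, ContinuousMap.coe_mk, Pi.smul_apply]
  have : ∀ f : Fin a → ℝ, ((∑ k, f k : ℝ) : AddCircle (1:ℝ)) = ∑ k, (f k : AddCircle (1:ℝ)) :=
    fun f => map_sum (QuotientAddGroup.mk' (AddSubgroup.zmultiples (1:ℝ))) f _
  rw [this]
  refine Finset.sum_congr rfl fun k _ => ?_
  rw [← AddCircle.coe_zsmul]
  congr 1
  simp [cst, mul_comm]

structure DS (d m : ℕ) (M R : Type) [TopologicalSpace M] [TopologicalSpace R] (B : Set M) where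
  q : C(M, R)
  t2 : T2Space R
  surj : Function.Surjective q
  closed : IsClosedMap q
  Bc : IsCompact B
  e : Fin m → ℕ
  he : ∀ i, e i ≤ d + 1
  j : C((Σ i, Tor (e i)), R)
  inj : Function.Injective j
  rng : Set.range j = q '' B
  sep : ∀ a b, q a = q b → a = b ∨ (a ∈ B ∧ b ∈ B)

lemma t2_of {M R : Type} [TopologicalSpace M] [TopologicalSpace R] [CompactSpace M] [T2Space M]
    {q : C(M, R)} (hs : Function.Surjective q) (hq : IsQuotientMap q)
    (hE : IsClosed {p : M × M | q p.1 = q p.2}) : T2Space R ∧ IsClosedMap q := by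
  have hc : IsClosedMap q := by
    intro C hC
    rw [← hq.isClosed_preimage]
    have : q ⁻¹' (q '' C) = Prod.snd '' ({p : M × M | q p.1 = q p.2} ∩ Prod.fst ⁻¹' C) := by
      ext b
      constructor
      · rintro ⟨a, ha, h⟩
        exact ⟨(a, b), ⟨h, ha⟩, rfl⟩
      · rintro ⟨⟨a, b'⟩, ⟨h, ha⟩, rfl⟩
        exact ⟨a, ha, h⟩
    rw [this]
    exact ((hE.inter (hC.preimage continuous_fst)).isCompact.image continuous_snd).isClosed
  refine ⟨⟨fun x y hxy => ?_⟩, hc⟩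
  have hf : ∀ x : R, IsClosed (q ⁻¹' {x}) := by
    intro x
    obtain ⟨a, rfl⟩ := hs x
    rw [hq.isClosed_preimage, ← Set.image_singleton]
    exact hc _ isClosed_singleton
  obtain ⟨U, V, hU, hV, hxU, hyV, hUV⟩ := normal_separation (hf x) (hf y)
    (Set.disjoint_left.2 fun a ha hb => hxy (ha.symm.trans hb))
  refine ⟨(q '' Uᶜ)ᶜ, (q '' Vᶜ)ᶜ, (hc _ hU.isClosed_compl).isOpen_compl,
    (hc _ hV.isClosed_compl).isOpen_compl, ?_, ?_, ?_⟩
  · rintro ⟨a, ha, h⟩; exact ha (hxU h)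
  · rintro ⟨a, ha, h⟩; exact ha (hyV h)
  · rw [Set.disjoint_left]
    intro r h1 h2
    obtain ⟨a, rfl⟩ := hs r
    have ha : a ∈ U := by by_contra h; exact h1 ⟨a, h, rfl⟩
    have hb : a ∈ V := by by_contra h; exact h2 ⟨a, h, rfl⟩
    exact Set.disjoint_left.1 hUV ha hb

theorem dehn_struct {d m : ℕ} (D : DehnData d m) [CompactSpace D.M] [T2Space D.M] :
    ∃ S : DS d m D.M D.Rfill D.B, S.q = D.q := by
  have hNc : ∀ i, IsCompact (D.N i) := fun i =>
    isCompact_iff_compactSpace.2 (D.flat i).symm.compactSpace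
  have hBc : IsCompact D.B := by rw [D.cover]; exact isCompact_iUnion hNc
  have hdisj : ∀ i i' a, a ∈ D.N i → a ∈ D.N i' → i = i' := by
    intro i i' a h h'
    obtain ⟨y, hy, e⟩ := D.iscomp i
    obtain ⟨y', hy', e'⟩ := D.iscomp i'
    apply D.inj
    rw [e, e']
    rw [e] at h; rw [e'] at h'
    rw [connectedComponentIn_eq h, connectedComponentIn_eq h']
  have hNB : ∀ i, D.N i ⊆ D.B := fun i => by rw [D.cover]; exact Set.subset_iUnion _ i
  choose s hs using D.rat
  have hlat := fun i => lattice (V := D.V i) (s := s i) (hs i) (D.dim_pos i)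
  choose e he A S hAS hA hAz hSz using hlat
  choose Ab hAb using fun i => tor_map (A i) (hAz i)
  choose Sb hSb using fun i => tor_map (S i) (hSz i)
  have hAS' : ∀ i θ, Ab i (Sb i θ) = θ := by
    intro i θ
    obtain ⟨x, rfl⟩ := tp_surj _ θ
    rw [hSb, hAb, hAS]
  have hW : ∀ i (θ θ' : Tor (d+2)), θ - θ' ∈ D.W i ↔ Ab i θ = Ab i θ' := by
    intro i θ θ'
    obtain ⟨x, rfl⟩ := tp_surj _ θ
    obtain ⟨y, rfl⟩ := tp_surj _ θ'
    rw [hAb, hAb, tp_eq]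
    constructor
    · rintro ⟨v, hv, h⟩
      rw [← map_sub, tp_eq] at h
      obtain ⟨z, hz⟩ := h
      obtain ⟨w, hw⟩ := hAz i z
      refine ⟨-w, ?_⟩
      have : A i v = 0 := (hA i v).2 hv
      have h2 : A i (v - (x - y)) = cst w := by rw [hz, hw]
      rw [map_sub, this, map_sub, zero_sub] at h2
      funext t
      have := congrFun h2 t
      simp only [Pi.neg_apply, Pi.sub_apply, cst, Int.cast_neg] at this ⊢
      linarith
    · rintro ⟨w, hw⟩
      obtain ⟨z, hz⟩ := hSz i w
      refine ⟨x - y - cst z, ?_, ?_⟩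
      · show _ ∈ D.V i
        rw [← hA, map_sub, map_sub, hw, ← hz, hAS, sub_self]
      · rw [map_sub, (tp_zero (cst z)).2 ⟨z, rfl⟩, sub_zero, map_sub]
  have hrel : ∀ a b, D.rel a b ↔ ∃ (i : Fin m) (ha : a ∈ D.N i) (hb : b ∈ D.N i),
      Ab i (D.flat i ⟨a, ha⟩) = Ab i (D.flat i ⟨b, hb⟩) := by
    intro a b; simp only [DehnData.rel, hW]
  have hq : ∀ a b, D.q a = D.q b ↔ a = b ∨ D.rel a b := by
    intro a b
    constructor
    · intro h
      have h' := Quot.eqvGen_exact h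
      clear h
      induction h' with
      | rel x y h => exact Or.inr h
      | refl x => exact Or.inl rfl
      | symm x y h ih =>
        rcases ih with h | h
        · exact Or.inl h.symm
        · rw [hrel] at h ⊢
          obtain ⟨i, ha, hb, h⟩ := h
          exact Or.inr ⟨i, hb, ha, h.symm⟩
      | trans x y z h1 h2 i1 i2 =>
        rcases i1 with h | h
        · subst h; exact i2
        rcases i2 with h' | h'
        · subst h'; exact Or.inr h
        · rw [hrel] at h h' ⊢
          obtain ⟨i, ha, hb, h⟩ := h
          obtain ⟨i', ha', hb', h'⟩ := h'
          obtain rfl := hdisj _ _ _ hb ha'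
          exact Or.inr ⟨i, ha, hb', h.trans h'⟩
    · rintro (rfl | h)
      · rfl
      · exact Quot.sound h
  have hE : IsClosed {p : D.M × D.M | D.q p.1 = D.q p.2} := by
    have : {p : D.M × D.M | D.q p.1 = D.q p.2} = Set.diagonal D.M ∪
        ⋃ i, (fun p : D.N i × D.N i => ((p.1 : D.M), (p.2 : D.M))) ''
          {p | Ab i (D.flat i p.1) = Ab i (D.flat i p.2)} := by
      ext ⟨a, b⟩
      simp only [Set.mem_ofPred_eq, hq, hrel, Set.mem_union, Set.mem_diagonal_iff, Set.mem_iUnion,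
        Set.mem_image, Prod.mk.injEq, Prod.exists, Subtype.exists]
      refine or_congr Iff.rfl (exists_congr fun i => ?_)
      constructor
      · rintro ⟨ha, hb, h⟩; exact ⟨a, ha, b, hb, h, rfl, rfl⟩
      · rintro ⟨a, ha, b, hb, h, rfl, rfl⟩; exact ⟨ha, hb, h⟩
    rw [this]
    refine isClosed_diagonal.union (isClosed_iUnion_of_finite fun i => ?_)
    have := isCompact_iff_compactSpace.1 (hNc i)
    refine IsCompact.isClosed (IsCompact.image (IsClosed.isCompact ?_) (by fun_prop))
    exact isClosed_eq (by fun_prop) (by fun_prop)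
  have hs : Function.Surjective D.q := Quot.mk_surjective
  obtain ⟨ht2, hcl⟩ := t2_of hs (isQuotientMap_quot_mk) hE
  refine ⟨⟨D.q, ht2, hs, hcl, hBc, e, fun i => by have := he i; omega,
    ⟨fun p => D.q ((D.flat p.1).symm (Sb p.1 p.2)), ?_⟩, ?_, ?_, ?_⟩, rfl⟩
  · refine continuous_sigma fun i => ?_
    exact D.q.continuous.comp (continuous_subtype_val.comp
      ((D.flat i).symm.continuous.comp (Sb i).continuous))
  · rintro ⟨i, θ⟩ ⟨i', θ'⟩ h
    simp only [ContinuousMap.coe_mk] at h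
    have : ∃ (k : Fin m) (ha : ((D.flat i).symm (Sb i θ) : D.M) ∈ D.N k)
      (hb : ((D.flat i').symm (Sb i' θ') : D.M) ∈ D.N k),
      Ab k (D.flat k ⟨_, ha⟩) = Ab k (D.flat k ⟨_, hb⟩) := by
      rcases (hq _ _).1 h with h | h
      · refine ⟨i, Subtype.prop _, ?_, ?_⟩
        · rw [← h]; exact Subtype.prop _
        · simp only [h]
      · exact (hrel _ _).1 h
    obtain ⟨k, ha, hb, hk⟩ := this
    obtain rfl := hdisj _ _ _ ha (Subtype.prop _)
    obtain rfl := hdisj _ _ _ hb (Subtype.prop _)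
    simpa [hAS'] using hk
  · ext r
    constructor
    · rintro ⟨⟨i, θ⟩, rfl⟩
      exact ⟨_, hNB i (Subtype.prop _), rfl⟩
    · rintro ⟨a, ha, rfl⟩
      rw [D.cover, Set.mem_iUnion] at ha
      obtain ⟨i, ha⟩ := ha
      refine ⟨⟨i, Ab i (D.flat i ⟨a, ha⟩)⟩, ?_⟩
      simp only [ContinuousMap.coe_mk]
      rw [hq, hrel]
      exact Or.inr ⟨i, Subtype.prop _, ha, by simp [hAS']⟩
  · intro a b h
    rcases (hq _ _).1 h with h | h
    · exact Or.inl h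
    · obtain ⟨i, ha, hb, -⟩ := h
      exact Or.inr ⟨hNB i ha, hNB i hb⟩
end BddCoh

end


noncomputable section
namespace BddCoh
open Topology

lemma circ_chart (x : ℝ) : ∃ f : ℝ → AddCircle (1:ℝ), IsOpenEmbedding f ∧ f 0 = (x : AddCircle (1:ℝ)) := by
  let u := OpenPartialHomeomorph.univBall x (1/2 : ℝ)
  have hu : IsOpenEmbedding u := u.isOpenEmbedding (OpenPartialHomeomorph.univBall_source _ _)
  have hb : ∀ s, |u s - x| < 1/2 := fun s => by
    have : u s ∈ u.target := u.map_source (by simp [u])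
    rw [OpenPartialHomeomorph.univBall_target _ (by norm_num)] at this
    simpa [Real.dist_eq] using this
  refine ⟨fun s => (u s : AddCircle (1:ℝ)), IsOpenEmbedding.of_continuous_injective_isOpenMap
    ((AddCircle.continuous_mk' (1:ℝ)).comp hu.continuous) (fun s t h => ?_) ?_, ?_⟩
  · apply hu.injective
    have h' : ((u s - u t : ℝ) : AddCircle (1:ℝ)) = 0 := by
      rw [AddCircle.coe_sub]; exact sub_eq_zero.2 h
    obtain ⟨n, hn⟩ := (AddCircle.coe_eq_zero_iff (1:ℝ)).1 h'
    have h1 := abs_lt.1 (hb s)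
    have h2 := abs_lt.1 (hb t)
    simp only [zsmul_eq_mul, mul_one] at hn
    have h3 : (n:ℝ) < 1 := by linarith
    have h4 : (-1:ℝ) < n := by linarith
    have h5 : n < 1 := by exact_mod_cast h3
    have h6 : -1 < n := by exact_mod_cast h4
    obtain rfl : n = 0 := by omega
    simp at hn; linarith
  · exact (QuotientAddGroup.isOpenMap_coe).comp hu.isOpenMap
  · simp [u]

lemma tor_chart {e : ℕ} (θ : Tor e) :
    ∃ g : C(Fin e → ℝ, Tor e), IsOpenEmbedding g ∧ θ ∈ Set.range g := by
  obtain ⟨x, rfl⟩ := tp_surj e θ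
  choose f hf h0 using fun j => circ_chart (x j)
  have := IsOpenEmbedding.piMap hf
  exact ⟨⟨_, this.continuous⟩, this, 0, funext fun j => h0 j⟩

variable {d m : ℕ} {M R : Type} [TopologicalSpace M] [TopologicalSpace R] {B : Set M}
  {K : Type} [CommRing K]

lemma DS.emb (S : DS d m M R B) : IsClosedEmbedding S.j :=
  have := S.t2
  IsClosedEmbedding.of_continuous_injective_isClosedMap S.j.continuous S.inj
    S.j.continuous.isClosedMap

lemma DS.Lvan (S : DS d m M R B) {k : ℕ} (hk : d + 1 ≤ k) {c : SChain K R (k + 1)}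
    (hc : c ∈ chainsIn K R (Set.range S.j) (k + 1)) (h : bdry K R k c = 0) :
    ∃ w ∈ chainsIn K R (Set.range S.j) (k + 2), bdry K R (k + 1) w = c := by
  rw [← Set.image_univ] at hc
  obtain ⟨c', -, rfl⟩ := chain_lift S.emb.isEmbedding hc
  rw [mp_bdry] at h
  have h' : bdry K _ k c' = 0 := mp_injective S.inj (by rw [h, map_zero])
  have hv : van K (d + 1) (Set.univ : Set (Σ i, Tor (S.e i))) := by
    refine van_compact isCompact_univ ?_
    rintro ⟨i, θ⟩ -
    obtain ⟨g, hg, t, ht⟩ := tor_chart θ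
    exact ⟨S.e i, S.he i, ⟨fun p => ⟨i, g p⟩, continuous_sigmaMk.comp g.continuous⟩, IsOpenEmbedding.sigmaMk.comp hg, t,
      by simp [ht]⟩
  obtain ⟨a, u, hu, hau⟩ := mem_relB.1 (hv k hk (show c' ∈ _ by rw [mem_relC, h']; exact zero_mem _))
  rw [Set.compl_univ] at hu
  rw [chainsIn_empty hu, add_zero] at hau
  refine ⟨mp S.j a, ?_, by rw [mp_bdry, hau]⟩
  exact mp_mem (A := Set.univ) (fun x _ => Set.mem_range_self x) (chainsIn_univ _)

lemma DS.mem_compl (S : DS d m M R B) {x : M} : S.q x ∈ Set.range S.j ↔ x ∈ B := by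
  rw [S.rng]
  refine ⟨?_, fun h => ⟨x, h, rfl⟩⟩
  rintro ⟨b, hb, h⟩
  rcases S.sep _ _ h with rfl | h
  · exact hb
  · exact h.2

lemma DS.chart (S : DS d m M R B) {Y : Type} [TopologicalSpace Y] {g : C(Y, M)}
    (hg : IsOpenEmbedding g) (hgB : Set.range g ⊆ Bᶜ) : IsOpenEmbedding (S.q.comp g) := by
  refine IsOpenEmbedding.of_continuous_injective_isOpenMap (S.q.comp g).continuous
    (fun a b h => ?_) fun U hU => ?_
  · rcases S.sep _ _ h with h | h
    · exact hg.injective h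
    · exact absurd h.1 (hgB ⟨a, rfl⟩)
  · have : S.q.comp g '' U = (S.q '' (g '' U)ᶜ)ᶜ := by
      ext r
      obtain ⟨x, rfl⟩ := S.surj r
      constructor
      · rintro ⟨a, ha, h⟩ ⟨y, hy, h'⟩
        rcases S.sep _ _ (h.trans h'.symm) with h | h
        · exact hy ⟨a, ha, h⟩
        · exact hgB ⟨a, rfl⟩ h.1
      · intro h
        by_contra h2
        exact h ⟨x, fun ⟨a, ha, h3⟩ => h2 ⟨a, ha, by simp [h3]⟩, rfl⟩
    rw [this]
    exact (S.closed _ (hg.isOpenMap _ hU).isClosed_compl).isOpen_compl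

lemma DS.push (S : DS d m M R B) [CompactSpace M] {n : ℕ} (h : IsTopMfdWithBdry (n + 1) M B) :
    ∃ F : C(R × I, R), (∀ r, F (r, 0) = r) ∧ ∃ A : Set R, IsCompact A ∧ A ⊆ S.q '' Bᶜ ∧
      ∀ r ∈ Aᶜ, F (r, 1) ∈ Set.range S.j := by
  have := S.t2
  obtain ⟨F, hF, U, hU, hBU, hUB⟩ := BddCoh.push h S.Bc
  let Q : C(M × I, R × I) := S.q.prodMap (ContinuousMap.id I)
  have hQs : Function.Surjective Q := by
    rintro ⟨r, t⟩
    obtain ⟨x, rfl⟩ := S.surj r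
    exact ⟨(x, t), rfl⟩
  have hQ : IsQuotientMap Q := Q.continuous.isClosedMap.isQuotientMap Q.continuous hQs
  have hlift : ∀ a b, Q a = Q b → (S.q.comp F) a = (S.q.comp F) b := by
    rintro ⟨a, t⟩ ⟨b, t'⟩ h
    simp only [Q, ContinuousMap.prodMap_apply, Prod.map_apply, ContinuousMap.id_apply,
      Prod.mk.injEq] at h
    obtain ⟨h, rfl⟩ := h
    rcases S.sep _ _ h with rfl | h'
    · rfl
    · simp [hF.2 _ h'.1, hF.2 _ h'.2, h]
  have hG : ∀ x t, hQ.lift (S.q.comp F) hlift (S.q x, t) = S.q (F (x, t)) := fun x t =>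
    DFunLike.congr_fun (hQ.lift_comp (S.q.comp F) hlift) (x, t)
  refine ⟨hQ.lift (S.q.comp F) hlift, fun r => ?_, S.q '' Uᶜ,
    hU.isClosed_compl.isCompact.image S.q.continuous,
    Set.image_mono (Set.compl_subset_compl.2 hBU), fun r hr => ?_⟩
  · obtain ⟨x, rfl⟩ := S.surj r
    rw [hG, hF.1]
  · obtain ⟨x, rfl⟩ := S.surj r
    rw [hG, S.mem_compl]
    exact hUB _ (by by_contra h; exact hr ⟨x, h, rfl⟩)

lemma DS.vanish (S : DS d m M R B) [CompactSpace M] [PreconnectedSpace M]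
    (h : IsTopMfdWithBdry (d + 3) M B) {v : SChain K R (d + 3)} (hv : bdry K R (d + 2) v = 0)
    {x : M} (hx : x ∉ B) (hvx : v ∈ relBdries K R {S.q x}ᶜ (d + 2)) :
    ∃ a, bdry K R (d + 3) a = v := by
  have := S.t2
  have h1 : ∀ y ∉ B, v ∈ relBdries K R {S.q y}ᶜ (d + 2) := by
    intro y hy
    refine int_conn h (P := fun y => v ∈ relBdries K R {S.q y}ᶜ (d + 2)) ?_ hx hy hvx
    intro g hg hgB a b hab
    exact move (S.chart hg hgB) a b hv hab
  obtain ⟨F, hF, A, hA, hAB, hFA⟩ := S.push h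
  have h2 : v ∈ relBdries K R Aᶜ (d + 2) := by
    refine inj_compact (O := S.q '' Bᶜ) ?_ hA hAB ?_
    · rintro _ ⟨x, hx, rfl⟩
      obtain ⟨g, hg, ⟨t, ht⟩, hgB⟩ := int_chart h hx
      exact ⟨S.q.comp g, S.chart hg hgB, t, by simp [ht]⟩
    · intro r hr
      obtain ⟨y, hy, rfl⟩ := hAB hr
      exact h1 y hy
  obtain ⟨a, u, hu, rfl⟩ := mem_relB.1 h2
  rw [map_add, bdry_bdry, zero_add] at hv
  let f1 : C(R, R) := F.comp ⟨fun r => (r, 1), by fun_prop⟩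
  have h3 := hop_spec F (f := ContinuousMap.id R) (g := f1) hF (fun _ => rfl) u
  rw [hv, map_zero, add_zero, mp_id] at h3
  obtain ⟨w, -, hw⟩ := S.Lvan (k := d + 2) (by omega) (c := mp f1 u) (mp_mem (A := Aᶜ) (fun r hr => hFA r hr) hu)
    (by rw [mp_bdry, hv, map_zero])
  refine ⟨a + w - hop F (d + 3) u, ?_⟩
  rw [map_sub, map_add, hw]
  rw [sub_eq_iff_eq_add] at h3
  rw [h3]; abel
end BddCoh

end


noncomputable section
namespace BddCoh
open Topology

section ic
variable {X Y : Type} [TopologicalSpace X] [TopologicalSpace Y] {n : ℕ}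

/-- Coefficient extension as an additive map. -/
def ic : SChain ℤ X n →+ SChain ℝ X n := (lin (K := ℤ) fun σ => sg ℝ σ).toAddMonoidHom

lemma ic_smul (a : ℤ) (c : SChain ℤ X n) :
    ic ((instModuleSChain ℤ X n).toSMul.smul a c) = (a : ℝ) • ic c := by
  rw [Int.cast_smul_eq_zsmul]
  exact (lin (K := ℤ) fun σ : SSimplex X n => sg ℝ σ).map_smul a c

lemma ic_sg (σ : SSimplex X n) : ic (sg ℤ σ) = sg ℝ σ :=
  lin_sg (K := ℤ) (fun σ : SSimplex X n => sg ℝ σ) σ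

lemma intChain_eq (z : SChain ℤ X n) : intChain z = ic z := by
  have hadd : ∀ a b : SChain ℤ X n, intChain (a + b) = intChain a + intChain b := by
    intro a b
    simp only [intChain, map_add]
    rw [← map_add]
    exact Finsupp.mapRange_add (hf := Int.cast_zero) (fun x y => Int.cast_add x y) _ _
  induction z using chain_ind with
  | h0 => simp [intChain]
  | hadd a b ha hb => rw [hadd, map_add, ha, hb]
  | hsm a σ =>
    refine Eq.trans ?_ (ic_smul a (sg ℤ σ)).symm
    rw [ic_sg, smul_sg, smul_sg, intChain, LinearEquiv.symm_apply_apply, Finsupp.mapRange_single]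

lemma ic_ext {W : Type} [AddCommGroup W] [Module ℝ W] {f g : SChain ℤ X n →+ W}
    (h : ∀ σ, f (sg ℤ σ) = g (sg ℤ σ)) (c : SChain ℤ X n) : f c = g c := by
  induction c using chain_ind with
  | h0 => simp
  | hadd a b ha hb => rw [map_add, map_add, ha, hb]
  | hsm a σ =>
    have : (instModuleSChain ℤ X n).toSMul.smul a (sg ℤ σ) = a • sg ℤ σ :=
      int_smul_eq_zsmul (instModuleSChain ℤ X n) a (sg ℤ σ)
    refine (congrArg f this).trans (Eq.trans ?_ (congrArg g this).symm)
    rw [map_zsmul, map_zsmul, h]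

lemma ic_mp (f : C(X, Y)) (c : SChain ℤ X n) : ic (mp f c) = mp f (ic c) := by
  refine ic_ext (f := ic.comp (mp f).toAddMonoidHom) (g := (mp f).toAddMonoidHom.comp ic)
    (fun σ => ?_) c
  simp [ic_sg]

lemma ic_bdry (c : SChain ℤ X (n + 1)) : ic (bdry ℤ X n c) = bdry ℝ X n (ic c) := by
  refine ic_ext (f := ic.comp (bdry ℤ X n).toAddMonoidHom)
    (g := (bdry ℝ X n).toAddMonoidHom.comp ic) (fun σ => ?_) c
  simp only [AddMonoidHom.comp_apply, LinearMap.toAddMonoidHom_coe, ic_sg, bdry_sg, map_sum]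
  refine Finset.sum_congr rfl fun i _ => ?_
  refine (ic_smul _ _).trans ?_
  rw [ic_sg]; simp

lemma ic_mem {A : Set X} {c : SChain ℤ X n} (h : c ∈ chainsIn ℤ X A n) :
    ic c ∈ chainsIn ℝ X A n := by
  rw [chainsIn_eq_span] at h
  induction h using Submodule.span_induction with
  | mem x h =>
    obtain ⟨σ, hσ, rfl⟩ := h
    rw [ic_sg]; exact sg_mem hσ
  | zero => rw [map_zero]; exact zero_mem _
  | add x y _ _ hx hy => rw [map_add]; exact add_mem hx hy
  | smul a x _ hx => 
    have := ic_smul a x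
    exact this ▸ Submodule.smul_mem _ _ hx
end ic

section hom
variable {X : Type} [TopologicalSpace X] {n : ℕ} {Y : Set X}

lemma hom_eq {K : Type} [CommRing K] {c c' : relCycles K X Y n} :
    relHomClass c = relHomClass c' ↔ c.1 - c'.1 ∈ relBdries K X Y n := by
  unfold relHomClass
  exact (Submodule.Quotient.eq _)

lemma fund_unpack {reg : Set X} {μ : relHomology ℝ X Y n} (h : IsFundClassOn X Y reg n μ) :
    ∃ z ∈ relCycles ℤ X Y n, (∃ h : ic z ∈ relCycles ℝ X Y n, relHomClass ⟨ic z, h⟩ = μ) ∧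
      ∀ x ∈ reg, z ∈ relCycles ℤ X {x}ᶜ n ∧
        ∀ v ∈ relCycles ℤ X {x}ᶜ n, ∃ k : ℤ, v - k • z ∈ relBdries ℤ X {x}ᶜ n := by
  obtain ⟨z, hz, h1, h2⟩ := h
  rw [intChain_eq] at h1
  refine ⟨z, hz, h1, fun x hx => ?_⟩
  obtain ⟨hl, h3⟩ := h2 x hx
  refine ⟨hl, fun v hv => ?_⟩
  obtain ⟨k, hk⟩ := h3 (relHomClass ⟨v, hv⟩)
  refine ⟨k, ?_⟩
  have : k • relHomClass ⟨z, hl⟩ = relHomClass (k • (⟨z, hl⟩ : relCycles ℤ X {x}ᶜ n)) := rfl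
  rw [this, hom_eq] at hk
  exact hk

lemma fund_pack {reg : Set X} {μ : relHomology ℝ X Y n} {z : SChain ℤ X (n + 1)}
    (hz : z ∈ relCycles ℤ X Y n) (h1 : ∃ h : ic z ∈ relCycles ℝ X Y n, relHomClass ⟨ic z, h⟩ = μ)
    (h2 : ∀ x ∈ reg, z ∈ relCycles ℤ X {x}ᶜ n ∧
        ∀ v ∈ relCycles ℤ X {x}ᶜ n, ∃ k : ℤ, v - k • z ∈ relBdries ℤ X {x}ᶜ n) :
    IsFundClassOn X Y reg n μ := by
  refine ⟨z, hz, by rwa [intChain_eq], fun x hx => ?_⟩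
  obtain ⟨hl, h3⟩ := h2 x hx
  refine ⟨hl, fun β => ?_⟩
  obtain ⟨⟨v, hv⟩, rfl⟩ := Submodule.Quotient.mk_surjective _ β
  obtain ⟨k, hk⟩ := h3 v hv
  exact ⟨k, hom_eq (c' := k • (⟨z, hl⟩ : relCycles ℤ X {x}ᶜ n)).2 hk⟩

lemma l1_nonneg (c : SChain ℝ X n) : 0 ≤ l1 c :=
  Finset.sum_nonneg fun _ _ => abs_nonneg _

lemma norm_le {α : relHomology ℝ X Y n} (c : relCycles ℝ X Y n) (h : relHomClass c = α) :
    l1HomNorm α ≤ l1 c.1 :=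
  csInf_le ⟨0, by rintro _ ⟨c, -, rfl⟩; exact l1_nonneg _⟩ ⟨c, h, rfl⟩

lemma l1_add (a b : SChain ℝ X n) : l1 (a + b) ≤ l1 a + l1 b := by
  classical
  have : ∀ f g : SSimplex X n →₀ ℝ, ((f + g).sum fun _ r => |r|) ≤
      (f.sum fun _ r => |r|) + g.sum fun _ r => |r| := by
    intro f g
    rw [Finsupp.sum_of_support_subset (f + g) Finsupp.support_add _ (by simp),
      Finsupp.sum_of_support_subset f (Finset.subset_union_left (s₂ := g.support)) _ (by simp),
      Finsupp.sum_of_support_subset g (Finset.subset_union_right (s₁ := f.support)) _ (by simp),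
      ← Finset.sum_add_distrib]
    exact Finset.sum_le_sum fun σ _ => abs_add_le _ _
  exact this _ _

lemma l1_zero : l1 (0 : SChain ℝ X n) = 0 := by simp [l1]

lemma l1_smul (a : ℝ) (c : SChain ℝ X n) : l1 (a • c) = |a| * l1 c := by
  unfold l1
  rw [map_smul, Finsupp.sum_smul_index (by simp)]
  simp only [abs_mul]
  exact (Finsupp.mul_sum _ _).symm

lemma l1_sg (σ : SSimplex X n) : l1 (sg ℝ σ) = 1 := by simp [l1, sg]

lemma l1_sum {ι : Type} (s : Finset ι) (f : ι → SChain ℝ X n) :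
    l1 (∑ i ∈ s, f i) ≤ ∑ i ∈ s, l1 (f i) := by
  classical
  induction s using Finset.induction_on with
  | empty => simp [l1_zero]
  | insert a s ha ih =>
    rw [Finset.sum_insert ha, Finset.sum_insert ha]
    exact (l1_add _ _).trans (by linarith)

lemma l1_lin {Z : Type} [TopologicalSpace Z] {k : ℕ} {φ : SSimplex X n → SChain ℝ Z k} {C : ℝ}
    (h : ∀ σ, l1 (φ σ) ≤ C) (c : SChain ℝ X n) : l1 (lin φ c) ≤ C * l1 c := by
  have : lin φ c = ∑ σ ∈ ((chainEquiv ℝ X n).symm c).support, ((chainEquiv ℝ X n).symm c) σ • φ σ := by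
    simp [lin, Finsupp.linearCombination_apply, Finsupp.sum]
  rw [this, show l1 c = ∑ σ ∈ ((chainEquiv ℝ X n).symm c).support, |((chainEquiv ℝ X n).symm c) σ|
    from rfl, Finset.mul_sum]
  refine (l1_sum _ _).trans (Finset.sum_le_sum fun σ _ => ?_)
  rw [l1_smul, mul_comm C]
  exact mul_le_mul_of_nonneg_left (h σ) (abs_nonneg _)
end hom

section main
variable {d m : ℕ} {M R : Type} [TopologicalSpace M] [TopologicalSpace R] {B : Set M}

lemma cyc_iff {K : Type} [CommRing K] {X : Type} [TopologicalSpace X] {n : ℕ}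
    {v : SChain K X (n + 1)} : v ∈ relCycles K X ∅ n ↔ bdry K X n v = 0 :=
  ⟨fun h => chainsIn_empty h, fun h => by rw [mem_relC, h]; exact zero_mem _⟩

theorem DS.exist (S : DS d m M R B) [CompactSpace M] [PreconnectedSpace M]
    (h : IsTopMfdWithBdry (d + 3) M B)
    {z : SChain ℤ M (d + 3)} (hz : z ∈ relCycles ℤ M B (d + 2))
    (hg : ∀ x ∈ Bᶜ, z ∈ relCycles ℤ M {x}ᶜ (d + 2) ∧
        ∀ v ∈ relCycles ℤ M {x}ᶜ (d + 2), ∃ k : ℤ, v - k • z ∈ relBdries ℤ M {x}ᶜ (d + 2)) :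
    ∃ w ∈ chainsIn ℤ R (Set.range S.j) (d + 3), bdry ℤ R (d + 2) (mp S.q z - w) = 0 ∧
      ∀ r ∈ S.q '' Bᶜ, ∀ v ∈ relCycles ℤ R {r}ᶜ (d + 2),
        ∃ k : ℤ, v - k • (mp S.q z - w) ∈ relBdries ℤ R {r}ᶜ (d + 2) := by
  have := S.t2
  obtain ⟨w, hw, hwz⟩ := S.Lvan (K := ℤ) (k := d + 1) le_rfl
    (c := mp S.q (bdry ℤ M (d + 2) z)) (mp_mem (fun x hx => S.mem_compl.2 hx) hz)
    (by rw [mp_bdry, bdry_bdry, map_zero])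
  refine ⟨w, hw, by rw [map_sub, hwz, mp_bdry, sub_self], ?_⟩
  rintro _ ⟨x, hx, rfl⟩ v hv
  obtain ⟨g, hg', ⟨t, rfl⟩, hgB⟩ := int_chart h hx
  have hi : (S.q.comp g) '' {t} = {S.q (g t)} := by simp
  obtain ⟨y, hy, hvy⟩ := excise (S.chart hg' hgB) (A := {t}) (by rw [hi]; exact isClosed_singleton)
    (v := v) (by rwa [hi])
  rw [hi] at hvy
  obtain ⟨k, hk⟩ := (hg _ hx).2 (mp g y) (mp_relC (e := g) (A := {t}ᶜ) (B := {g t}ᶜ) (fun s hs h => hs (hg'.injective h)) hy)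
  refine ⟨k, ?_⟩
  have h1 := mp_relB (e := S.q) (A := {g t}ᶜ) (B := {S.q (g t)}ᶜ) (fun s hs h => by
    rcases S.sep _ _ h with h | h
    · exact hs h
    · exact hx h.2) hk
  rw [map_sub, map_smul, mp_comp] at h1
  have h2 : w ∈ relBdries ℤ R {S.q (g t)}ᶜ (d + 2) := by
    refine mem_relB_of_mem (chainsIn_mono ?_ hw)
    rintro r hr rfl
    exact hx (S.mem_compl.1 hr)
  have := add_mem (add_mem hvy h1) (Submodule.smul_mem _ k h2)
  convert this using 1
  rw [smul_sub]; abel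

theorem DS.reduce (S : DS d m M R B) [CompactSpace M] [ConnectedSpace M]
    (h : IsTopMfdWithBdry (d + 3) M B)
    (H : ∀ (c : SChain ℝ M (d + 3)) (w : SChain ℝ R (d + 3)), c ∈ relCycles ℝ M B (d + 2) →
      w ∈ chainsIn ℝ R (Set.range S.j) (d + 3) → bdry ℝ R (d + 2) (mp S.q c - w) = 0 →
      ∀ δ > 0, ∃ a, l1 (mp S.q c - w + bdry ℝ R (d + 3) a) ≤ l1 c + δ)
    (μ : relHomology ℝ M B (d + 2)) (hμ : IsFundClass M B (d + 2) μ) :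
    (∃ ρ : relHomology ℝ R ∅ (d + 2), IsFundClassOn R ∅ (S.q '' Bᶜ) (d + 2) ρ) ∧
    (∀ ρ : relHomology ℝ R ∅ (d + 2), IsFundClassOn R ∅ (S.q '' Bᶜ) (d + 2) ρ →
      l1HomNorm ρ ≤ l1HomNorm μ) := by
  obtain ⟨z, hz, ⟨hzr, hzμ⟩, hg⟩ := fund_unpack hμ
  obtain ⟨w0, hw0, hcyc, hgen⟩ := S.exist h hz hg
  set v0 := mp S.q z - w0 with hv0
  constructor
  · have hc : ic v0 ∈ relCycles ℝ R ∅ (d + 2) := cyc_iff.2 (by rw [← ic_bdry, hcyc, map_zero])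
    refine ⟨relHomClass ⟨ic v0, hc⟩, fund_pack (cyc_iff.2 hcyc) ⟨hc, rfl⟩ fun r hr => ⟨?_, hgen r hr⟩⟩
    exact relC_mono (Set.empty_subset _) (cyc_iff.2 hcyc)
  intro ρ hρ
  obtain ⟨v1, hv1, ⟨hv1r, rfl⟩, hg1⟩ := fund_unpack hρ
  have hx0 : ∃ x, x ∉ B := by
    obtain ⟨x⟩ : Nonempty M := inferInstance
    obtain ⟨y, hy⟩ := (int_dense h x).exists
    exact ⟨y, hy⟩
  obtain ⟨x, hx⟩ := hx0
  obtain ⟨k, hk⟩ := hgen (S.q x) ⟨x, hx, rfl⟩ v1 (relC_mono (Set.empty_subset _) hv1)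
  obtain ⟨l, hl⟩ := (hg1 (S.q x) ⟨x, hx, rfl⟩).2 v0
    (relC_mono (Set.empty_subset _) (cyc_iff.2 hcyc))
  obtain ⟨a, ha⟩ := S.vanish h (by rw [map_sub, map_smul, hcyc, cyc_iff.1 hv1]; simp) hx hk
  obtain ⟨b, hb⟩ := S.vanish h (by rw [map_sub, map_smul, hcyc, cyc_iff.1 hv1]; simp) hx hl
  have ha' : bdry ℝ R (d + 3) (ic a) = ic v1 - (k : ℝ) • ic v0 := by
    rw [← ic_bdry, ha, map_sub, map_zsmul, Int.cast_smul_eq_zsmul]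
  have hb' : bdry ℝ R (d + 3) (ic b) = ic v0 - (l : ℝ) • ic v1 := by
    rw [← ic_bdry, hb, map_sub, map_zsmul, Int.cast_smul_eq_zsmul]
  refine le_csInf ⟨_, ⟨_, hzr⟩, hzμ, rfl⟩ ?_
  rintro _ ⟨⟨c, hc⟩, hcμ, rfl⟩
  have key : ∀ c' : SChain ℝ R (d + 3), (∃ e, c' = ic v1 + bdry ℝ R (d + 3) e) →
      l1HomNorm (relHomClass ⟨ic v1, hv1r⟩) ≤ l1 c' := by
    rintro c' ⟨e, rfl⟩
    refine norm_le ⟨_, ?_⟩ ?_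
    · exact add_mem hv1r (relB_le_relC (bdry_mem_relB _))
    · rw [hom_eq]
      simpa using bdry_mem_relB e
  by_cases hkl : k * l = 1
  · have hk1 : |(k : ℝ)| = 1 := by
      have := Int.isUnit_iff_abs_eq.1 (IsUnit.of_mul_eq_one _ hkl)
      exact_mod_cast this
    -- a cycle representing the class, built from `c`
    rw [← hzμ, hom_eq] at hcμ
    obtain ⟨e, u, hu, heu⟩ := mem_relB.1 hcμ
    have huc : bdry ℝ R (d + 2) (mp S.q c - (mp S.q u + ic w0)) = 0 := by
      have h1 : mp S.q c - (mp S.q u + ic w0) = ic v0 + mp S.q (bdry ℝ M (d + 3) e) := by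
        have h2 : c = bdry ℝ M (d + 3) e + u + ic z := by rw [heu]; simp
        rw [h2, hv0, map_sub, ic_mp]
        simp only [map_add]; abel
      rw [h1, map_add, ← mp_bdry, bdry_bdry, add_zero, ← ic_bdry, hcyc, map_zero]
    refine le_of_forall_pos_le_add fun δ hδ => ?_
    obtain ⟨a', ha''⟩ := H c (mp S.q u + ic w0) hc
      (add_mem (mp_mem (fun x hx => S.mem_compl.2 hx) hu) (ic_mem hw0)) huc δ hδ
    refine (key ((k : ℝ) • (mp S.q c - (mp S.q u + ic w0) + bdry ℝ R (d + 3) a'))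
      ⟨(k : ℝ) • (mp S.q e + a') - ic a, ?_⟩).trans (by rwa [l1_smul, hk1, one_mul])
    have h2 : c = bdry ℝ M (d + 3) e + u + ic z := by rw [heu]; simp
    rw [map_sub, ha', map_smul, map_add, mp_bdry, h2, hv0, map_sub, ic_mp]
    simp only [map_add, smul_add, smul_sub]; abel
  · refine (key 0 ⟨-((1 - (k : ℝ) * l)⁻¹ • (ic a + (k:ℝ) • ic b)), ?_⟩).trans
      (by rw [l1_zero]; exact l1_nonneg _)
    have hne : (1 - (k : ℝ) * l) ≠ 0 := fun h => hkl (by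
      have : (k : ℝ) * l = 1 := by linarith
      exact_mod_cast this)
    rw [map_neg, map_smul, map_add, map_smul, ha', hb']
    have : ic v1 - (k : ℝ) • ic v0 + (k : ℝ) • (ic v0 - (l : ℝ) • ic v1) =
      (1 - (k : ℝ) * l) • ic v1 := by module
    rw [this, inv_smul_smul₀ hne, add_neg_cancel]
end main
end BddCoh

end


noncomputable section
namespace BddCoh
open Topology

/-- Permutation of `Fin (k+2)` with `i ↦ j` and inducing `ρ` on the rest. -/
def pj {k : ℕ} (i j : Fin (k + 2)) (ρ : Equiv.Perm (Fin (k + 1))) : Equiv.Perm (Fin (k + 2)) :=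
  j.cycleRange.symm * Equiv.Perm.decomposeFin.symm (0, ρ) * i.cycleRange

lemma pj_sA {k : ℕ} (i j : Fin (k + 2)) (ρ : Equiv.Perm (Fin (k + 1))) (l : Fin (k + 1)) :
    pj i j ρ (i.succAbove l) = j.succAbove (ρ l) := by
  simp [pj]

lemma pj_self {k : ℕ} (i j : Fin (k + 2)) (ρ : Equiv.Perm (Fin (k + 1))) : pj i j ρ i = j := by
  simp [pj]

lemma pj_sign {k : ℕ} (i j : Fin (k + 2)) (ρ : Equiv.Perm (Fin (k + 1))) :
    (-1 : ℝ) ^ (i : ℕ) * ((Equiv.Perm.sign (pj i j ρ) : ℤ) : ℝ) =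
      (-1 : ℝ) ^ (j : ℕ) * ((Equiv.Perm.sign ρ : ℤ) : ℝ) := by
  have h : ((-1 : ℝ) ^ (i : ℕ)) * ((-1 : ℝ) ^ (i : ℕ)) = 1 := by
    rw [← mul_pow]; simp
  simp only [pj, Equiv.Perm.sign_mul, Equiv.Perm.sign_symm, Fin.sign_cycleRange,
    Equiv.Perm.decomposeFin.symm_sign]
  simp
  linear_combination ((-1 : ℝ) ^ (j : ℕ) * ((Equiv.Perm.sign ρ : ℤ) : ℝ)) * h

lemma pj_bij {k : ℕ} (i : Fin (k + 2)) : Function.Bijective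
    (fun p : Fin (k + 2) × Equiv.Perm (Fin (k + 1)) => pj i p.1 p.2) := by
  rw [Fintype.bijective_iff_injective_and_card]
  refine ⟨?_, Fintype.card_congr Equiv.Perm.decomposeFin.symm⟩
  rintro ⟨j, ρ⟩ ⟨j', ρ'⟩ h
  have h1 : j = j' := by rw [← pj_self i j ρ, ← pj_self i j' ρ']; exact congrFun (congrArg _ h) i
  subst h1
  congr 1
  ext1 l
  have := congrFun (congrArg (fun π : Equiv.Perm (Fin (k + 2)) => (π : _ → _)) h) (i.succAbove l)
  simp only [pj_sA] at this
  exact Fin.succAbove_right_injective this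

/-- The alternation chain. -/
def altc (k : ℕ) : SChain ℝ (Δ k) k :=
  ((k + 1).factorial : ℝ)⁻¹ •
    ∑ π : Equiv.Perm (Fin (k + 1)), ((Equiv.Perm.sign π : ℤ) : ℝ) • sg ℝ (sm π)

lemma altc_zero : altc 0 = iot ℝ 0 := by
  have : (Finset.univ : Finset (Equiv.Perm (Fin (0 + 1)))) = {1} := by decide
  rw [altc, this]
  simp only [Finset.sum_singleton, iot, ← sm_id]
  simp

lemma altc_bdry (k : ℕ) :
    bdry ℝ _ k (altc (k + 1)) = nat (altc k) (bdry ℝ _ k (iot ℝ (k + 1))) := by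
  have key : ∀ i : Fin (k + 2), (∑ π : Equiv.Perm (Fin (k + 2)), ((-1 : ℝ) ^ (i : ℕ) *
      ((Equiv.Perm.sign π : ℤ) : ℝ)) • sg ℝ (sm (n := k + 1) (π ∘ i.succAbove))) =
      ∑ j : Fin (k + 2), ∑ ρ : Equiv.Perm (Fin (k + 1)), ((-1 : ℝ) ^ (j : ℕ) *
      ((Equiv.Perm.sign ρ : ℤ) : ℝ)) • sg ℝ (sm (n := k + 1) (j.succAbove ∘ ρ)) := by
    intro i
    rw [← (pj_bij i).sum_comp, Fintype.sum_prod_type]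
    refine Finset.sum_congr rfl fun j _ => Finset.sum_congr rfl fun ρ _ => ?_
    rw [pj_sign, show (pj i j ρ ∘ i.succAbove) = j.succAbove ∘ ρ from funext (pj_sA i j ρ)]
  have l1 : bdry ℝ _ k (altc (k + 1)) = ((k + 2).factorial : ℝ)⁻¹ • ∑ i : Fin (k + 2),
      (∑ π : Equiv.Perm (Fin (k + 2)), ((-1 : ℝ) ^ (i : ℕ) *
      ((Equiv.Perm.sign π : ℤ) : ℝ)) • sg ℝ (sm (n := k + 1) (π ∘ i.succAbove))) := by
    rw [altc, map_smul, map_sum, Finset.sum_comm]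
    congr 1
    refine Finset.sum_congr rfl fun π _ => ?_
    rw [map_smul, bdry_sg, Finset.smul_sum]
    refine Finset.sum_congr rfl fun i _ => ?_
    rw [faceOf, face_eq_sm, sm_comp, smul_smul, mul_comm]
  have l2 : nat (altc k) (bdry ℝ _ k (iot ℝ (k + 1))) = ((k + 1).factorial : ℝ)⁻¹ •
      ∑ j : Fin (k + 2), ∑ ρ : Equiv.Perm (Fin (k + 1)), ((-1 : ℝ) ^ (j : ℕ) *
      ((Equiv.Perm.sign ρ : ℤ) : ℝ)) • sg ℝ (sm (n := k + 1) (j.succAbove ∘ ρ)) := by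
    rw [iot, bdry_sg, map_sum, Finset.smul_sum]
    refine Finset.sum_congr rfl fun j _ => ?_
    rw [map_smul, nat_sg, altc, map_smul, smul_comm, map_sum, Finset.smul_sum]
    congr 1
    refine Finset.sum_congr rfl fun ρ _ => ?_
    rw [map_smul, mp_sg, faceOf, ContinuousMap.id_comp, face_eq_sm, sm_comp, smul_smul]
  rw [l1, l2, Finset.sum_congr rfl fun i _ => key i, Finset.sum_const, Finset.card_univ,
    Fintype.card_fin, ← Nat.cast_smul_eq_nsmul ℝ, smul_smul]
  congr 1
  rw [Nat.factorial_succ (k + 1)]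
  push_cast
  field_simp
  ring

lemma altc_eps (k : ℕ) : eps ℝ _ (k + 1) (altc (k + 1)) = 0 := by
  rw [altc, map_smul, map_sum]
  simp only [map_smul, eps_sg, smul_eq_mul, mul_one]
  have : ∑ π : Equiv.Perm (Fin (k + 2)), ((Equiv.Perm.sign π : ℤ) : ℝ) = 0 := by
    have h := Equiv.sum_comp (Equiv.mulRight (Equiv.swap (0 : Fin (k + 2)) 1))
      (fun π : Equiv.Perm (Fin (k + 2)) => ((Equiv.Perm.sign π : ℤ) : ℝ))
    simp only [Equiv.coe_mulRight, Equiv.Perm.sign_mul, Equiv.Perm.sign_swap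
      (show (0 : Fin (k + 2)) ≠ 1 by simp)] at h
    simp only [mul_neg, mul_one, Units.val_neg, Int.cast_neg, Finset.sum_neg_distrib] at h
    linarith
  rw [this, mul_zero]

section
variable {X Y : Type} [TopologicalSpace X] [TopologicalSpace Y] {n : ℕ}
lemma l1_mp (f : C(X, Y)) (c : SChain ℝ X n) : l1 (mp f c) ≤ l1 c := by
  have := l1_lin (C := 1) (φ := fun σ : SSimplex X n => sg ℝ (f.comp σ))
    (fun σ => (l1_sg _).le) c
  rwa [one_mul] at this

lemma l1_altc (k : ℕ) : l1 (altc k) ≤ 1 := by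
  rw [altc, l1_smul]
  have : l1 (∑ π : Equiv.Perm (Fin (k + 1)), ((Equiv.Perm.sign π : ℤ) : ℝ) • sg ℝ (sm (n := k) π)) ≤
      (k + 1).factorial := by
    refine (l1_sum _ _).trans ?_
    simp only [l1_smul, l1_sg, mul_one]
    have h : ∀ π : Equiv.Perm (Fin (k + 1)), |((Equiv.Perm.sign π : ℤ) : ℝ)| = 1 := fun π => by
      rcases Int.units_eq_one_or (Equiv.Perm.sign π) with h | h <;> simp [h]
    simp [h, Fintype.card_perm]
  have hp : (0:ℝ) < (k + 1).factorial := by positivity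
  rw [abs_of_pos (by positivity)]
  calc _ ≤ ((k + 1).factorial : ℝ)⁻¹ * (k + 1).factorial := by gcongr
    _ = 1 := inv_mul_cancel₀ hp.ne'

lemma l1_alt (c : SChain ℝ X n) : l1 (nat (altc n) c) ≤ l1 c := by
  have := l1_lin (C := 1) (φ := fun σ : SSimplex X n => mp σ (altc n))
    (fun σ => (l1_mp _ _).trans (l1_altc _)) c
  rwa [one_mul] at this
end
end BddCoh

end


noncomputable section
namespace BddCoh
open Topology

variable {X R : Type} [TopologicalSpace X] [TopologicalSpace R] {n k m : ℕ}

lemma face_of_zero {i : Fin (k + 2)} {y : Δ (k + 1)} (h : y.1 i = 0) : ∃ x : Δ k, face i x = y := by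
  refine ⟨⟨fun j => y.1 (i.succAbove j), fun j => y.2.1 _, ?_⟩, ?_⟩
  · have := y.2.2
    rw [Fin.sum_univ_succAbove _ i, h, zero_add] at this
    exact this
  · refine Subtype.ext (funext fun j => ?_)
    refine Fin.succAboveCases i ?_ (fun j => ?_) j
    · rw [face_same, h]
    · rw [face_succAbove]

lemma face_inj (i : Fin (k + 2)) : Function.Injective (face (n := k) i) := by
  intro x y h
  refine Subtype.ext (funext fun j => ?_)
  rw [← face_succAbove i x, h, face_succAbove]

/-- retraction parameter -/
def rmu (k : ℕ) (p : Δ (k + 1) × I) : ℝ :=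
  min (Finset.univ.inf' Finset.univ_nonempty fun i : Fin (k + 2) => p.1.1 i)
    ((p.2 : ℝ) / (2 * (k + 2)))

lemma rmu_cont : Continuous (rmu k) := by
  unfold rmu
  refine Continuous.min ?_ (by fun_prop)
  exact Continuous.finset_inf'_apply _ fun i _ =>
    (continuous_apply i).comp (continuous_subtype_val.comp continuous_fst)

lemma rmu_nonneg (p : Δ (k + 1) × I) : 0 ≤ rmu k p := by
  refine le_min (Finset.le_inf' _ _ fun i _ => p.1.2.1 i) (div_nonneg p.2.2.1 (by positivity))

lemma rmu_le (p : Δ (k + 1) × I) (i) : rmu k p ≤ p.1.1 i :=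
  (min_le_left _ _).trans (Finset.inf'_le _ (Finset.mem_univ i))

lemma rmu_le' (p : Δ (k + 1) × I) : 2 * (k + 2) * rmu k p ≤ p.2 := by
  have := min_le_right (Finset.univ.inf' Finset.univ_nonempty fun i : Fin (k + 2) => p.1.1 i)
    ((p.2 : ℝ) / (2 * (k + 2)))
  rw [le_div_iff₀ (by positivity)] at this
  rw [mul_comm]; exact this

lemma rmu_pos (p : Δ (k + 1) × I) : 0 < 1 - (k + 2) * rmu k p := by
  have h1 := rmu_le' p
  have h2 := p.2.2.2
  nlinarith

/-- The retraction of the prism onto bottom and sides. -/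
def retr (k : ℕ) : C(Δ (k + 1) × I, Δ (k + 1) × I) where
  toFun p := (⟨fun i => (p.1.1 i - rmu k p) / (1 - (k + 2) * rmu k p),
      fun i => div_nonneg (sub_nonneg.2 (rmu_le p i)) (rmu_pos p).le, by
        rw [← Finset.sum_div, Finset.sum_sub_distrib, p.1.2.2]
        simp only [Finset.sum_const, Finset.card_univ, Fintype.card_fin, nsmul_eq_mul]
        push_cast
        rw [show (k : ℝ) + 1 + 1 = k + 2 by ring]
        exact div_self (rmu_pos p).ne'⟩,
    ⟨p.2 - 2 * (k + 2) * rmu k p, sub_nonneg.2 (rmu_le' p), by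
      have := p.2.2.2
      have := rmu_nonneg p
      nlinarith [mul_nonneg (show (0 : ℝ) ≤ 2 * (k + 2) by positivity) this]⟩)
  continuous_toFun := by
    have := rmu_cont (k := k)
    refine Continuous.prodMk (Continuous.subtype_mk ?_ _) (Continuous.subtype_mk ?_ _)
    · refine continuous_pi fun i => Continuous.div ?_ ?_ fun p => (rmu_pos p).ne'
      · exact ((continuous_apply i).comp (continuous_subtype_val.comp continuous_fst)).sub this
      · fun_prop
    · fun_prop

/-- bottom and sides -/
def Zb (k : ℕ) : Set (Δ (k + 1) × I) := {p | p.2 = 0 ∨ ∃ i, p.1.1 i = 0}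

lemma retr_mem (p : Δ (k + 1) × I) : retr k p ∈ Zb k := by
  rcases min_choice (Finset.univ.inf' Finset.univ_nonempty fun i : Fin (k + 2) => p.1.1 i)
    ((p.2 : ℝ) / (2 * (k + 2))) with h | h
  · right
    obtain ⟨i, -, hi⟩ := Finset.exists_mem_eq_inf' Finset.univ_nonempty
      fun i : Fin (k + 2) => p.1.1 i
    refine ⟨i, ?_⟩
    have : rmu k p = p.1.1 i := h.trans hi
    simp [retr, this]
  · left
    have : rmu k p = _ := h
    refine Subtype.ext ?_
    simp only [retr, ContinuousMap.coe_mk, this]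
    have : (2 * ((k : ℝ) + 2)) ≠ 0 := by positivity
    rw [mul_div_cancel₀ _ this]; simp

lemma retr_of_mem {p : Δ (k + 1) × I} (h : p ∈ Zb k) : retr k p = p := by
  have h0 : rmu k p = 0 := by
    refine le_antisymm ?_ (rmu_nonneg p)
    rcases h with h | ⟨i, h⟩
    · have := rmu_le' p
      rw [h] at this
      have h3 : (0 : ℝ) < 2 * (k + 2) := by positivity
      by_contra! h4
      have := mul_pos h3 h4
      simp at *
      linarith
    · exact h ▸ rmu_le p i
  refine Prod.ext (Subtype.ext (funext fun i => ?_)) (Subtype.ext ?_) <;> simp [retr, h0]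

theorem ext_prism (σ : SSimplex R (k + 1)) (h : Fin (k + 2) → C(Δ k × I, R))
    (h0 : ∀ i x, h i (x, 0) = σ (face i x))
    (hc : ∀ i j x y t, face i x = face j y → h i (x, t) = h j (y, t)) :
    ∃ G : C(Δ (k + 1) × I, R), (∀ x, G (x, 0) = σ x) ∧ ∀ i x t, G (face i x, t) = h i (x, t) := by
  let A := Δ (k + 1) ⊕ (Σ _ : Fin (k + 2), Δ k × I)
  let Q : C(A, Zb k) := ⟨Sum.elim (fun x => ⟨(x, 0), Or.inl rfl⟩)
    (fun p => ⟨(face p.1 p.2.1, p.2.2), Or.inr ⟨p.1, face_same _ _⟩⟩), by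
      refine Continuous.sumElim ?_ (continuous_sigma fun i => ?_)
      · exact Continuous.subtype_mk (by fun_prop) _
      · exact Continuous.subtype_mk (by fun_prop) _⟩
  have hQs : Function.Surjective Q := by
    rintro ⟨⟨y, t⟩, h | ⟨i, h⟩⟩
    · exact ⟨Sum.inl y, Subtype.ext (Prod.ext rfl (h.symm))⟩
    · obtain ⟨x, rfl⟩ := face_of_zero h
      exact ⟨Sum.inr ⟨i, x, t⟩, rfl⟩
  have hQ : IsQuotientMap Q := Q.continuous.isClosedMap.isQuotientMap Q.continuous hQs
  let g : C(A, R) := ⟨Sum.elim σ (fun p => h p.1 p.2),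
    σ.continuous.sumElim (continuous_sigma fun i => (h i).continuous)⟩
  have hg : Function.FactorsThrough g Q := by
    rintro (x | ⟨i, x, t⟩) (y | ⟨j, y, s⟩) e
    · have := congrArg (fun z => z.1.1) e
      exact congrArg σ this
    · have e1 : x = face j y := congrArg (fun z => z.1.1) e
      have e2 : 0 = s := congrArg (fun z => z.1.2) e
      subst e1 e2
      exact (h0 j y).symm
    · have e1 : face i x = y := congrArg (fun z => z.1.1) e
      have e2 : t = 0 := congrArg (fun z => z.1.2) e
      subst e1 e2
      exact (h0 i x)
    · have e1 : face i x = face j y := congrArg (fun z => z.1.1) e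
      have e2 : t = s := congrArg (fun z => z.1.2) e
      subst e2
      exact hc _ _ _ _ _ e1
  have key : ∀ a, hQ.lift g hg (Q a) = g a := fun a => by
    exact congrFun (congrArg DFunLike.coe (hQ.lift_comp g hg)) a
  refine ⟨(hQ.lift g hg).comp ⟨fun p => ⟨retr k p, retr_mem p⟩,
    Continuous.subtype_mk (retr k).continuous _⟩, fun x => ?_, fun i x t => ?_⟩
  · have : (⟨retr k (x, 0), retr_mem _⟩ : Zb k) = Q (Sum.inl x) :=
      Subtype.ext (retr_of_mem (Or.inl rfl))
    simp only [ContinuousMap.comp_apply, ContinuousMap.coe_mk, this, key]; rfl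
  · have : (⟨retr k (face i x, t), retr_mem _⟩ : Zb k) = Q (Sum.inr ⟨i, x, t⟩) :=
      Subtype.ext (retr_of_mem (Or.inr ⟨i, face_same _ _⟩))
    simp only [ContinuousMap.comp_apply, ContinuousMap.coe_mk, this, key]; rfl

end BddCoh

end


noncomputable section
namespace BddCoh
open Topology

variable {X R : Type} [TopologicalSpace X] [TopologicalSpace R] {n k m : ℕ}

instance : PreconnectedSpace (Δ k) :=
  Subtype.preconnectedSpace (convex_stdSimplex ℝ (Fin (k + 1))).isPreconnected

/-- vertices -/
abbrev vx (j : Fin (k + 1)) : Δ k := stdSimplex.vertex j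

lemma face_vx (i : Fin (k + 2)) (j : Fin (k + 1)) : face i (vx j) = vx (i.succAbove j) := by
  rw [face_eq_sm]; exact stdSimplex.map_vertex _ _

lemma int_const {f : Δ k → ℝ} (hf : Continuous f) (h : ∀ x, ∃ z : ℤ, f x = z) :
    ∃ z : ℤ, ∀ x, f x = z := by
  choose z hz using h
  have hc : Continuous z := by
    rw [Int.isClosedEmbedding_coe_real.isInducing.continuous_iff]
    exact hf.congr hz
  refine ⟨z (vx 0), fun x => ?_⟩
  rw [hz, PreconnectedSpace.constant inferInstance hc (x := x) (y := vx 0)]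

variable {ι : Type} {D : ℕ}

/-- straight-line homotopy to the straight simplex with rounded, translated vertices -/
def str (s : C(Δ k, Fin D → ℝ)) (g : Fin (k + 1) → Fin D → ℤ) : C(Δ k × I, Fin D → ℝ) where
  toFun p c := (1 - (p.2 : ℝ)) * s p.1 c +
    (p.2 : ℝ) * ∑ j, p.1.1 j * ((⌊s (vx j) c⌋ + g j c : ℤ) : ℝ)
  continuous_toFun := by
    refine continuous_pi fun c => ?_
    have h : ∀ j, Continuous fun p : Δ k × I => p.1.1 j := fun j =>
      (continuous_apply j).comp (continuous_subtype_val.comp continuous_fst)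
    fun_prop

lemma str_apply (s : C(Δ k, Fin D → ℝ)) (g : Fin (k + 1) → Fin D → ℤ) (x t c) :
    str s g (x, t) c = (1 - (t : ℝ)) * s x c +
    (t : ℝ) * ∑ j, x.1 j * ((⌊s (vx j) c⌋ + g j c : ℤ) : ℝ) := rfl

lemma str_zero (s : C(Δ k, Fin D → ℝ)) (g : Fin (k + 1) → Fin D → ℤ) (x) :
    str s g (x, 0) = s x := by
  funext c; simp [str_apply]

lemma str_face (s : C(Δ (k + 1), Fin D → ℝ)) (g : Fin (k + 2) → Fin D → ℤ) (i x t) :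
    str (s.comp (face i)) (g ∘ i.succAbove) (x, t) = str s g (face i x, t) := by
  funext c
  simp only [str_apply, ContinuousMap.comp_apply, Fin.sum_univ_succAbove _ i, face_same,
    face_succAbove, face_vx, zero_mul, zero_add, Function.comp_apply]

lemma str_shift {s s' : C(Δ k, Fin D → ℝ)} (g : Fin (k + 1) → Fin D → ℤ) {c : Fin D}
    (h : ∀ x, ∃ z : ℤ, s x c = s' x c + z) (p) : ∃ z : ℤ, str s g p c = str s' g p c + z := by
  obtain ⟨z, hz⟩ := int_const (f := fun x => s x c - s' x c) (by fun_prop) (fun x => by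
    obtain ⟨z, hz⟩ := h x; exact ⟨z, by rw [hz]; ring⟩)
  have hz' : ∀ x, s x c = s' x c + z := fun x => by linarith [hz x]
  obtain ⟨x, t⟩ := p
  refine ⟨z, ?_⟩
  simp only [str_apply, hz', Int.floor_add_intCast]
  have : ∑ j, x.1 j * ((⌊s' (vx j) c⌋ + z + g j c : ℤ) : ℝ) =
      ∑ j, x.1 j * ((⌊s' (vx j) c⌋ + g j c : ℤ) : ℝ) + z := by
    rw [← one_mul (z : ℝ), ← x.2.2, Finset.sum_mul, ← Finset.sum_add_distrib]
    refine Finset.sum_congr rfl fun j _ => ?_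
    push_cast; ring
  rw [this]; ring

/-- A family of torus coverings. -/
structure PS (R : Type) [TopologicalSpace R] (ι : Type) (D : ℕ) where
  p : ι → C(Fin D → ℝ, R)
  act : ι → Fin D → Prop
  spec : ∀ i i' a b, p i a = p i' b ↔ i = i' ∧ ∀ c, act i c → ∃ z : ℤ, a c = b c + z

variable (P : PS R ι D)

/-- families of homotopies -/
abbrev Fam (R : Type) [TopologicalSpace R] (D k : ℕ) :=
  SSimplex R k → (Fin (k + 1) → Fin D → ℤ) → C(Δ k × I, R)

lemma PS.str_eq {i i' : ι} {s s' : C(Δ k, Fin D → ℝ)} (h : (P.p i).comp s = (P.p i').comp s')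
    (g) (q) : P.p i (str s g q) = P.p i' (str s' g q) := by
  have h' : ∀ x, P.p i (s x) = P.p i' (s' x) := fun x => congrFun (congrArg DFunLike.coe h) x
  simp only [P.spec] at h' ⊢
  exact ⟨(h' (vx 0)).1, fun c hc => str_shift g (fun x => (h' x).2 c hc) q⟩

/-- The straight part of a good family. -/
def PS.Good (H : Fam R D k) : Prop := (∀ σ g x, H σ g (x, 0) = σ x) ∧
  ∀ i s g q, H ((P.p i).comp s) g q = P.p i (str s g q)

/-- Face consistency. -/
def Cons (H : Fam R D k) : Prop := ∀ (σ : SSimplex R (k + 1)) (g : Fin (k + 2) → Fin D → ℤ) i j x y t,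
  face i x = face j y → H (faceOf σ i) (g ∘ i.succAbove) (x, t) =
    H (faceOf σ j) (g ∘ j.succAbove) (y, t)

/-- Compatibility of consecutive families. -/
def Comp (H : Fam R D k) (H' : Fam R D (k + 1)) : Prop := ∀ σ g i x t,
  H' σ g (face i x, t) = H (faceOf σ i) (g ∘ i.succAbove) (x, t)

lemma cons_of_comp {H : Fam R D k} {H' : Fam R D (k + 1)} (h : Comp H H') : Cons H' := by
  intro σ g i j x y t e
  by_cases hij : j = i
  · subst hij; rw [face_inj _ e]
  · obtain ⟨l, rfl⟩ := Fin.exists_succAbove_eq hij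
    have : x.1 l = 0 := by rw [← face_succAbove i, e, face_same]
    obtain ⟨u, rfl⟩ := face_of_zero this
    have e2 := congrFun (congrArg DFunLike.coe (face_comp_face (n := k) i l)) u
    simp only [ContinuousMap.comp_apply] at e2
    rw [← e2] at e
    have := face_inj _ e
    subst this
    rw [h, h, faceOf_faceOf]
    congr 2
    funext a
    simp [Fin.succAbove_succAbove_succAbove_predAbove]

open Classical in
/-- combine -/
def PS.mk' (F : Fam R D k) : Fam R D k := fun σ g =>
  if h : ∃ q : ι × C(Δ k, Fin D → ℝ), σ = (P.p q.1).comp q.2 then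
    (P.p h.choose.1).comp (str h.choose.2 g) else F σ g

lemma PS.mk'_good {F : Fam R D k} (hF : ∀ σ g x, F σ g (x, 0) = σ x) : P.Good (P.mk' F) := by
  refine ⟨fun σ g x => ?_, fun i s g q => ?_⟩
  · unfold PS.mk'
    split_ifs with h
    · rw [ContinuousMap.comp_apply, str_zero]
      exact (congrFun (congrArg DFunLike.coe h.choose_spec) x).symm
    · exact hF _ _ _
  · unfold PS.mk'
    have h : ∃ q : ι × C(Δ k, Fin D → ℝ), (P.p i).comp s = (P.p q.1).comp q.2 := ⟨(i, s), rfl⟩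
    rw [dif_pos h]
    exact (P.str_eq h.choose_spec g q).symm

lemma PS.base : ∃ H : Fam R D 0, P.Good H ∧ Cons H := by
  refine ⟨P.mk' fun σ g => ⟨fun q => σ q.1, by fun_prop⟩, P.mk'_good fun _ _ _ => rfl, ?_⟩
  intro σ g i j x y t e
  by_cases hij : j = i
  · subst hij; rw [face_inj _ e]
  · exfalso
    obtain ⟨l, rfl⟩ := Fin.exists_succAbove_eq hij
    have h1 : x.1 l = 0 := by rw [← face_succAbove i, e, face_same]
    have h2 := x.2.2
    rw [Fin.sum_univ_one, Subsingleton.elim 0 l, h1] at h2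
    exact zero_ne_one h2

lemma PS.step {H : Fam R D k} (h : P.Good H) (hc : Cons H) :
    ∃ H' : Fam R D (k + 1), P.Good H' ∧ Comp H H' := by
  choose F hF0 hF using fun (σ : SSimplex R (k + 1)) (g : Fin (k + 2) → Fin D → ℤ) =>
    ext_prism σ (fun i => H (faceOf σ i) (g ∘ i.succAbove)) (fun i x => h.1 _ _ _)
      (fun i j x y t e => hc σ g i j x y t e)
  refine ⟨P.mk' F, P.mk'_good hF0, fun σ g i x t => ?_⟩
  by_cases e : ∃ q : ι × C(Δ (k + 1), Fin D → ℝ), σ = (P.p q.1).comp q.2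
  · obtain ⟨⟨a, s⟩, rfl⟩ := e
    rw [(P.mk'_good hF0).2]
    change _ = H ((P.p a).comp (s.comp (face i))) _ _
    rw [h.2, str_face]
  · unfold PS.mk'
    rw [dif_neg e]
    exact hF _ _ _ _ _

theorem PS.seq : ∃ H : ∀ k, Fam R D k, ∀ k, P.Good (H k) ∧ Comp (H k) (H (k + 1)) := by
  choose f hf1 hf2 using fun (k : ℕ) (H : {H : Fam R D k // P.Good H ∧ Cons H}) =>
    P.step H.2.1 H.2.2
  obtain ⟨H0, h0⟩ := P.base
  let G : ∀ k, {H : Fam R D k // P.Good H ∧ Cons H} := fun k =>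
    Nat.rec ⟨H0, h0⟩ (fun k H => ⟨f k H, hf1 k H, cons_of_comp (hf2 k H)⟩) k
  exact ⟨fun k => (G k).1, fun k => ⟨(G k).2.1, hf2 k (G k)⟩⟩

end BddCoh

end


noncomputable section
namespace BddCoh
open Topology Filter

variable {X R : Type} [TopologicalSpace X] [TopologicalSpace R] {n k m : ℕ} {ι : Type} {D : ℕ}

/-- labels -/
def lab {N : ℕ} (g : Fin k → Fin D → Fin N) : Fin k → Fin D → ℤ := fun j c => ((g j c : ℕ) : ℤ)

/-- average over labels -/
def av {W : Type} [AddCommGroup W] [Module ℝ W] (N : ℕ) (F : (Fin k → Fin D → Fin N) → W) : W :=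
  (((N : ℝ) ^ D) ^ k)⁻¹ • ∑ g, F g

lemma av_forget {W : Type} [AddCommGroup W] [Module ℝ W] {N : ℕ} (hN : N ≠ 0)
    (F : (Fin k → Fin D → Fin N) → W) (i : Fin (k + 1)) :
    av N (fun g : Fin (k + 1) → Fin D → Fin N => F (g ∘ i.succAbove)) = av N F := by
  unfold av
  rw [← Equiv.sum_comp (Fin.insertNthEquiv (fun _ => Fin D → Fin N) i), Fintype.sum_prod_type]
  have : ∀ (a : Fin D → Fin N) (g : Fin k → Fin D → Fin N),
      (Fin.insertNthEquiv (fun _ => Fin D → Fin N) i (a, g)) ∘ i.succAbove = g := fun a g => by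
    funext j; simp [Fin.insertNthEquiv]
  simp only [this, Finset.sum_const, Finset.card_univ, Fintype.card_fun, Fintype.card_fin]
  rw [← Nat.cast_smul_eq_nsmul ℝ, smul_smul]
  congr 1
  have : (N : ℝ) ≠ 0 := by exact_mod_cast hN
  push_cast
  field_simp
  ring

lemma av_const {W : Type} [AddCommGroup W] [Module ℝ W] {N : ℕ} (hN : N ≠ 0) (w : W) :
    av N (fun _ : Fin k → Fin D → Fin N => w) = w := by
  unfold av
  simp only [Finset.sum_const, Finset.card_univ, Fintype.card_fun, Fintype.card_fin]
  rw [← Nat.cast_smul_eq_nsmul ℝ, smul_smul]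
  have : (N : ℝ) ≠ 0 := by exact_mod_cast hN
  push_cast
  rw [inv_mul_cancel₀ (by positivity), one_smul]

lemma av_sub {W : Type} [AddCommGroup W] [Module ℝ W] {N : ℕ} (F G : (Fin k → Fin D → Fin N) → W) :
    av N (fun g => F g - G g) = av N F - av N G := by
  simp [av, smul_sub]

lemma av_map {W V : Type} [AddCommGroup W] [Module ℝ W] [AddCommGroup V] [Module ℝ V] {N : ℕ}
    (f : W →ₗ[ℝ] V) (F : (Fin k → Fin D → Fin N) → W) : f (av N F) = av N (fun g => f (F g)) := by
  simp [av]

lemma av_lsum {W α : Type} [AddCommGroup W] [Module ℝ W] {N : ℕ} (s : Finset α) (r : α → ℝ)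
    (F : α → (Fin k → Fin D → Fin N) → W) :
    av N (fun g => ∑ i ∈ s, r i • F i g) = ∑ i ∈ s, r i • av N (F i) := by
  simp only [av]
  rw [Finset.sum_comm, Finset.smul_sum]
  refine Finset.sum_congr rfl fun i _ => ?_
  rw [← Finset.smul_sum, smul_comm]

lemma l1_av {N : ℕ} (hN : N ≠ 0) {C : ℝ} (F : (Fin k → Fin D → Fin N) → SChain ℝ X n)
    (h : ∀ g, l1 (F g) ≤ C) : l1 (av N F) ≤ C := by
  have h0 : (N : ℝ) ≠ 0 := by exact_mod_cast hN
  have h1 : l1 (∑ g, F g) ≤ ((N : ℝ) ^ D) ^ k * C := by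
    refine (l1_sum _ _).trans ((Finset.sum_le_sum fun g _ => h g).trans ?_)
    simp
  unfold av
  rw [l1_smul, abs_of_nonneg (by positivity)]
  have : (0 : ℝ) < ((N : ℝ) ^ D) ^ k := by positivity
  rw [inv_mul_le_iff₀ this]; exact h1

variable (H : ∀ k, Fam R D k)

/-- averaged straightening -/
def Avg (N k : ℕ) : SChain ℝ R k →ₗ[ℝ] SChain ℝ R k :=
  lin fun σ => av N fun g => sg ℝ ((H k σ (lab g)).comp (endP k 1))

/-- averaged homotopy -/
def AvD (N k : ℕ) : SChain ℝ R k →ₗ[ℝ] SChain ℝ R (k + 1) :=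
  lin fun σ => av N fun g => mp (H k σ (lab g)) (prism ℝ k)

lemma avg_spec {N : ℕ} (hN : N ≠ 0) (h0 : ∀ k σ g x, H k σ g (x, 0) = σ x)
    (h1 : ∀ k, Comp (H k) (H (k + 1))) (c : SChain ℝ R (k + 1)) :
    Avg H N (k + 1) c - c = bdry ℝ R (k + 1) (AvD H N (k + 1) c) + AvD H N k (bdry ℝ R k c) := by
  refine chain_hom_congr (f := Avg H N (k + 1) - LinearMap.id)
    (g := (bdry ℝ R (k + 1)).comp (AvD H N (k + 1)) + (AvD H N k).comp (bdry ℝ R k)) (fun σ => ?_) c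
  have e0 : ∀ g, (H (k + 1) σ g).comp (endP (k + 1) 0) = σ := fun g => by
    ext1 x; exact h0 _ _ _ _
  have e2 : ∀ g : Fin (k + 2) → Fin D → Fin N, ∀ i, (H (k + 1) σ (lab g)).comp (faceP i) =
      H k (faceOf σ i) (lab (g ∘ i.succAbove)) := fun g i => by
    ext1 ⟨x, t⟩; exact h1 k σ (lab g) i x t
  simp only [LinearMap.sub_apply, LinearMap.add_apply, LinearMap.comp_apply, LinearMap.id_apply,
    Avg, AvD, lin_sg, bdry_sg, map_sum, map_smul, av_map, mp_bdry, bdry_prism, map_sub, mp_comp,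
    mp_sg, e0, e2, av_sub, av_const hN]
  rw [av_lsum]
  have : ∀ i : Fin (k + 2), av N (fun g : Fin (k + 2) → Fin D → Fin N =>
      mp (H k (faceOf σ i) (lab (g ∘ i.succAbove))) (prism ℝ k)) =
      av N (fun g : Fin (k + 1) → Fin D → Fin N => mp (H k (faceOf σ i) (lab g)) (prism ℝ k)) :=
    fun i => av_forget hN (fun g => mp (H k (faceOf σ i) (lab g)) (prism ℝ k)) i
  simp only [this]
  abel

lemma l1_avg {N : ℕ} (hN : N ≠ 0) (c : SChain ℝ R k) : l1 (Avg H N k c) ≤ l1 c := by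
  have := l1_lin (C := 1) (φ := fun σ => av N fun g => sg ℝ ((H k σ (lab g)).comp (endP k 1)))
    (fun σ => l1_av hN _ fun g => (l1_sg _).le) c
  rw [one_mul] at this; exact this

/-! Folner estimate -/

lemma fol_aux {G T : Type} [Fintype G] [DecidableEq T] {f : G → T} (hf : Function.Injective f)
    (S : T → SChain ℝ X n) (hS : ∀ t, l1 (S t) ≤ 1) {Q : Finset T}
    (hQ : Q ⊆ Finset.univ.image f) :
    l1 (∑ g, S (f g) - ∑ t ∈ Q, S t) ≤ Fintype.card G - Q.card := by
  rw [← Finset.sum_image (s := Finset.univ) (g := f) (f := S) (fun a _ b _ h => hf h),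
    ← Finset.sum_sdiff hQ, add_sub_cancel_right]
  refine (l1_sum _ _).trans ((Finset.sum_le_sum fun g _ => hS g).trans ?_)
  rw [Finset.sum_const, nsmul_eq_mul, mul_one, Finset.card_sdiff_of_subset hQ,
    Nat.cast_sub (Finset.card_le_card hQ), Finset.card_image_of_injective _ hf, Finset.card_univ]

lemma fol_sub {N β : ℕ} (b : Fin k → Fin D → ℤ) (hb : ∀ j c, |b j c| ≤ β) :
    (Fintype.piFinset fun _ : Fin k => Fintype.piFinset fun _ : Fin D =>
      Finset.Ico (β : ℤ) ((N : ℤ) - β)) ⊆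
      Finset.univ.image fun g : Fin k → Fin D → Fin N => b + lab g := by
  intro h hh
  simp only [Fintype.mem_piFinset, Finset.mem_Ico] at hh
  simp only [Finset.mem_image, Finset.mem_univ, true_and]
  have hB : ∀ j c, 0 ≤ h j c - b j c ∧ h j c - b j c < N := fun j c => by
    have := abs_le.1 (hb j c); have := hh j c; constructor <;> linarith
  refine ⟨fun j c => ⟨(h j c - b j c).toNat, by have := hB j c; omega⟩, ?_⟩
  funext j c
  simp only [lab, Pi.add_apply, Int.toNat_of_nonneg (hB j c).1]
  ring

lemma lab_inj {N : ℕ} : Function.Injective (lab : (Fin k → Fin D → Fin N) → _) := by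
  intro g g' h
  funext j c
  have := congrFun (congrFun h j) c
  simp only [lab] at this
  exact Fin.ext (by exact_mod_cast this)

lemma fol (S : (Fin k → Fin D → ℤ) → SChain ℝ X n) (hS : ∀ t, l1 (S t) ≤ 1)
    (b : Fin k → Fin D → ℤ) :
    Tendsto (fun N : ℕ => l1 (av N (fun g : Fin k → Fin D → Fin N => S (b + lab g)) -
      av N (fun g : Fin k → Fin D → Fin N => S (lab g)))) atTop (𝓝 0) := by
  classical
  obtain ⟨β, hβ⟩ : ∃ β : ℕ, ∀ j c, |b j c| ≤ β := by
    refine ⟨∑ j, ∑ c, (b j c).natAbs, fun j c => ?_⟩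
    rw [Int.abs_eq_natAbs]
    exact_mod_cast (Finset.single_le_sum (f := fun c => (b j c).natAbs) (fun _ _ => Nat.zero_le _)
      (Finset.mem_univ c)).trans (Finset.single_le_sum (f := fun j => ∑ c, (b j c).natAbs)
      (fun _ _ => Nat.zero_le _) (Finset.mem_univ j))
  have hlim : Tendsto (fun N : ℕ => 2 * (1 - ((1 - 2 * (β : ℝ) / N) ^ D) ^ k)) atTop (𝓝 0) := by
    have h1 := tendsto_const_div_atTop_nhds_zero_nat (2 * (β : ℝ))
    have := (((h1.const_sub 1).pow D).pow k).const_sub 1 |>.const_mul 2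
    simpa using this
  refine squeeze_zero' (Eventually.of_forall fun N => l1_nonneg _) ?_ hlim
  filter_upwards [eventually_ge_atTop (2 * β + 1)] with N hN
  have hN0 : (0 : ℝ) < N := by exact_mod_cast (by omega : 0 < N)
  set Q := (Fintype.piFinset fun _ : Fin k => Fintype.piFinset fun _ : Fin D =>
      Finset.Ico (β : ℤ) ((N : ℤ) - β)) with hQ
  have hcard : (Q.card : ℝ) = (((N : ℝ) - 2 * β) ^ D) ^ k := by
    have : ((N : ℤ) - β - β).toNat = N - 2 * β := by omega
    rw [hQ]
    simp only [Fintype.card_piFinset, Int.card_Ico, Finset.prod_const, Finset.card_univ,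
      Fintype.card_fin, this]
    push_cast [Nat.cast_sub (by omega : 2 * β ≤ N)]
    ring
  have i1 : Function.Injective fun g : Fin k → Fin D → Fin N => b + lab g := fun g g' h =>
    lab_inj (add_left_cancel h)
  have q1 := fol_aux i1 S hS (fol_sub b hβ)
  have q2 := fol_aux lab_inj S hS (Q := Q) (by
    have := fol_sub (k := k) (D := D) (N := N) (β := β) 0 (by simp)
    simpa only [zero_add] using this)
  rw [← hQ] at q1
  have q3 := l1_add (∑ g : Fin k → Fin D → Fin N, S (b + lab g) - ∑ t ∈ Q, S t)
    ((-1 : ℝ) • (∑ g : Fin k → Fin D → Fin N, S (lab g) - ∑ t ∈ Q, S t))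
  rw [l1_smul, abs_neg, abs_one, one_mul] at q3
  simp only [Fintype.card_fun, Fintype.card_fin, hcard] at q1 q2
  push_cast at q1 q2
  unfold av
  rw [← smul_sub, l1_smul, abs_of_nonneg (by positivity), inv_mul_le_iff₀ (by positivity)]
  rw [show ∑ g : Fin k → Fin D → Fin N, S (b + lab g) - ∑ g : Fin k → Fin D → Fin N, S (lab g) =
    ∑ g : Fin k → Fin D → Fin N, S (b + lab g) - ∑ t ∈ Q, S t +
    (-1 : ℝ) • (∑ g : Fin k → Fin D → Fin N, S (lab g) - ∑ t ∈ Q, S t) by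
      rw [neg_one_smul]; abel]
  refine q3.trans ((add_le_add q1 q2).trans (le_of_eq ?_))
  have : (N : ℝ) - 2 * β = N * (1 - 2 * β / N) := by field_simp
  rw [this, mul_pow, mul_pow]; ring

end BddCoh

end


noncomputable section
namespace BddCoh
open Topology Filter

variable {M R : Type} [TopologicalSpace M] [TopologicalSpace R] {k : ℕ} {ι : Type} {D : ℕ}

/-- straight simplices -/
def PS.S (P : PS R ι D) (i : ι) (h : Fin (k + 1) → Fin D → ℤ) : SChain ℝ R k :=
  sg ℝ ((P.p i).comp ⟨fun x c => ∑ j, x.1 j * ((h j c : ℤ) : ℝ), by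
    refine continuous_pi fun c => continuous_finsetSum _ fun j _ => Continuous.mul ?_ continuous_const
    exact (continuous_apply j).comp continuous_subtype_val⟩)

/-- averaged straight simplex -/
def PS.E (P : PS R ι D) (i : ι) (k N : ℕ) : SChain ℝ R k :=
  av N (fun g : Fin (k + 1) → Fin D → Fin N => P.S i (lab g))

variable {P : PS R ι D} {H : ∀ k, Fam R D k}

lemma PS.tend (h : ∀ k, P.Good (H k)) (i : ι) (s : C(Δ k, Fin D → ℝ)) :
    Tendsto (fun N => l1 (Avg H N k (sg ℝ ((P.p i).comp s)) - P.E i k N)) atTop (𝓝 0) := by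
  refine (fol (P.S i) (fun t => (l1_sg _).le) (fun j c => ⌊s (vx j) c⌋)).congr fun N => ?_
  rw [Avg, lin_sg]
  congr 4
  funext g
  unfold PS.S
  congr 1
  ext1 x
  change _ = H k ((P.p i).comp s) (lab g) (x, 1)
  rw [(h k).2, ContinuousMap.comp_apply]
  congr 1
  funext c
  simp [str_apply]

lemma PS.tend' (h : ∀ k, P.Good (H k)) (i : ι) (s : C(Δ k, Fin D → ℝ)) (a : SChain ℝ (Δ k) k) :
    Tendsto (fun N => l1 (Avg H N k (mp ((P.p i).comp s) a) - eps ℝ _ k a • P.E i k N))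
      atTop (𝓝 0) := by
  induction a using chain_ind with
  | h0 => simp [l1_zero]
  | hadd a b ha hb =>
    refine squeeze_zero (fun N => l1_nonneg _) (fun N => ?_) (by simpa using ha.add hb)
    refine le_trans (le_of_eq ?_) (l1_add _ _)
    rw [map_add, map_add, map_add, add_smul]; congr 1; abel
  | hsm r σ =>
    have := (PS.tend h i (s.comp σ)).const_mul |r|
    rw [mul_zero] at this
    refine this.congr fun N => ?_
    rw [← l1_smul, map_smul, map_smul, map_smul, mp_sg, eps_sg, smul_sub, smul_eq_mul, mul_one]
    rfl

lemma PS.tend_alt (h : ∀ k, P.Good (H k)) {L : Set R}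
    (hL : ∀ k (σ : SSimplex R k), Set.range σ ⊆ L → ∃ i s, σ = (P.p i).comp s)
    {w : SChain ℝ R (k + 1)} (hw : w ∈ chainsIn ℝ R L (k + 1)) :
    Tendsto (fun N => l1 (Avg H N (k + 1) (nat (altc (k + 1)) w))) atTop (𝓝 0) := by
  rw [chainsIn_eq_span] at hw
  induction hw using Submodule.span_induction with
  | mem x hx =>
    obtain ⟨σ, hσ, rfl⟩ := hx
    obtain ⟨i, s, rfl⟩ := hL _ σ hσ
    have := PS.tend' h i s (altc (k + 1))
    simp only [altc_eps, zero_smul, sub_zero] at this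
    simpa only [nat_sg] using this
  | zero => simp [l1_zero]
  | add a b _ _ ha hb =>
    refine squeeze_zero (fun N => l1_nonneg _) (fun N => ?_) (by simpa using ha.add hb)
    rw [map_add, map_add]; exact l1_add _ _
  | smul r a _ ha =>
    have := ha.const_mul |r|
    rw [mul_zero] at this
    refine this.congr fun N => ?_
    rw [← l1_smul, map_smul, map_smul]

theorem PS.main (P : PS R ι D) {L : Set R}
    (hL : ∀ k (σ : SSimplex R k), Set.range σ ⊆ L → ∃ i s, σ = (P.p i).comp s)
    {v w : SChain ℝ R (k + 1)} (hw : w ∈ chainsIn ℝ R L (k + 1)) (hc : bdry ℝ R k (v - w) = 0)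
    {δ : ℝ} (hδ : 0 < δ) : ∃ a, l1 (v - w + bdry ℝ R (k + 1) a) ≤ l1 v + δ := by
  obtain ⟨H, hH⟩ := P.seq
  have ht := P.tend_alt (fun k => (hH k).1) hL hw
  obtain ⟨N, hN, hN0⟩ := ((ht.eventually_lt_const hδ).and (eventually_ne_atTop 0)).exists
  have e1 := amT_spec altc_zero altc_bdry k (v - w)
  rw [hc, map_zero, add_zero, sub_eq_iff_eq_add] at e1
  have e2 := avg_spec H hN0 (fun k => (hH k).1.1) (fun k => (hH k).2) (nat (altc (k + 1)) (v - w))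
  have e3 : bdry ℝ R k (nat (altc (k + 1)) (v - w)) = 0 := by
    rw [e1, map_add, bdry_bdry, hc, add_zero]
  rw [e3, map_zero, add_zero, sub_eq_iff_eq_add] at e2
  rw [add_comm (bdry ℝ R (k + 1) (nat (amT altc (k + 1)) (v - w)))] at e1
  refine ⟨nat (amT altc (k + 1)) (v - w) + AvD H N (k + 1) (nat (altc (k + 1)) (v - w)), ?_⟩
  rw [map_add, ← add_assoc, ← e1, add_comm (nat (altc (k + 1)) (v - w)), ← e2, map_sub, map_sub]
  rw [sub_eq_add_neg, ← neg_one_smul ℝ]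
  refine (l1_add _ _).trans (add_le_add ((l1_avg H hN0 _).trans (l1_alt _)) ?_)
  rw [l1_smul, abs_neg, abs_one, one_mul]
  exact hN.le

/-! Dehn structures -/

variable {d m : ℕ} {B : Set M}

/-- the coverings of the collapsed tori -/
def DS.ps (S : DS d m M R B) : PS R (Fin m) (d + 1) where
  p i := ⟨fun a => S.j ⟨i, torusProj (S.e i) (fun c => a (Fin.castLE (S.he i) c))⟩, by
    refine S.j.continuous.comp (continuous_sigmaMk.comp ((tp_cont _).comp ?_))
    fun_prop⟩
  act i c := c.1 < S.e i
  spec i i' a b := by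
    simp only [ContinuousMap.coe_mk, S.inj.eq_iff]
    constructor
    · intro h
      obtain rfl : i = i' := congrArg Sigma.fst h
      rw [sigma_mk_injective.eq_iff, tp_eq] at h
      obtain ⟨z, hz⟩ := h
      refine ⟨rfl, fun c hc => ⟨z ⟨c, hc⟩, ?_⟩⟩
      have := congrFun hz ⟨c, hc⟩
      simp only [Pi.sub_apply, cst] at this
      rw [← this]
      simp
    · rintro ⟨rfl, h⟩
      choose z hz using h
      rw [sigma_mk_injective.eq_iff, tp_eq]
      refine ⟨fun c => z (Fin.castLE (S.he i) c) c.2, funext fun c => ?_⟩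
      simp only [Pi.sub_apply, cst]
      rw [hz (Fin.castLE (S.he i) c) c.2]; ring

lemma DS.ps_lift (S : DS d m M R B) (k : ℕ) (σ : SSimplex R k) (hσ : Set.range σ ⊆ Set.range S.j) :
    ∃ i s, σ = (S.ps.p i).comp s := by
  choose f hf using fun x => hσ ⟨x, rfl⟩
  have hfc : Continuous f := by
    rw [S.emb.isInducing.continuous_iff]
    exact σ.continuous.congr fun x => (hf x).symm
  have hne : Set.Nonempty (Δ k) := ⟨_, (vx 0).2⟩
  have := (convex_stdSimplex ℝ (Fin (k + 1))).contractibleSpace hne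
  have := (convex_stdSimplex ℝ (Fin (k + 1))).locallyPathConnectedSpace
  obtain ⟨i, τ, hτ⟩ := ContinuousMap.exists_lift_sigma (⟨f, hfc⟩ : C(Δ k, Σ i, Tor (S.e i)))
  have hl : ∀ c : Fin (S.e i), ∃ F : C(Δ k, ℝ), ∀ x, ((F x : ℝ) : AddCircle (1 : ℝ)) = τ x c := by
    intro c
    obtain ⟨r, hr⟩ := QuotientAddGroup.mk_surjective (τ (vx 0) c)
    obtain ⟨F, ⟨-, hF⟩, -⟩ := (AddCircle.isCoveringMap_coe (1 : ℝ)).existsUnique_continuousMap_lifts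
      (⟨fun x => τ x c, by fun_prop⟩ : C(Δ k, AddCircle (1 : ℝ))) (vx 0) r hr
    exact ⟨F, fun x => congrFun hF x⟩
  choose F hF using hl
  refine ⟨i, ⟨fun x c => if h : c.1 < S.e i then F ⟨c, h⟩ x else 0, ?_⟩, ?_⟩
  · refine continuous_pi fun c => ?_
    split_ifs <;> fun_prop
  · ext1 x
    have h1 : f x = ⟨i, τ x⟩ := congrFun (congrArg DFunLike.coe hτ) x
    rw [← hf, h1]
    simp only [DS.ps, ContinuousMap.comp_apply, ContinuousMap.coe_mk]
    congr 2
    funext c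
    rw [tp_apply]
    simp [hF]

theorem DS.nm (S : DS d m M R B) (c : SChain ℝ M (d + 3)) (w : SChain ℝ R (d + 3))
    (hw : w ∈ chainsIn ℝ R (Set.range S.j) (d + 3)) (hc : bdry ℝ R (d + 2) (mp S.q c - w) = 0)
    (δ : ℝ) (hδ : 0 < δ) : ∃ a, l1 (mp S.q c - w + bdry ℝ R (d + 3) a) ≤ l1 c + δ := by
  obtain ⟨a, ha⟩ := S.ps.main S.ps_lift hw hc hδ
  exact ⟨a, ha.trans (add_le_add (l1_mp _ _) le_rfl)⟩

end BddCoh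

end


noncomputable section
namespace BddCoh
/-- **Simplicial volume of generalized Dehn fillings (generalizing Fujiwara–Manning).**
Let `M` be a compact connected oriented `n`-manifold, `n = d + 3 ≥ 3`, whose boundary is a
disjoint union of `(n-1)`-tori, and let `R = M(T_1, …, T_m)` be a generalized Dehn filling
of `M`. Then `R` (which is an oriented pseudomanifold) admits a fundamental class, whose
regular points contain the image of the interior of `M`, and `‖R‖ ≤ ‖M, ∂M‖`. -/
theorem simplicial_volume_dehn_filling
    (d m : ℕ) (D : DehnData d m)
    (hcomp : CompactSpace D.M) (hconn : ConnectedSpace D.M)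
    (hmfd : IsTopMfdWithBdry (d + 3) D.M D.B)
    (μ : relHomology ℝ D.M D.B (d + 2)) (hμ : IsFundClass D.M D.B (d + 2) μ) :
    (∃ ρ : relHomology ℝ D.Rfill ∅ (d + 2),
      IsFundClassOn D.Rfill ∅ (D.q '' D.Bᶜ) (d + 2) ρ) ∧
    (∀ ρ : relHomology ℝ D.Rfill ∅ (d + 2),
      IsFundClassOn D.Rfill ∅ (D.q '' D.Bᶜ) (d + 2) ρ → l1HomNorm ρ ≤ l1HomNorm μ) := by
  have : T2Space D.M := hmfd.1
  obtain ⟨S, hS⟩ := dehn_struct D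
  rw [← hS]
  exact S.reduce hmfd (fun c w _ hw hc δ hδ => S.nm c w hw hc δ hδ) μ hμ

end BddCoh

end
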